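/- arXiv:1203.5135 — 2 statements merged into one kernel-verified Lean document; each statement's English description precedes it below -/
import Mathlib

section
/- Let ε > 0, r > 2, fix linearization data as in the context, and let i ∈ {1,2,3,4}. Let 𝐏 be a finite collection of quartiles, E ⊂ [0,∞) a measurable set of finite measure, and f a measurable function with |f| ≤ 1_E. Then for each α > 0 satisfying size_i(𝐏, f)² ≤ α, there exists a collection 𝐓 of trees, each consisting of quartiles of 𝐏, such that size_i(𝐏 \ ⋃_{T ∈ 𝐓} T, f)² ≤ α/4 and ∑_{T ∈ 𝐓} |I_T| ≤ C α^{−(1+ε)} |E|, where C depends only on r and ε. -/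
/-!
Write `c_P = ⟨f, φ̃_{P_i}⟩`. For each `j ≠ i` and each parity of `log₂ |I_P|` trees are selected
greedily: as long as some `j`-overlapping tree has `∑ c_P² > (α/8) |I_T|`, one with extremal top
frequency is selected and all quartiles lying below its top are removed. Extremality makes the tiles
`P_i` of the selected trees pairwise disjoint, and what survives both parities has squared size at
most `2 · α/8`.

The total length of the tops is controlled by an estimate for forests with at most `N` tops over
each point: `∑ c_P² ≤ C_r (1 + log N)² |E ∩ A|` if all tops lie in `A`. Hence
`∑ |I_T| ≲ α⁻¹ N^η |E ∩ A|` for subfamilies of overlap at most `N`, where `η = ε/(1+ε)`, and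
truncating the counting function of the tops at `N ~ α^{-(1+ε)}` removes the overlap assumption.

For the forest estimate, duality gives `∑ c_P² = ∫ f ∑ c_P φ̃_{P_i}` with `|f| ≤ 1_E`, and it
suffices to bound `|∑ c_P a_P(x) φ_{P_3}(x)|` by a constant of size `(1 + log N)²` plus a function
of integral at most `½ ∑ c_P²`. The sum is `∑ a_m` times differences of partial sums over scales.
The squared square function `∑ c_P² |I_P|⁻¹ 1_{I_P}`, accumulated from coarse to fine scales, acts
as a clock, and the partial sums are chained over dyadic clock intervals of length `2^l`, each of
which contributes the wave packet sum `F_{l,u}` of a cell of quartiles. Because `(a_m)` lies in the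
unit ball of `ℓ^(r/(r-1))`, generation `l` is handled by Young's inequality and the following facts.

* Middle generations, about `3 log₂ N + 21` many, use `∑_u ∫ F_{l,u}² ≤ ∑ c_P²` (orthogonality).
* Fine generations use an exponent `q ∈ (2, 4]` with `q ≤ r` and the fourth moment bound
  `∑_u ∫ F_{l,u}⁴ ≤ 6 N³ 2^l ∑ c_P²`, which decays as `l → -∞`. It comes from
  `∫ F⁴ ≤ 6 ∫ F² S²` for a single tree with square function `S`.
* Coarse generations only matter where the squared square function is at least `2^(l-1)`.
-/

open MeasureTheory Set
open scoped ENNReal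

noncomputable section

/-- A dyadic interval `[n 2^k, (n+1) 2^k) ⊆ [0,∞)`. -/
structure DyadicInterval where
  n : ℕ
  k : ℤ
  deriving DecidableEq

namespace DyadicInterval

/-- The length `2^k` of a dyadic interval. -/
def len (I : DyadicInterval) : ℝ := 2 ^ I.k

/-- The left endpoint `n 2^k` of a dyadic interval. -/
def lo (I : DyadicInterval) : ℝ := I.n * 2 ^ I.k

/-- A dyadic interval as a subset of `ℝ`. -/
def toSet (I : DyadicInterval) : Set ℝ := Set.Ico I.lo (I.lo + I.len)

end DyadicInterval

/-- The Walsh function of index `m` (Paley ordering): for `y ∈ [0,1)` with binary digits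
`y_i`, `W_m(y) = (-1)^{∑ m_i y_i}`. -/
def walshF (m : ℕ) (y : ℝ) : ℝ :=
  ∏ i ∈ Finset.range m, if m.testBit i then (-1 : ℝ) ^ ⌊y * 2 ^ (i + 1)⌋ else 1

/-- The Walsh wave packet of the rectangle `I × ω`.  For a tile (a rectangle of area one) this
is the unique family satisfying `φ_{I×[0,2^n)} = |I|^{-1/2} 1_I` together with the recursions
`φ_{I×ω_r} = (φ_{I_l×ω} − φ_{I_r×ω})/√2` and `φ_{I×ω_l} = (φ_{I_l×ω} + φ_{I_r×ω})/√2`. -/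
def wavePacket (I ω : DyadicInterval) (x : ℝ) : ℝ :=
  I.toSet.indicator (fun x => I.len ^ (-(1 : ℝ) / 2) * walshF ω.n ((x - I.lo) / I.len)) x

/-- `⟨f, g⟩ = ∫_0^∞ f g`. -/
def innerF (f g : ℝ → ℝ) : ℝ := ∫ x in Set.Ici (0 : ℝ), f x * g x

/-- A tile: a dyadic rectangle of area one. -/
structure Tile where
  I : DyadicInterval
  ω : DyadicInterval
  area : I.k + ω.k = 0

/-- The Walsh wave packet of a tile. -/
def Tile.wp (p : Tile) : ℝ → ℝ := wavePacket p.I p.ω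

/-- A tile as a subset of `[0,∞) × [0,∞)`. -/
def Tile.toSet (p : Tile) : Set (ℝ × ℝ) := p.I.toSet ×ˢ p.ω.toSet

/-- A quartile: a dyadic rectangle of area four. -/
structure Quartile where
  I : DyadicInterval
  ω : DyadicInterval
  area : I.k + ω.k = 2

namespace Quartile

/-- The frequency interval `ω_{P_{i+1}}` (the `i`-th dyadic grandchild of `ω_P`, `i : Fin 4`,
in increasing order). -/
def freq (P : Quartile) (i : Fin 4) : DyadicInterval := ⟨4 * P.ω.n + i.val, P.ω.k - 2⟩

/-- The tile `P_{i+1} = I_P × ω_{P_{i+1}}` as a subset of the plane, for `i : Fin 4`. -/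
def subtileSet (P : Quartile) (i : Fin 4) : Set (ℝ × ℝ) := P.I.toSet ×ˢ (P.freq i).toSet

/-- The Walsh wave packet `φ_{P_{i+1}}` for `i : Fin 4`. -/
def wp (P : Quartile) (i : Fin 4) : ℝ → ℝ := wavePacket P.I (P.freq i)

end Quartile

instance : DecidableEq Quartile := fun P Q =>
  decidable_of_iff (P.I = Q.I ∧ P.ω = Q.ω) (by cases P; cases Q; simp)

/-- `(T, ξ, I_T)` is a tree: `ξ ∈ [0,∞)` and every `P ∈ T` has `I_P ⊆ I_T` and `ξ ∈ ω_P`. -/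
def IsTree (T : Finset Quartile) (ξ : ℝ) (It : DyadicInterval) : Prop :=
  0 ≤ ξ ∧ ∀ P ∈ T, P.I.toSet ⊆ It.toSet ∧ ξ ∈ P.ω.toSet

/-- An `i`-overlapping tree (`i : Fin 4` indexes `P_1,…,P_4`): `ξ_T ∈ ω_{P_{i+1}}` for all `P`. -/
def IsOverlapping (i : Fin 4) (T : Finset Quartile) (ξ : ℝ) (It : DyadicInterval) : Prop :=
  IsTree T ξ It ∧ ∀ P ∈ T, ξ ∈ (P.freq i).toSet

/-- An `i`-lacunary tree: `j`-overlapping for some `j ≠ i`. -/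
def IsLacunary (i : Fin 4) (T : Finset Quartile) (ξ : ℝ) (It : DyadicInterval) : Prop :=
  ∃ j, j ≠ i ∧ IsOverlapping j T ξ It

/-- `ω_T`: the dyadic interval of length `|I_T|⁻¹` containing `ξ`; `p_T = I_T × ω_T`. -/
def topFreq (It : DyadicInterval) (ξ : ℝ) : DyadicInterval := ⟨(⌊ξ * 2 ^ It.k⌋).toNat, -It.k⟩

/-- The dyadic interval of length `2^k` containing `x ≥ 0`. -/
def dyadicPiece (k : ℤ) (x : ℝ) : Set ℝ :=
  Set.Ico ((⌊x / 2 ^ k⌋ : ℝ) * 2 ^ k) (((⌊x / 2 ^ k⌋ : ℝ) + 1) * 2 ^ k)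

/-- The dyadic averaging operator `A_k[f](x) = |I|⁻¹ ∫_I f` with `I ∋ x` dyadic, `|I| = 2^k`. -/
def dyadicAvg (k : ℤ) (f : ℝ → ℝ) (x : ℝ) : ℝ :=
  ((2 : ℝ) ^ k)⁻¹ * ∫ y in dyadicPiece k x, f y

/-- The `r`-variation seminorm of `g : ℤ → ℝ` over the index set `S ⊆ ℤ`:
the supremum of `(∑_{j=1}^N |g(k_j) − g(k_{j−1})|^r)^{1/r}` over finite increasing
sequences `k_0 < ⋯ < k_N` in `S`. -/
def varNorm (r : ℝ) (S : Set ℤ) (g : ℤ → ℝ) : ℝ≥0∞ :=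
  ⨆ (N : ℕ) (k : ℕ → ℤ) (_ : StrictMono k) (_ : ∀ j ≤ N, k j ∈ S),
    (∑ j ∈ Finset.range N, ENNReal.ofReal (|g (k (j + 1)) - g (k j)| ^ r)) ^ (1 / r)

/-- The dyadic `L^t` Hardy–Littlewood maximal operator `M^t[f](x) = sup_k (A_k[|f|^t](x))^{1/t}`. -/
def maxOp (t : ℝ) (f : ℝ → ℝ) (x : ℝ) : ℝ≥0∞ :=
  ⨆ k : ℤ, ((ENNReal.ofReal ((2 : ℝ) ^ k))⁻¹ *
    ∫⁻ y in dyadicPiece k x, ENNReal.ofReal (|f y| ^ t)) ^ (1 / t)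

/-- Given a strictly increasing `kk : ℤ → ℤ` and coefficients `a : ℤ → ℝ`, the coefficient
`a_m` where `m` is the (unique) integer with `kk (m-1) ≤ K < kk m` (`K = log₂|I_P|`),
and `0` if no such `m` exists. -/
def linCoeff (kk : ℤ → ℤ) (a : ℤ → ℝ) (K : ℤ) : ℝ :=
  letI := Classical.propDecidable (∃ m : ℤ, kk (m - 1) ≤ K ∧ K < kk m)
  if h : ∃ m : ℤ, kk (m - 1) ≤ K ∧ K < kk m then a h.choose else 0

/-- Linearization data for the `r`-variation: measurably in `x`, a strictly increasing
sequence of integers `k_j(x)` and coefficients `a_j(x)` with `∑_j |a_j(x)|^{r'} ≤ 1`,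
`r' = r/(r-1)`. -/
structure LinData (r : ℝ) where
  kseq : ℝ → ℤ → ℤ
  aseq : ℝ → ℤ → ℝ
  mono : ∀ x, StrictMono (kseq x)
  meas_k : ∀ j, Measurable fun x => kseq x j
  meas_a : ∀ j, Measurable fun x => aseq x j
  abound : ∀ x, ∀ s : Finset ℤ, ∑ j ∈ s, |aseq x j| ^ (r / (r - 1)) ≤ 1

/-- `a_P(x)` for a quartile `P`. -/
def LinData.coeff {r : ℝ} (L : LinData r) (P : Quartile) (x : ℝ) : ℝ :=
  linCoeff (L.kseq x) (L.aseq x) P.I.k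

/-- The modified wave packets: `φ̃_{P_3}(x) = a_P(x) φ_{P_3}(x)` and `φ̃_{P_i} = φ_{P_i}`
for `i ≠ 3` (here `i : Fin 4`, so index `2` plays the role of `3`). -/
def LinData.wp {r : ℝ} (L : LinData r) (P : Quartile) (i : Fin 4) (x : ℝ) : ℝ :=
  (if i = (2 : Fin 4) then L.coeff P x else 1) * P.wp i x

/-- `size_i(Ps, f)`: the sup of `(|I_T|⁻¹ ∑_{P ∈ T} |⟨f, φ̃_{P_i}⟩|²)^{1/2}` over
`i`-lacunary trees `T ⊆ Ps`. -/
def treeSize {r : ℝ} (L : LinData r) (i : Fin 4) (Ps : Set Quartile) (f : ℝ → ℝ) : ℝ≥0∞ :=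
  ⨆ (T : Finset Quartile) (ξ : ℝ) (It : DyadicInterval)
    (_ : IsLacunary i T ξ It) (_ : (T : Set Quartile) ⊆ Ps),
    ENNReal.ofReal ((It.len)⁻¹ * ∑ P ∈ T, innerF f (L.wp P i) ^ 2) ^ ((1 : ℝ) / 2)

/-- Lebesgue measure restricted to `[0,∞)`. -/
def mu0 : Measure ℝ := volume.restrict (Set.Ici 0)

end

/-! ### Dyadic intervals -/

theorem floor_div_two_zpow_add_natCast (x : ℝ) (k : ℤ) (s : ℕ) :
    ⌊x / 2 ^ (k + s)⌋ = ⌊x / 2 ^ k⌋ / (2 ^ s : ℕ) := by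
  rw [← Int.floor_div_natCast, zpow_add₀ two_ne_zero, zpow_natCast, div_div]
  push_cast
  rfl

namespace DyadicInterval

variable {I J : DyadicInterval} {x : ℝ}

theorem len_pos (I : DyadicInterval) : 0 < I.len := by
  unfold len; positivity

theorem lo_nonneg (I : DyadicInterval) : 0 ≤ I.lo := by
  unfold lo; positivity

theorem lo_mem_toSet (I : DyadicInterval) : I.lo ∈ I.toSet :=
  ⟨le_rfl, lt_add_of_pos_right _ I.len_pos⟩

theorem nonneg_of_mem_toSet (hx : x ∈ I.toSet) : 0 ≤ x :=
  I.lo_nonneg.trans hx.1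

theorem mem_toSet_iff_floor : x ∈ I.toSet ↔ ⌊x / 2 ^ I.k⌋ = (I.n : ℤ) := by
  have h : (0 : ℝ) < 2 ^ I.k := by positivity
  rw [Int.floor_eq_iff, le_div_iff₀ h, div_lt_iff₀ h]
  simp only [toSet, lo, len, mem_Ico]
  push_cast
  rw [add_mul, one_mul]

theorem toSet_subset_toSet_of_mem (hI : x ∈ I.toSet) (hJ : x ∈ J.toSet) (hk : I.k ≤ J.k) :
    I.toSet ⊆ J.toSet := by
  intro z hz
  obtain ⟨s, hs⟩ := Int.le.dest hk
  rw [mem_toSet_iff_floor] at *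
  rw [← hs, floor_div_two_zpow_add_natCast] at hJ ⊢
  rw [hz, ← hI, hJ]

theorem eq_of_mem_toSet (hI : x ∈ I.toSet) (hJ : x ∈ J.toSet) (hk : I.k = J.k) : I = J := by
  rw [mem_toSet_iff_floor] at *
  rw [hk] at hI
  have hn : I.n = J.n := by exact_mod_cast hI.symm.trans hJ
  cases I; cases J; simp_all

theorem measurableSet_toSet (I : DyadicInterval) : MeasurableSet I.toSet := measurableSet_Ico

theorem volume_toSet (I : DyadicInterval) : volume I.toSet = ENNReal.ofReal I.len := by
  simp [toSet]

theorem volume_real_toSet (I : DyadicInterval) : volume.real I.toSet = I.len := by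
  simp [Measure.real, volume_toSet, I.len_pos.le]

theorem integrable_indicator_const (I : DyadicInterval) (a : ℝ) :
    Integrable (I.toSet.indicator fun _ => a) :=
  (integrable_indicator_iff I.measurableSet_toSet).2 <|
    integrableOn_const (by rw [volume_toSet]; exact ENNReal.ofReal_ne_top)

theorem integral_indicator_const (I : DyadicInterval) (a : ℝ) :
    ∫ x, I.toSet.indicator (fun _ => a) x = I.len * a := by
  rw [integral_indicator I.measurableSet_toSet, setIntegral_const, volume_real_toSet, smul_eq_mul]

end DyadicInterval

open DyadicInterval

/-! ### Walsh functions -/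

theorem walshF_eq_prod_range {m M : ℕ} (h : m ≤ M) (y : ℝ) :
    walshF m y = ∏ i ∈ Finset.range M, if m.testBit i then (-1 : ℝ) ^ ⌊y * 2 ^ (i + 1)⌋ else 1 := by
  refine Finset.prod_subset (Finset.range_mono h) fun i _ hi => ?_
  have hi : m ≤ i := by simpa using hi
  rw [Nat.testBit_lt_two_pow (hi.trans_lt Nat.lt_two_pow_self)]
  simp

theorem walshF_eq_mul_walshF_half (m : ℕ) (y : ℝ) :
    walshF m y = (if m.testBit 0 then (-1 : ℝ) ^ ⌊2 * y⌋ else 1) * walshF (m / 2) (2 * y) := by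
  rw [walshF_eq_prod_range (Nat.le_succ m), walshF_eq_prod_range (Nat.div_le_self m 2),
    Finset.prod_range_succ', mul_comm]
  congr 1
  · simp [mul_comm]
  · refine Finset.prod_congr rfl fun i _ => ?_
    rw [Nat.testBit_succ]
    congr 3
    ring_nf

theorem walshF_add_int (m : ℕ) (y : ℝ) (k : ℤ) : walshF m (y + k) = walshF m y := by
  refine Finset.prod_congr rfl fun i _ => ?_
  have : (y + k) * 2 ^ (i + 1) = y * 2 ^ (i + 1) + ((2 * (k * 2 ^ i) : ℤ) : ℝ) := by
    push_cast; ring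
  rw [this, Int.floor_add_intCast, zpow_add₀ (by norm_num), zpow_mul]
  norm_num

theorem walshF_mul_self (m : ℕ) (y : ℝ) : walshF m y * walshF m y = 1 := by
  unfold walshF
  rw [← Finset.prod_mul_distrib]
  refine Finset.prod_eq_one fun i _ => ?_
  split_ifs
  · rw [← zpow_add₀ (by norm_num), ← two_mul, zpow_mul]; norm_num
  · norm_num

theorem abs_walshF (m : ℕ) (y : ℝ) : |walshF m y| = 1 := by
  rw [← Real.sqrt_mul_self_eq_abs, walshF_mul_self, Real.sqrt_one]

theorem measurable_walshF (m : ℕ) : Measurable (walshF m) := by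
  refine Finset.measurable_prod _ fun i _ => ?_
  split_ifs
  · have : Measurable fun n : ℤ => (-1 : ℝ) ^ n := measurable_from_top
    exact this.comp (Int.measurable_floor.comp (measurable_id.mul_const _))
  · exact measurable_const

theorem intervalIntegrable_walshF_mul_walshF (m n : ℕ) (a b : ℝ) :
    IntervalIntegrable (fun y => walshF m y * walshF n y) volume a b :=
  (intervalIntegrable_const (c := (1 : ℝ))).mono_fun
    ((measurable_walshF m).mul (measurable_walshF n)).aestronglyMeasurable
    (Filter.Eventually.of_forall fun y => by simp [abs_walshF])

theorem walshF_div_two {m : ℕ} {y : ℝ} (h0 : 0 ≤ y) (h1 : y < 1) :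
    walshF m (y / 2) = walshF (m / 2) y := by
  rw [walshF_eq_mul_walshF_half, mul_div_cancel₀ y two_ne_zero, Int.floor_eq_zero_iff.2 ⟨h0, h1⟩]
  simp

theorem walshF_div_two_add_half {m : ℕ} {y : ℝ} (h0 : 0 ≤ y) (h1 : y < 1) :
    walshF m (y / 2 + 1 / 2) = (if m.testBit 0 then -1 else 1) * walshF (m / 2) y := by
  have hy : 2 * (y / 2 + 1 / 2) = y + ((1 : ℤ) : ℝ) := by push_cast; ring
  rw [walshF_eq_mul_walshF_half, hy, walshF_add_int, Int.floor_add_intCast,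
    Int.floor_eq_zero_iff.2 ⟨h0, h1⟩, zero_add, zpow_one]

theorem intervalIntegral_zero_one_eq_halves {F : ℝ → ℝ}
    (hF : ∀ a b, IntervalIntegrable F volume a b) :
    ∫ y in (0 : ℝ)..1, F y
      = ((∫ y in (0 : ℝ)..1, F (y / 2)) + ∫ y in (0 : ℝ)..1, F (y / 2 + 1 / 2)) / 2 := by
  rw [← intervalIntegral.integral_add_adjacent_intervals (hF 0 (1 / 2)) (hF (1 / 2) 1),
    intervalIntegral.integral_comp_div F two_ne_zero,
    intervalIntegral.integral_comp_div_add F two_ne_zero]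
  norm_num
  ring

theorem integral_walshF_mul_walshF_half (m n : ℕ) :
    ∫ y in (0 : ℝ)..1, walshF m y * walshF n y
      = (1 + (if m.testBit 0 then (-1 : ℝ) else 1) * (if n.testBit 0 then (-1 : ℝ) else 1)) / 2 *
        ∫ y in (0 : ℝ)..1, walshF (m / 2) y * walshF (n / 2) y := by
  have hleft : ∫ y in (0 : ℝ)..1, walshF m (y / 2) * walshF n (y / 2)
      = ∫ y in (0 : ℝ)..1, walshF (m / 2) y * walshF (n / 2) y :=
    intervalIntegral.integral_congr_Ioo_of_le zero_le_one fun y hy => by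
      simp only [walshF_div_two hy.1.le hy.2]
  have hright : ∫ y in (0 : ℝ)..1, walshF m (y / 2 + 1 / 2) * walshF n (y / 2 + 1 / 2)
      = (if m.testBit 0 then (-1 : ℝ) else 1) * (if n.testBit 0 then (-1 : ℝ) else 1) *
        ∫ y in (0 : ℝ)..1, walshF (m / 2) y * walshF (n / 2) y := by
    rw [← intervalIntegral.integral_const_mul]
    refine intervalIntegral.integral_congr_Ioo_of_le zero_le_one fun y hy => ?_
    simp only [walshF_div_two_add_half hy.1.le hy.2]
    ring
  rw [intervalIntegral_zero_one_eq_halves (intervalIntegrable_walshF_mul_walshF m n), hleft, hright]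
  ring

theorem integral_walshF_mul_walshF_of_ne {m n : ℕ} (h : m ≠ n) :
    ∫ y in (0 : ℝ)..1, walshF m y * walshF n y = 0 := by
  induction hs : m + n using Nat.strong_induction_on generalizing m n with
  | _ s ih =>
  rw [integral_walshF_mul_walshF_half]
  by_cases hb : m.testBit 0 = n.testBit 0
  · have hparity : m % 2 = 1 ↔ n % 2 = 1 := by simpa [Nat.testBit_zero] using hb
    have hne : m / 2 ≠ n / 2 := by omega
    rw [ih (m / 2 + n / 2) (by omega) hne rfl, mul_zero]
  · cases h1 : m.testBit 0 <;> cases h2 : n.testBit 0 <;> simp_all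

theorem exists_walshF_div_two_pow_eq_mul (s n : ℕ) (m : ℤ) :
    ∃ σ : ℝ, ∀ y : ℝ, 0 ≤ y → y < 1 → walshF n ((y + m) / 2 ^ s) = σ * walshF (n / 2 ^ s) y := by
  induction s generalizing n with
  | zero => exact ⟨1, fun y _ _ => by simp [walshF_add_int]⟩
  | succ s ih =>
    obtain ⟨σ, hσ⟩ := ih (n / 2)
    refine ⟨(if n.testBit 0 then (-1 : ℝ) ^ (m / (2 ^ s : ℕ)) else 1) * σ, fun y h0 h1 => ?_⟩
    have hdouble : 2 * ((y + m) / 2 ^ (s + 1)) = (y + m) / 2 ^ s := by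
      rw [pow_succ]; field_simp
    have hfloor : ⌊(y + m) / 2 ^ s⌋ = m / (2 ^ s : ℕ) := by
      have := Int.floor_div_natCast (y + m) (2 ^ s)
      push_cast at this ⊢
      rw [this, Int.floor_add_intCast, Int.floor_eq_zero_iff.2 ⟨h0, h1⟩, zero_add]
    rw [walshF_eq_mul_walshF_half, hdouble, hfloor, hσ y h0 h1, Nat.div_div_eq_div_mul, pow_succ',
      mul_assoc]

namespace DyadicInterval

/-- The Walsh function of index `n` transplanted from `[0, 1)` to the dyadic interval `I`; it is
not cut off outside `I`. -/
noncomputable def walsh (I : DyadicInterval) (n : ℕ) (x : ℝ) : ℝ := walshF n ((x - I.lo) / I.len)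

theorem walsh_sq (I : DyadicInterval) (n : ℕ) (x : ℝ) : I.walsh n x ^ 2 = 1 := by
  rw [sq]; exact walshF_mul_self _ _

theorem measurable_walsh (I : DyadicInterval) (n : ℕ) : Measurable (I.walsh n) :=
  (measurable_walshF n).comp ((measurable_id.sub_const _).div_const _)

theorem setIntegral_walsh_mul_walsh_of_ne (I : DyadicInterval) {m n : ℕ} (h : m ≠ n) :
    ∫ x in I.toSet, I.walsh m x * I.walsh n x = 0 := by
  have hl := I.len_pos
  have hlo : I.lo / I.len - I.lo / I.len = 0 := sub_self _
  have hhi : (I.lo + I.len) / I.len - I.lo / I.len = 1 := by field_simp; ring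
  simp only [walsh, sub_div]
  rw [toSet, integral_Ico_eq_integral_Ioc, ← intervalIntegral.integral_of_le (by linarith),
    intervalIntegral.integral_comp_div_sub (fun y => walshF m y * walshF n y) hl.ne', hlo, hhi,
    integral_walshF_mul_walshF_of_ne h, smul_zero]

end DyadicInterval

theorem wavePacket_of_notMem {I ω : DyadicInterval} {x : ℝ} (h : x ∉ I.toSet) :
    wavePacket I ω x = 0 :=
  indicator_of_notMem h _

theorem wavePacket_of_mem {I ω : DyadicInterval} {x : ℝ} (h : x ∈ I.toSet) :
    wavePacket I ω x = I.len ^ (-(1 : ℝ) / 2) * I.walsh ω.n x :=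
  indicator_of_mem h _

/-- Restricted to a subinterval of relative length `2^{-s}`, a wave packet is a multiple of the
Walsh function whose index has lost its `s` lowest bits. -/
theorem exists_wavePacket_eq_mul_walsh {I J : DyadicInterval} (ω : DyadicInterval) (s : ℕ)
    (hs : J.k = I.k + s) :
    ∃ τ : ℝ, ∀ x ∈ I.toSet, wavePacket J ω x = τ * I.walsh (ω.n / 2 ^ s) x := by
  by_cases hmeet : Disjoint I.toSet J.toSet
  · exact ⟨0, fun x hx => by rw [wavePacket_of_notMem (disjoint_left.1 hmeet hx), zero_mul]⟩
  obtain ⟨x₀, hI, hJ⟩ := not_disjoint_iff.1 hmeet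
  obtain ⟨σ, hσ⟩ := exists_walshF_div_two_pow_eq_mul s ω.n ((I.n : ℤ) - J.n * 2 ^ s)
  refine ⟨J.len ^ (-(1 : ℝ) / 2) * σ, fun x hx => ?_⟩
  have hl := I.len_pos
  have hcoord : (x - J.lo) / J.len
      = ((x - I.lo) / I.len + (((I.n : ℤ) - J.n * 2 ^ s : ℤ) : ℝ)) / 2 ^ s := by
    simp only [len, lo, hs]
    rw [zpow_add₀ two_ne_zero, zpow_natCast]
    have : (0 : ℝ) < 2 ^ I.k := by positivity
    push_cast
    field_simp
    ring
  rw [wavePacket_of_mem (toSet_subset_toSet_of_mem hI hJ (by omega) hx), mul_assoc, walsh, walsh,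
    hcoord, hσ _ (div_nonneg (by linarith [hx.1]) hl.le)
      ((div_lt_one hl).2 (by linarith [hx.2]))]

/-! ### Wave packets of tiles and quartiles -/

namespace Tile

theorem wp_of_notMem {p : Tile} {x : ℝ} (h : x ∉ p.I.toSet) : p.wp x = 0 :=
  wavePacket_of_notMem h

theorem wp_sq (p : Tile) (x : ℝ) : p.wp x ^ 2 = p.I.toSet.indicator (fun _ => p.I.len⁻¹) x := by
  by_cases h : x ∈ p.I.toSet
  · rw [wp, wavePacket_of_mem h, mul_pow, walsh_sq, indicator_of_mem h, mul_one, sq,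
      ← Real.rpow_add p.I.len_pos]
    norm_num [Real.rpow_neg_one]
  · simp [wp_of_notMem h, h]

theorem measurable_wp (p : Tile) : Measurable p.wp :=
  ((p.I.measurable_walsh _).const_mul _).indicator p.I.measurableSet_toSet

theorem integral_wp_sq (p : Tile) : ∫ x, p.wp x ^ 2 = 1 := by
  simp only [wp_sq, integral_indicator_const]
  exact mul_inv_cancel₀ p.I.len_pos.ne'

theorem index_ne_of_disjoint {p q : Tile} {s : ℕ} (hs : q.I.k = p.I.k + s)
    (hmeet : ¬ Disjoint p.I.toSet q.I.toSet) (h : Disjoint p.toSet q.toSet) :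
    p.ω.n ≠ q.ω.n / 2 ^ s := by
  obtain ⟨x, hp, hq⟩ := not_disjoint_iff.1 hmeet
  intro hn
  have hlo := mem_toSet_iff_floor.1 q.ω.lo_mem_toSet
  have hpk : p.ω.k = q.ω.k + s := by have := p.area; have := q.area; omega
  have hmem : q.ω.lo ∈ p.ω.toSet := by
    rw [mem_toSet_iff_floor, hpk, floor_div_two_zpow_add_natCast, hlo, hn]
    push_cast
    rfl
  exact disjoint_left.1 h (show (x, q.ω.lo) ∈ p.toSet from ⟨hp, hmem⟩) ⟨hq, q.ω.lo_mem_toSet⟩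

theorem integral_wp_mul_wp_of_disjoint {p q : Tile} (h : Disjoint p.toSet q.toSet) :
    ∫ x, p.wp x * q.wp x = 0 := by
  wlog hk : p.I.k ≤ q.I.k generalizing p q
  · simpa only [mul_comm] using this h.symm (le_of_not_ge hk)
  by_cases hmeet : Disjoint p.I.toSet q.I.toSet
  · refine integral_eq_zero_of_ae (Filter.Eventually.of_forall fun x => mul_eq_zero.2 ?_)
    by_cases hx : x ∈ p.I.toSet
    · exact .inr (wp_of_notMem (disjoint_left.1 hmeet hx))
    · exact .inl (wp_of_notMem hx)
  obtain ⟨s, hs⟩ := Int.le.dest hk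
  obtain ⟨τ, hτ⟩ := exists_wavePacket_eq_mul_walsh q.ω s hs.symm
  have hprod : (fun x => p.wp x * q.wp x) = p.I.toSet.indicator fun x =>
      p.I.len ^ (-(1 : ℝ) / 2) * τ * (p.I.walsh p.ω.n x * p.I.walsh (q.ω.n / 2 ^ s) x) := by
    ext x
    by_cases hx : x ∈ p.I.toSet
    · rw [indicator_of_mem hx, wp, wp, hτ x hx, wavePacket_of_mem hx]
      ring
    · rw [indicator_of_notMem hx, wp_of_notMem hx, zero_mul]
  rw [hprod, integral_indicator p.I.measurableSet_toSet, integral_const_mul,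
    setIntegral_walsh_mul_walsh_of_ne _ (index_ne_of_disjoint hs.symm hmeet h), mul_zero]

end Tile

namespace Quartile

variable {P Q : Quartile} {i j : Fin 4}

theorem ext_of_I_of_ω (hI : P.I = Q.I) (hω : P.ω = Q.ω) : P = Q := by
  cases P; cases Q; simp_all

theorem freq_k (P : Quartile) (i : Fin 4) : (P.freq i).k = -P.I.k := by
  have := P.area
  simp only [freq]; omega

/-- The tile `P_{i+1}` as an object of its own; its point set is `P.subtileSet i` and its wave
packet is `P.wp i`. -/
def subtile (P : Quartile) (i : Fin 4) : Tile := ⟨P.I, P.freq i, by rw [freq_k]; omega⟩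

theorem wp_of_notMem {x : ℝ} (h : x ∉ P.I.toSet) : P.wp i x = 0 :=
  wavePacket_of_notMem h

theorem wp_sq (P : Quartile) (i : Fin 4) (x : ℝ) :
    P.wp i x ^ 2 = P.I.toSet.indicator (fun _ => P.I.len⁻¹) x :=
  (P.subtile i).wp_sq x

theorem wp_pow_three (P : Quartile) (i : Fin 4) (x : ℝ) : P.wp i x ^ 3 = P.I.len⁻¹ * P.wp i x := by
  by_cases hx : x ∈ P.I.toSet
  · rw [pow_succ, wp_sq, indicator_of_mem hx]
  · simp [wp_of_notMem hx]

theorem integral_wp_sq (P : Quartile) (i : Fin 4) : ∫ x, P.wp i x ^ 2 = 1 :=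
  (P.subtile i).integral_wp_sq

theorem integral_wp_mul_wp_of_disjoint (h : Disjoint (P.subtileSet i) (Q.subtileSet i)) :
    ∫ x, P.wp i x * Q.wp i x = 0 :=
  Tile.integral_wp_mul_wp_of_disjoint (p := P.subtile i) (q := Q.subtile i) h

theorem freq_toSet_subset (P : Quartile) (i : Fin 4) : (P.freq i).toSet ⊆ P.ω.toSet := by
  intro z hz
  have hk : P.ω.k = (P.freq i).k + (2 : ℕ) := by simp [freq]
  rw [mem_toSet_iff_floor] at *
  rw [hk, floor_div_two_zpow_add_natCast, hz]
  simp only [freq]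
  have := i.2
  push_cast
  omega

theorem lt_of_mem_freq (P : Quartile) (hij : j < i) {a b : ℝ} (ha : a ∈ (P.freq j).toSet)
    (hb : b ∈ (P.freq i).toSet) : a < b := by
  rw [mem_toSet_iff_floor] at ha hb
  have hfloor : ⌊a / 2 ^ (P.freq i).k⌋ < ⌊b / 2 ^ (P.freq i).k⌋ := by
    rw [hb, show (P.freq i).k = (P.freq j).k from rfl, ha]
    have : j.val < i.val := hij
    simp only [freq]
    omega
  exact (div_lt_div_iff_of_pos_right (by positivity)).1 (Int.floor_mono.reflect_lt hfloor)

theorem exists_wp_eq_mul_walsh_topFreq (Q : Quartile) (i : Fin 4) {I : DyadicInterval} {ξ : ℝ}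
    (hk : I.k + 2 ≤ Q.I.k) (hξ : ξ ∈ Q.ω.toSet) :
    ∃ τ : ℝ, ∀ x ∈ I.toSet, Q.wp i x = τ * I.walsh (topFreq I ξ).n x := by
  obtain ⟨s, hs⟩ := Int.le.dest hk
  have hindex : (topFreq I ξ).n = (Q.freq i).n / 2 ^ (s + 2) := by
    have hfloor := floor_div_two_zpow_add_natCast ξ Q.ω.k s
    rw [mem_toSet_iff_floor.1 hξ, show Q.ω.k + s = -I.k by have := Q.area; omega, zpow_neg,
      div_inv_eq_mul] at hfloor
    have hparent : (Q.freq i).n / 2 ^ 2 = Q.ω.n := by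
      have := i.2
      simp only [freq]; omega
    rw [topFreq, hfloor, pow_add, mul_comm, ← Nat.div_div_eq_div_mul, hparent]
    rfl
  rw [hindex]
  exact exists_wavePacket_eq_mul_walsh (Q.freq i) (s + 2) (by push_cast; omega)

theorem eq_of_mem_of_mem (hk : P.I.k = Q.I.k) {x ξ : ℝ} (hxP : x ∈ P.I.toSet)
    (hxQ : x ∈ Q.I.toSet) (hξP : ξ ∈ P.ω.toSet) (hξQ : ξ ∈ Q.ω.toSet) : P = Q := by
  have := P.area
  have := Q.area
  exact ext_of_I_of_ω (eq_of_mem_toSet hxP hxQ hk) (eq_of_mem_toSet hξP hξQ (by omega))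

end Quartile

/-! ### Overlap of families of dyadic intervals -/

namespace DyadicInterval

variable {ι : Type*} (I : ι → DyadicInterval)

open Classical in
/-- The number of members of a finite family of dyadic intervals that contain the point `x`. -/
noncomputable def overlapCount (s : Finset ι) (x : ℝ) : ℕ :=
  (s.filter fun σ => x ∈ (I σ).toSet).card

theorem overlapCount_mono {s t : Finset ι} (h : s ⊆ t) (x : ℝ) :
    overlapCount I s x ≤ overlapCount I t x := by
  classical exact Finset.card_le_card (Finset.filter_subset_filter _ h)

theorem coe_overlapCount (s : Finset ι) (x : ℝ) :
    (overlapCount I s x : ℝ) = ∑ σ ∈ s, (I σ).toSet.indicator (fun _ => 1) x := by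
  classical simp [overlapCount, indicator_apply]

theorem integrable_overlapCount (s : Finset ι) : Integrable fun x => (overlapCount I s x : ℝ) := by
  simp only [coe_overlapCount]
  exact integrable_finsetSum _ fun σ _ => (I σ).integrable_indicator_const 1

theorem integral_overlapCount (s : Finset ι) :
    ∫ x, (overlapCount I s x : ℝ) = ∑ σ ∈ s, (I σ).len := by
  simp only [coe_overlapCount]
  rw [integral_finsetSum _ fun σ _ => (I σ).integrable_indicator_const 1]
  simp only [integral_indicator_const, mul_one]

theorem measurableSet_le_overlapCount (s : Finset ι) (n : ℕ) :
    MeasurableSet {x | n ≤ overlapCount I s x} := by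
  simp only [← Nat.cast_le (α := ℝ), coe_overlapCount]
  exact measurableSet_le measurable_const <| Finset.measurable_sum _ fun σ _ =>
    measurable_const.indicator (I σ).measurableSet_toSet

theorem volume_le_overlapCount_ne_top (s : Finset ι) {n : ℕ} (hn : 0 < n) :
    volume {x | n ≤ overlapCount I s x} ≠ ⊤ := by
  simp only [← Nat.cast_le (α := ℝ)]
  exact ((integrable_overlapCount I s).measure_ge_lt_top (Nat.cast_pos.2 hn)).ne

theorem mul_volume_real_le_overlapCount_le (s : Finset ι) (n : ℕ) :
    n * volume.real {x | n ≤ overlapCount I s x} ≤ ∑ σ ∈ s, (I σ).len := by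
  rw [← integral_overlapCount]
  simpa only [Nat.cast_le] using mul_meas_ge_le_integral_of_nonneg
    (Filter.Eventually.of_forall fun x => Nat.cast_nonneg _) (integrable_overlapCount I s) (n : ℝ)

theorem exists_subset_overlapCount_le (n : ℕ) (s : Finset ι) :
    ∃ t ⊆ s, (∀ x, overlapCount I t x ≤ n) ∧
      ∀ τ ∈ s, τ ∉ t → ∀ x ∈ (I τ).toSet, n ≤ overlapCount I t x := by
  classical
  induction s using Finset.induction_on_max_value (fun τ => -(I τ).k) with
  | empty => exact ⟨∅, by simp, by simp [overlapCount], by simp⟩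
  | insert a s _ hmax ih =>
    obtain ⟨t, hts, hle, hfull⟩ := ih
    by_cases hcase : ∃ x₀ ∈ (I a).toSet, n ≤ overlapCount I t x₀
    · obtain ⟨x₀, hx₀, hn⟩ := hcase
      refine ⟨t, hts.trans (Finset.subset_insert _ _), hle, fun τ hτ hτt x hx => ?_⟩
      obtain rfl | hτs := Finset.mem_insert.1 hτ
      · refine hn.trans (Finset.card_le_card fun σ hσ => ?_)
        rw [Finset.mem_filter] at hσ ⊢
        have hk := hmax σ (hts hσ.1)
        exact ⟨hσ.1, toSet_subset_toSet_of_mem hx₀ hσ.2 (by omega) hx⟩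
      · exact hfull τ hτs hτt x hx
    · push Not at hcase
      refine ⟨insert a t, Finset.insert_subset_insert _ hts, fun x => ?_, fun τ hτ hτt x hx => ?_⟩
      · rw [overlapCount, Finset.filter_insert]
        split_ifs with hx
        · exact (Finset.card_insert_le _ _).trans (hcase x hx)
        · exact hle x
      · rw [Finset.mem_insert, not_or] at hτt
        exact (hfull τ (Finset.mem_of_mem_insert_of_ne hτ hτt.1) hτt.2 x hx).trans
          (overlapCount_mono I (Finset.subset_insert _ _) x)

/-- Thinning the family to overlap at most `n`, the intervals thrown away live on the set where the
thinned family has overlap exactly `n`, whose measure the thinned family controls. -/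
theorem sum_len_le_of_forall_overlapCount_le {n : ℕ} (hn : 0 < n) {M : ℝ} (hM : 0 ≤ M)
    (hMn : 2 * M ≤ n) (E : Set ℝ) {s : Finset ι}
    (hthin : ∀ t ⊆ s, (∀ x, overlapCount I t x ≤ n) → ∀ A : Set ℝ, MeasurableSet A →
      (∀ τ ∈ t, (I τ).toSet ⊆ A) → ∑ τ ∈ t, (I τ).len ≤ M * volume.real (E ∩ A))
    {A : Set ℝ} (hA : MeasurableSet A) (hsA : ∀ τ ∈ s, (I τ).toSet ⊆ A) :
    ∑ τ ∈ s, (I τ).len ≤ 2 * M * volume.real (E ∩ A) := by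
  classical
  induction s using Finset.strongInduction generalizing A with
  | H s ih =>
  obtain ⟨t, hts, hle, hfull⟩ := exists_subset_overlapCount_le I n s
  have hthinA := hthin t hts hle A hA fun τ hτ => hsA τ (hts hτ)
  obtain rfl | ⟨τ, hτ⟩ := t.eq_empty_or_nonempty
  · obtain rfl | ⟨τ, hτ⟩ := s.eq_empty_or_nonempty
    · rw [Finset.sum_empty]; positivity
    · have := hfull τ hτ (Finset.notMem_empty τ) _ (I τ).lo_mem_toSet
      simp [overlapCount] at this
      omega
  set F : Set ℝ := {x | n ≤ overlapCount I t x}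
  have hrest : ∑ τ ∈ s \ t, (I τ).len ≤ ∑ τ ∈ t, (I τ).len := calc
    ∑ τ ∈ s \ t, (I τ).len ≤ 2 * M * volume.real (E ∩ F) :=
      ih _ (Finset.sdiff_ssubset hts ⟨τ, hτ⟩) (fun u hu => hthin u (hu.trans Finset.sdiff_subset))
        (measurableSet_le_overlapCount I t n) fun σ hσ x hx =>
          hfull σ (Finset.mem_sdiff.1 hσ).1 (Finset.mem_sdiff.1 hσ).2 x hx
    _ ≤ n * volume.real F := by
      gcongr
      exacts [volume_le_overlapCount_ne_top I t hn, inter_subset_right]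
    _ ≤ ∑ τ ∈ t, (I τ).len := mul_volume_real_le_overlapCount_le I t n
  rw [← Finset.sum_sdiff hts]
  linarith

end DyadicInterval

/-! ### Selection of trees -/

namespace Quartile

variable {P Q : Quartile} {i j : Fin 4} {ξ η : ℝ}

/-- Membership of `P` in the maximal tree with top frequency `ξ` and top interval `J`. -/
def IsBelow (P : Quartile) (ξ : ℝ) (J : DyadicInterval) : Prop :=
  P.I.toSet ⊆ J.toSet ∧ ξ ∈ P.ω.toSet

theorem toSet_ω_subset_toSet_freq (hpar : P.I.k % 2 = Q.I.k % 2) (hk : P.I.k < Q.I.k)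
    (hmeet : ¬ Disjoint (P.subtileSet i) (Q.subtileSet i)) : Q.ω.toSet ⊆ (P.freq i).toSet := by
  obtain ⟨z, hzP, hzQ⟩ := not_disjoint_iff.1 hmeet
  refine toSet_subset_toSet_of_mem (freq_toSet_subset Q i hzQ.2) hzP.2 ?_
  rw [freq_k]
  have := Q.area
  omega

theorem eq_of_not_disjoint_subtileSet (hk : P.I.k = Q.I.k)
    (hmeet : ¬ Disjoint (P.subtileSet i) (Q.subtileSet i)) : P = Q := by
  obtain ⟨z, hzP, hzQ⟩ := not_disjoint_iff.1 hmeet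
  exact eq_of_mem_of_mem hk hzP.1 hzQ.1 (freq_toSet_subset P i hzP.2) (freq_toSet_subset Q i hzQ.2)

/-- Top frequencies of `j`-overlapping trees are selected in decreasing order if `j < i` and in
increasing order if `i < j`; multiplication by `orderSign i j` turns both into decreasing order. -/
noncomputable def orderSign (i j : Fin 4) : ℝ := if j < i then 1 else -1

theorem orderSign_mul_lt (P : Quartile) (hij : j ≠ i) (hξ : ξ ∈ (P.freq j).toSet)
    (hη : η ∈ (P.freq i).toSet) : orderSign i j * ξ < orderSign i j * η := by
  rcases lt_or_gt_of_ne hij with h | h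
  · simpa [orderSign, h] using P.lt_of_mem_freq h hξ hη
  · simpa [orderSign, not_lt.2 h.le] using P.lt_of_mem_freq h hη hξ

theorem disjoint_subtileSet_of_k_lt (hij : j ≠ i) (hpar : P.I.k % 2 = Q.I.k % 2)
    (hk : P.I.k < Q.I.k) (hξ : ξ ∈ (P.freq j).toSet) (hη : η ∈ Q.ω.toSet)
    (hle : orderSign i j * η ≤ orderSign i j * ξ) :
    Disjoint (P.subtileSet i) (Q.subtileSet i) := by
  by_contra hmeet
  exact (P.orderSign_mul_lt hij hξ (toSet_ω_subset_toSet_freq hpar hk hmeet hη)).not_ge hle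

theorem disjoint_subtileSet_of_not_isBelow {J : DyadicInterval} (hij : j ≠ i)
    (hpar : P.I.k % 2 = Q.I.k % 2) (hξ : ξ ∈ (P.freq j).toSet) (hPJ : P.IsBelow ξ J)
    (hη : η ∈ Q.ω.toSet) (hQ : ¬ Q.IsBelow ξ J) (hle : orderSign i j * η ≤ orderSign i j * ξ) :
    Disjoint (P.subtileSet i) (Q.subtileSet i) := by
  by_contra hmeet
  rcases lt_trichotomy P.I.k Q.I.k with hk | hk | hk
  · exact hmeet (disjoint_subtileSet_of_k_lt hij hpar hk hξ hη hle)
  · exact hQ (eq_of_not_disjoint_subtileSet hk hmeet ▸ hPJ)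
  · obtain ⟨z, hzP, hzQ⟩ := not_disjoint_iff.1 hmeet
    refine hQ ⟨(toSet_subset_toSet_of_mem hzQ.1 hzP.1 hk.le).trans hPJ.1, ?_⟩
    rw [disjoint_comm] at hmeet
    exact freq_toSet_subset Q i (toSet_ω_subset_toSet_freq hpar.symm hk hmeet hPJ.2)

end Quartile

theorem IsOverlapping.pairwiseDisjoint_subtileSet {i j : Fin 4} {T : Finset Quartile} {ξ : ℝ}
    {J : DyadicInterval} {b : ℤ} (h : IsOverlapping j T ξ J) (hij : j ≠ i)
    (hpar : ∀ P ∈ T, P.I.k % 2 = b) :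
    (T : Set Quartile).PairwiseDisjoint (fun P => P.subtileSet i) := by
  intro P hP Q hQ hne
  have hPQ : P.I.k % 2 = Q.I.k % 2 := (hpar P hP).trans (hpar Q hQ).symm
  rcases lt_trichotomy P.I.k Q.I.k with hk | hk | hk
  · exact Quartile.disjoint_subtileSet_of_k_lt hij hPQ hk (h.2 P hP) (h.1.2 Q hQ).2 le_rfl
  · by_contra hmeet
    exact hne (Quartile.eq_of_not_disjoint_subtileSet hk hmeet)
  · exact (Quartile.disjoint_subtileSet_of_k_lt hij hPQ.symm hk (h.2 Q hQ) (h.1.2 P hP).2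
      le_rfl).symm

/-- The left endpoint of the intersection of the intervals `ω_{P_{j+1}}`, `P ∈ T`, when these meet;
it serves as the canonical top frequency of a `j`-overlapping tree. -/
noncomputable def lowestFreq (j : Fin 4) (T : Finset Quartile) : ℝ :=
  if h : T.Nonempty then T.sup' h (fun P => (P.freq j).lo) else 0

theorem IsOverlapping.lowestFreq {j : Fin 4} {T : Finset Quartile} {ξ : ℝ} {J : DyadicInterval}
    (h : IsOverlapping j T ξ J) : IsOverlapping j T (lowestFreq j T) J := by
  have hmem : ∀ P ∈ T, _root_.lowestFreq j T ∈ (P.freq j).toSet := by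
    intro P hP
    have hne : T.Nonempty := ⟨P, hP⟩
    rw [_root_.lowestFreq, dif_pos hne]
    exact ⟨Finset.le_sup' (fun P : Quartile => (P.freq j).lo) hP,
      (Finset.sup'_le hne _ fun Q hQ => (h.2 Q hQ).1).trans_lt (h.2 P hP).2⟩
  refine ⟨⟨?_, fun P hP => ⟨(h.1.2 P hP).1, P.freq_toSet_subset j (hmem P hP)⟩⟩, hmem⟩
  obtain rfl | ⟨P, hP⟩ := T.eq_empty_or_nonempty
  · simp [_root_.lowestFreq]
  · exact nonneg_of_mem_toSet (hmem P hP)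

/-- A finite set of quartiles together with a top interval. The top frequency is not part of the
data: it will always be `lowestFreq`. -/
structure ToppedTree where
  quartiles : Finset Quartile
  top : DyadicInterval
  deriving DecidableEq

/-- A `j`-overlapping tree on which the coefficients `c` have square sum above `δ |I_T|`. -/
structure ToppedTree.IsHeavy (τ : ToppedTree) (j : Fin 4) (c : Quartile → ℝ) (δ : ℝ) : Prop where
  overlapping : IsOverlapping j τ.quartiles (lowestFreq j τ.quartiles) τ.top
  lt_sum : δ * τ.top.len < ∑ P ∈ τ.quartiles, c P ^ 2

/-- The outcome `𝒯` of a greedy selection of heavy `j`-overlapping trees from `R`: the tiles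
`P_{i+1}` of the selected quartiles are disjoint, and no heavy tree is left once every quartile
lying below a selected top has been removed. -/
structure IsGreedySelection (i j : Fin 4) (c : Quartile → ℝ) (δ : ℝ) (R : Finset Quartile)
    (𝒯 : Finset ToppedTree) : Prop where
  subset : ∀ τ ∈ 𝒯, τ.quartiles ⊆ R
  heavy : ∀ τ ∈ 𝒯, τ.IsHeavy j c δ
  disjoint_subtileSet : (𝒯.biUnion ToppedTree.quartiles : Set Quartile).PairwiseDisjoint
    fun P => P.subtileSet i
  disjoint_quartiles : (𝒯 : Set ToppedTree).PairwiseDisjoint ToppedTree.quartiles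
  sum_le : ∀ T ⊆ R, ∀ ξ J, IsOverlapping j T ξ J →
    (∀ P ∈ T, ∀ τ ∈ 𝒯, ¬ P.IsBelow (lowestFreq j τ.quartiles) τ.top) →
      ∑ P ∈ T, c P ^ 2 ≤ δ * J.len

section Selection

variable {i j : Fin 4} {c : Quartile → ℝ} {δ : ℝ} {R : Finset Quartile} {b : ℤ}

open Classical in
theorem IsGreedySelection.insert {τ : ToppedTree} {𝒯 : Finset ToppedTree} (hij : j ≠ i)
    (hR : ∀ P ∈ R, P.I.k % 2 = b) (hτR : τ.quartiles ⊆ R) (hτ : τ.IsHeavy j c δ)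
    (hmax : ∀ σ : ToppedTree, σ.quartiles ⊆ R → σ.IsHeavy j c δ →
      Quartile.orderSign i j * lowestFreq j σ.quartiles
        ≤ Quartile.orderSign i j * lowestFreq j τ.quartiles)
    (h : IsGreedySelection i j c δ
      (R.filter fun P => ¬ P.IsBelow (lowestFreq j τ.quartiles) τ.top) 𝒯) :
    IsGreedySelection i j c δ R (insert τ 𝒯) := by
  have hsub : ∀ σ ∈ 𝒯, σ.quartiles ⊆ R := fun σ hσ =>
    (h.subset σ hσ).trans (Finset.filter_subset _ _)
  have hbelow := hτ.overlapping.1.2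
  have hnot : ∀ σ ∈ 𝒯, ∀ P ∈ σ.quartiles, ¬ P.IsBelow (lowestFreq j τ.quartiles) τ.top :=
    fun σ hσ P hP => (Finset.mem_filter.1 (h.subset σ hσ hP)).2
  refine ⟨(Finset.forall_mem_insert _ _ _).2 ⟨hτR, hsub⟩,
    (Finset.forall_mem_insert _ _ _).2 ⟨hτ, h.heavy⟩, ?_, ?_,
    fun T hT ξ J hov hav => h.sum_le T (fun P hP => ?_) ξ J hov fun P hP σ hσ => ?_⟩
  · rw [Finset.biUnion_insert, Finset.coe_union, pairwiseDisjoint_union]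
    refine ⟨hτ.overlapping.pairwiseDisjoint_subtileSet hij fun P hP => hR P (hτR hP),
      h.disjoint_subtileSet, fun P hP Q hQ _ => ?_⟩
    obtain ⟨σ, hσ, hQσ⟩ := Finset.mem_biUnion.1 hQ
    have hpar := (hR P (hτR hP)).trans (hR Q (hsub σ hσ hQσ)).symm
    exact Quartile.disjoint_subtileSet_of_not_isBelow hij hpar (hτ.overlapping.2 P hP) (hbelow P hP)
      ((h.heavy σ hσ).overlapping.1.2 Q hQσ).2 (hnot σ hσ Q hQσ)
      (hmax σ (hsub σ hσ) (h.heavy σ hσ))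
  · rw [Finset.coe_insert]
    refine h.disjoint_quartiles.insert fun σ hσ _ => ?_
    exact Finset.disjoint_left.2 fun P hP hPσ => hnot σ hσ P hPσ (hbelow P hP)
  · exact Finset.mem_filter.2 ⟨hT hP, hav P hP τ (Finset.mem_insert_self _ _)⟩
  · exact hav P hP σ (Finset.mem_insert_of_mem hσ)

/-- Among the heavy trees the one with extremal top frequency is selected, everything below its top
is discarded, and the procedure is repeated; extremality is what makes the tiles disjoint. -/
theorem exists_isGreedySelection (hij : j ≠ i) (hδ : 0 < δ) (c : Quartile → ℝ)
    (hR : ∀ P ∈ R, P.I.k % 2 = b) : ∃ 𝒯, IsGreedySelection i j c δ R 𝒯 := by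
  classical
  induction R using Finset.strongInduction with
  | H R ih =>
  let candidates := R.powerset.filter fun T => ∃ J, ToppedTree.IsHeavy ⟨T, J⟩ j c δ
  obtain hnone | hsome := candidates.eq_empty_or_nonempty
  · refine ⟨∅, by simp, by simp, by simp, by simp, fun T hT ξ J hov _ => not_lt.1 fun hlt => ?_⟩
    have hmem : T ∈ candidates :=
      Finset.mem_filter.2 ⟨Finset.mem_powerset.2 hT, J, hov.lowestFreq, hlt⟩
    simp [hnone] at hmem
  obtain ⟨T, hT, hmax⟩ := Finset.exists_max_image candidates
    (fun T => Quartile.orderSign i j * lowestFreq j T) hsome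
  obtain ⟨hTR, J, hheavy⟩ := Finset.mem_filter.1 hT
  rw [Finset.mem_powerset] at hTR
  have hne : T.Nonempty := by
    by_contra hempty
    have hlt := hheavy.lt_sum
    rw [Finset.not_nonempty_iff_eq_empty.1 hempty, Finset.sum_empty] at hlt
    exact hlt.not_ge (mul_pos hδ J.len_pos).le
  obtain ⟨P, hP⟩ := hne
  obtain ⟨𝒯, h𝒯⟩ := ih (R.filter fun P => ¬ P.IsBelow (lowestFreq j T) J)
    (Finset.filter_ssubset.2 ⟨P, hTR hP, not_not.2 (hheavy.overlapping.1.2 P hP)⟩)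
    fun Q hQ => hR Q (Finset.mem_filter.1 hQ).1
  exact ⟨_, h𝒯.insert (τ := ⟨T, J⟩) hij hR hTR hheavy fun σ hσR hσ =>
    hmax _ (Finset.mem_filter.2 ⟨Finset.mem_powerset.2 hσR, σ.top, hσ⟩)⟩

end Selection

/-! ### Bounded integrable functions -/

/-- The algebra of integrable, essentially bounded functions, in which all products of wave packet
sums and square functions live. -/
structure IsBddIntegrable {α : Type*} [MeasurableSpace α] (μ : Measure α) (g : α → ℝ) : Prop where
  integrable : Integrable g μ
  memLp_top : MemLp g ∞ μ

namespace IsBddIntegrable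

variable {α ι : Type*} [MeasurableSpace α] {μ : Measure α} {g h : α → ℝ}

theorem add (hg : IsBddIntegrable μ g) (hh : IsBddIntegrable μ h) :
    IsBddIntegrable μ fun x => g x + h x :=
  ⟨hg.integrable.add hh.integrable, hg.memLp_top.add hh.memLp_top⟩

theorem mul (hg : IsBddIntegrable μ g) (hh : IsBddIntegrable μ h) :
    IsBddIntegrable μ fun x => g x * h x :=
  ⟨memLp_one_iff_integrable.1 <| hh.memLp_top.mul' (memLp_one_iff_integrable.2 hg.integrable),
    hh.memLp_top.mul' hg.memLp_top⟩

theorem mono (hg : IsBddIntegrable μ g) (hm : AEStronglyMeasurable h μ) (hle : ∀ x, |h x| ≤ |g x|) :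
    IsBddIntegrable μ h :=
  ⟨hg.integrable.mono hm (Filter.Eventually.of_forall hle),
    hg.memLp_top.mono hm (Filter.Eventually.of_forall hle)⟩

theorem const_mul (hg : IsBddIntegrable μ g) (a : ℝ) : IsBddIntegrable μ fun x => a * g x :=
  ⟨hg.integrable.const_mul a, hg.memLp_top.const_mul a⟩

theorem pow (hg : IsBddIntegrable μ g) {n : ℕ} (hn : n ≠ 0) :
    IsBddIntegrable μ fun x => g x ^ n := by
  obtain ⟨n, rfl⟩ := Nat.exists_eq_succ_of_ne_zero hn
  clear hn
  induction n with
  | zero => simpa using hg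
  | succ n ih => simpa only [pow_succ _ (n + 1)] using ih.mul hg

theorem sum {s : Finset ι} {g : ι → α → ℝ} (h : ∀ j ∈ s, IsBddIntegrable μ (g j)) :
    IsBddIntegrable μ fun x => ∑ j ∈ s, g j x :=
  ⟨integrable_finsetSum _ fun j hj => (h j hj).integrable,
    memLp_finsetSum _ fun j hj => (h j hj).memLp_top⟩

/-- If `w³ = κ w`, `F² w = A w` and `F ⟂ w`, then the odd terms in the expansion of `(F + c w)⁴`
integrate to zero. -/
theorem integral_add_mul_pow_four {F w : α → ℝ} {A κ : ℝ} (hF : IsBddIntegrable μ F)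
    (hw : IsBddIntegrable μ w) (hFw : ∀ x, F x ^ 2 * w x = A * w x)
    (hw3 : ∀ x, w x ^ 3 = κ * w x) (horth : ∫ x, F x * w x ∂μ = 0) (c : ℝ) :
    ∫ x, (F x + c * w x) ^ 4 ∂μ = ∫ x, F x ^ 4 ∂μ + 6 * c ^ 2 * ∫ x, F x ^ 2 * w x ^ 2 ∂μ
      + c ^ 4 * ∫ x, w x ^ 4 ∂μ := by
  have hexpand : ∀ x, (F x + c * w x) ^ 4 = F x ^ 4 + 6 * c ^ 2 * (F x ^ 2 * w x ^ 2)
      + c ^ 4 * w x ^ 4 + (4 * c * A + 4 * c ^ 3 * κ) * (F x * w x) := fun x => by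
    linear_combination 4 * c * F x * hFw x + 4 * c ^ 3 * F x * hw3 x
  have hF4 := hF.pow four_ne_zero
  have hF2w2 := ((hF.pow two_ne_zero).mul (hw.pow two_ne_zero)).const_mul (6 * c ^ 2)
  have hw4 := (hw.pow four_ne_zero).const_mul (c ^ 4)
  simp only [hexpand]
  rw [integral_add ((hF4.add hF2w2).add hw4).integrable ((hF.mul hw).const_mul _).integrable,
    integral_add (hF4.add hF2w2).integrable hw4.integrable,
    integral_add hF4.integrable hF2w2.integrable]
  simp only [integral_const_mul, horth, mul_zero, add_zero]

theorem integral_add_mul_sq_mul_add {F S w : α → ℝ} {B κ : ℝ} (hF : IsBddIntegrable μ F)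
    (hS : IsBddIntegrable μ S) (hw : IsBddIntegrable μ w) (hSw : ∀ x, S x * w x = B * w x)
    (hw3 : ∀ x, w x ^ 3 = κ * w x) (horth : ∫ x, F x * w x ∂μ = 0) (c : ℝ) :
    ∫ x, (F x + c * w x) ^ 2 * (S x + c ^ 2 * w x ^ 2) ∂μ = ∫ x, F x ^ 2 * S x ∂μ
      + c ^ 2 * ∫ x, F x ^ 2 * w x ^ 2 ∂μ + c ^ 2 * ∫ x, S x * w x ^ 2 ∂μ
      + c ^ 4 * ∫ x, w x ^ 4 ∂μ := by
  have hexpand : ∀ x, (F x + c * w x) ^ 2 * (S x + c ^ 2 * w x ^ 2) = F x ^ 2 * S x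
      + c ^ 2 * (F x ^ 2 * w x ^ 2) + c ^ 2 * (S x * w x ^ 2) + c ^ 4 * w x ^ 4
      + (2 * c * B + 2 * c ^ 3 * κ) * (F x * w x) := fun x => by
    linear_combination 2 * c * F x * hSw x + 2 * c ^ 3 * F x * hw3 x
  have hF2S := (hF.pow two_ne_zero).mul hS
  have hF2w2 := ((hF.pow two_ne_zero).mul (hw.pow two_ne_zero)).const_mul (c ^ 2)
  have hSw2 := (hS.mul (hw.pow two_ne_zero)).const_mul (c ^ 2)
  have hw4 := (hw.pow four_ne_zero).const_mul (c ^ 4)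
  simp only [hexpand]
  rw [integral_add (((hF2S.add hF2w2).add hSw2).add hw4).integrable
      ((hF.mul hw).const_mul _).integrable,
    integral_add ((hF2S.add hF2w2).add hSw2).integrable hw4.integrable,
    integral_add (hF2S.add hF2w2).integrable hSw2.integrable,
    integral_add hF2S.integrable hF2w2.integrable]
  simp only [integral_const_mul, horth, mul_zero, add_zero]

end IsBddIntegrable

theorem sum_pow_four_le {ι : Type*} (s : Finset ι) (f : ι → ℝ) :
    (∑ j ∈ s, f j) ^ 4 ≤ (s.card : ℝ) ^ 3 * ∑ j ∈ s, f j ^ 4 := calc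
  (∑ j ∈ s, f j) ^ 4 = ((∑ j ∈ s, f j) ^ 2) ^ 2 := by ring
  _ ≤ (s.card * ∑ j ∈ s, f j ^ 2) ^ 2 := by gcongr; exact sq_sum_le_card_mul_sum_sq
  _ = (s.card : ℝ) ^ 2 * (∑ j ∈ s, f j ^ 2) ^ 2 := by ring
  _ ≤ (s.card : ℝ) ^ 2 * (s.card * ∑ j ∈ s, (f j ^ 2) ^ 2) := by
    gcongr; exact sq_sum_le_card_mul_sum_sq
  _ = (s.card : ℝ) ^ 3 * ∑ j ∈ s, f j ^ 4 := by simp only [← pow_mul]; ring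

theorem DyadicInterval.isBddIntegrable_indicator_const (I : DyadicInterval) (a : ℝ) :
    IsBddIntegrable volume (I.toSet.indicator fun _ => a) :=
  ⟨I.integrable_indicator_const a, (memLp_top_const a).indicator I.measurableSet_toSet⟩

theorem Quartile.isBddIntegrable_wp (P : Quartile) (i : Fin 4) :
    IsBddIntegrable volume (P.wp i) := by
  refine (P.I.isBddIntegrable_indicator_const (1 + P.I.len⁻¹)).mono
    (P.subtile i).measurable_wp.aestronglyMeasurable fun x => le_abs.2 (Or.inl ?_)
  by_cases hx : x ∈ P.I.toSet
  · have hsq := P.wp_sq i x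
    rw [indicator_of_mem hx] at hsq ⊢
    nlinarith [sq_abs (P.wp i x), abs_nonneg (P.wp i x), inv_pos.2 P.I.len_pos]
  · simp [Quartile.wp_of_notMem hx, hx]

/-! ### Wave packet sums and square functions -/

/-- The wave packet sum `∑_{P ∈ R} c_P φ_{P_{i+1}}`. -/
noncomputable def waveSum (i : Fin 4) (c : Quartile → ℝ) (R : Finset Quartile) (x : ℝ) : ℝ :=
  ∑ P ∈ R, c P * P.wp i x

/-- The squared square function `∑_{P ∈ R} c_P² |I_P|⁻¹ 1_{I_P}` of a wave packet sum; it is the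
same for all four positions of the tile in its quartile. -/
noncomputable def squareSum (c : Quartile → ℝ) (R : Finset Quartile) (x : ℝ) : ℝ :=
  ∑ P ∈ R, P.I.toSet.indicator (fun _ => c P ^ 2 / P.I.len) x

section WaveSum

variable {i : Fin 4} {c : Quartile → ℝ} {R S : Finset Quartile} {x y : ℝ}

theorem isBddIntegrable_waveSum (i : Fin 4) (c : Quartile → ℝ) (R : Finset Quartile) :
    IsBddIntegrable volume (waveSum i c R) :=
  IsBddIntegrable.sum fun P _ => (P.isBddIntegrable_wp i).const_mul (c P)

theorem isBddIntegrable_squareSum (c : Quartile → ℝ) (R : Finset Quartile) :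
    IsBddIntegrable volume (squareSum c R) :=
  IsBddIntegrable.sum fun P _ => P.I.isBddIntegrable_indicator_const _

theorem squareSum_term_nonneg (c : Quartile → ℝ) (P : Quartile) (x : ℝ) :
    0 ≤ P.I.toSet.indicator (fun _ => c P ^ 2 / P.I.len) x :=
  indicator_nonneg (fun _ _ => div_nonneg (sq_nonneg _) P.I.len_pos.le) x

theorem squareSum_nonneg (c : Quartile → ℝ) (R : Finset Quartile) (x : ℝ) : 0 ≤ squareSum c R x :=
  Finset.sum_nonneg fun P _ => squareSum_term_nonneg c P x

theorem squareSum_mono (h : R ⊆ S) (x : ℝ) : squareSum c R x ≤ squareSum c S x :=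
  Finset.sum_le_sum_of_subset_of_nonneg h fun P _ _ => squareSum_term_nonneg c P x

theorem integral_squareSum (c : Quartile → ℝ) (R : Finset Quartile) :
    ∫ x, squareSum c R x = ∑ P ∈ R, c P ^ 2 := by
  unfold squareSum
  rw [integral_finsetSum _ fun P _ => P.I.integrable_indicator_const _]
  refine Finset.sum_congr rfl fun P _ => ?_
  rw [P.I.integral_indicator_const, mul_div_cancel₀ _ P.I.len_pos.ne']

theorem waveSum_insert {P : Quartile} (h : P ∉ R) (x : ℝ) :
    waveSum i c (insert P R) x = waveSum i c R x + c P * P.wp i x := by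
  rw [waveSum, Finset.sum_insert h, add_comm]; rfl

theorem squareSum_insert (i : Fin 4) {P : Quartile} (h : P ∉ R) (x : ℝ) :
    squareSum c (insert P R) x = squareSum c R x + c P ^ 2 * P.wp i x ^ 2 := by
  rw [squareSum, Finset.sum_insert h, add_comm, P.wp_sq, ← indicator_const_mul]; rfl

theorem integral_waveSum_mul_wp {P : Quartile}
    (h : ∀ Q ∈ R, Disjoint (Q.subtileSet i) (P.subtileSet i)) :
    ∫ x, waveSum i c R x * P.wp i x = 0 := by
  simp only [waveSum, Finset.sum_mul]
  rw [integral_finsetSum _ fun Q _ =>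
    (((Q.isBddIntegrable_wp i).const_mul (c Q)).mul (P.isBddIntegrable_wp i)).integrable]
  refine Finset.sum_eq_zero fun Q hQ => ?_
  simp only [mul_assoc]
  rw [integral_const_mul, Quartile.integral_wp_mul_wp_of_disjoint (h Q hQ), mul_zero]

theorem integral_waveSum_sq (h : (R : Set Quartile).PairwiseDisjoint fun P => P.subtileSet i) :
    ∫ x, waveSum i c R x ^ 2 = ∑ P ∈ R, c P ^ 2 := by
  have hself : ∀ P ∈ R, ∫ x, waveSum i c R x * P.wp i x = c P := by
    intro P hP
    have hw := P.isBddIntegrable_wp i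
    conv_lhs => rw [← Finset.insert_erase hP]
    simp only [waveSum_insert (Finset.notMem_erase P R), add_mul, mul_assoc, ← sq]
    rw [integral_add ((isBddIntegrable_waveSum i c _).mul hw).integrable
        ((hw.pow two_ne_zero).const_mul _).integrable, integral_const_mul, P.integral_wp_sq,
      integral_waveSum_mul_wp fun Q hQ => h (Finset.mem_of_mem_erase hQ) hP
        (Finset.ne_of_mem_erase hQ), zero_add, mul_one]
  have hsum : ∀ x, waveSum i c R x ^ 2 = ∑ P ∈ R, c P * (waveSum i c R x * P.wp i x) := fun x => by
    rw [sq]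
    nth_rw 2 [waveSum]
    rw [Finset.mul_sum]
    exact Finset.sum_congr rfl fun P _ => by ring
  simp only [hsum]
  rw [integral_finsetSum _ fun P _ => (((isBddIntegrable_waveSum i c R).mul
    (P.isBddIntegrable_wp i)).const_mul (c P)).integrable]
  exact Finset.sum_congr rfl fun P hP => by rw [integral_const_mul, hself P hP, sq]

theorem squareSum_eq_of_mem {I : DyadicInterval} (hR : ∀ P ∈ R, I.k ≤ P.I.k) (hx : x ∈ I.toSet)
    (hy : y ∈ I.toSet) : squareSum c R x = squareSum c R y := by
  refine Finset.sum_congr rfl fun P hP => ?_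
  have hiff : x ∈ P.I.toSet ↔ y ∈ P.I.toSet :=
    ⟨fun h => toSet_subset_toSet_of_mem hx h (hR P hP) hy,
      fun h => toSet_subset_toSet_of_mem hy h (hR P hP) hx⟩
  by_cases h : y ∈ P.I.toSet <;> simp [h, hiff]

/-- On `I` all wave packets of the tree are multiples of one and the same Walsh function. -/
theorem waveSum_sq_eq_of_mem {I : DyadicInterval} {ξ : ℝ} (hξ : ∀ P ∈ R, ξ ∈ P.ω.toSet)
    (hR : ∀ P ∈ R, Disjoint I.toSet P.I.toSet ∨ I.k + 2 ≤ P.I.k) (hx : x ∈ I.toSet)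
    (hy : y ∈ I.toSet) : waveSum i c R x ^ 2 = waveSum i c R y ^ 2 := by
  have hmul : ∀ P ∈ R, ∃ τ : ℝ, ∀ z ∈ I.toSet, P.wp i z = τ * I.walsh (topFreq I ξ).n z := by
    intro P hP
    obtain hdisj | hk := hR P hP
    · exact ⟨0, fun z hz => by
        rw [Quartile.wp_of_notMem (disjoint_left.1 hdisj hz), zero_mul]⟩
    · exact P.exists_wp_eq_mul_walsh_topFreq i hk (hξ P hP)
  choose! τ hτ using hmul
  have hsq : ∀ z ∈ I.toSet, waveSum i c R z ^ 2 = (∑ P ∈ R, c P * τ P) ^ 2 := by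
    intro z hz
    have hsum : waveSum i c R z = (∑ P ∈ R, c P * τ P) * I.walsh (topFreq I ξ).n z := by
      rw [waveSum, Finset.sum_mul]
      exact Finset.sum_congr rfl fun P hP => by rw [hτ P hP z hz, mul_assoc]
    rw [hsum, mul_pow, walsh_sq, mul_one]
  rw [hsq x hx, hsq y hy]

theorem Quartile.disjoint_or_k_add_two_le {P Q : Quartile} {ξ : ℝ} (hP : ξ ∈ P.ω.toSet)
    (hQ : ξ ∈ Q.ω.toSet) (hpar : P.I.k % 2 = Q.I.k % 2) (hk : P.I.k ≤ Q.I.k) (hne : P ≠ Q) :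
    Disjoint P.I.toSet Q.I.toSet ∨ P.I.k + 2 ≤ Q.I.k := by
  refine or_iff_not_imp_left.2 fun hmeet => ?_
  obtain ⟨z, hzP, hzQ⟩ := not_disjoint_iff.1 hmeet
  have hkne : P.I.k ≠ Q.I.k := fun h => hne (Quartile.eq_of_mem_of_mem h hzP hzQ hP hQ)
  omega

/-- The finest wave packet `ψ` of the tree is orthogonal to the sum `F` of the others, and both `F²`
and the square function of `F` are constant on its support, so `F + c ψ` can be expanded. -/
theorem integral_waveSum_pow_four_le_of_tree {ξ : ℝ} {b : ℤ} (hξ : ∀ P ∈ R, ξ ∈ P.ω.toSet)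
    (hpar : ∀ P ∈ R, P.I.k % 2 = b)
    (hd : (R : Set Quartile).PairwiseDisjoint fun P => P.subtileSet i) :
    ∫ x, waveSum i c R x ^ 4 ≤ 6 * ∫ x, waveSum i c R x ^ 2 * squareSum c R x := by
  induction R using Finset.induction_on_max_value (fun P : Quartile => -P.I.k) with
  | empty => simp [waveSum]
  | insert a s ha hmax ih =>
  have hs : ∀ P ∈ s, P ∈ insert a s := fun P => Finset.mem_insert_of_mem
  have has : a ∈ insert a s := Finset.mem_insert_self a s
  specialize ih (fun P hP => hξ P (hs P hP)) (fun P hP => hpar P (hs P hP)) (hd.subset (by simp))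
  have hk : ∀ P ∈ s, a.I.k ≤ P.I.k := fun P hP => neg_le_neg_iff.1 (hmax P hP)
  have hsep : ∀ P ∈ s, Disjoint a.I.toSet P.I.toSet ∨ a.I.k + 2 ≤ P.I.k := fun P hP =>
    Quartile.disjoint_or_k_add_two_le (hξ a has) (hξ P (hs P hP))
      ((hpar a has).trans (hpar P (hs P hP)).symm) (hk P hP) fun h => ha (h ▸ hP)
  have hFw : ∀ x, waveSum i c s x ^ 2 * a.wp i x = waveSum i c s a.I.lo ^ 2 * a.wp i x := by
    intro x
    by_cases hx : x ∈ a.I.toSet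
    · rw [waveSum_sq_eq_of_mem (fun P hP => hξ P (hs P hP)) hsep hx a.I.lo_mem_toSet]
    · simp [Quartile.wp_of_notMem hx]
  have hSw : ∀ x, squareSum c s x * a.wp i x = squareSum c s a.I.lo * a.wp i x := by
    intro x
    by_cases hx : x ∈ a.I.toSet
    · rw [squareSum_eq_of_mem hk hx a.I.lo_mem_toSet]
    · simp [Quartile.wp_of_notMem hx]
  have horth : ∫ x, waveSum i c s x * a.wp i x = 0 := integral_waveSum_mul_wp fun P hP =>
    hd (hs P hP) has fun h => ha (h ▸ hP)
  have hF := isBddIntegrable_waveSum i c s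
  have hw := a.isBddIntegrable_wp i
  simp only [waveSum_insert ha, squareSum_insert i ha]
  rw [hF.integral_add_mul_pow_four hw hFw (a.wp_pow_three i) horth,
    hF.integral_add_mul_sq_mul_add (isBddIntegrable_squareSum c s) hw hSw (a.wp_pow_three i) horth]
  have hSw2 : 0 ≤ c a ^ 2 * ∫ x, squareSum c s x * a.wp i x ^ 2 :=
    mul_nonneg (sq_nonneg _) (integral_nonneg fun x =>
      mul_nonneg (squareSum_nonneg c s x) (sq_nonneg _))
  have hw4 : 0 ≤ c a ^ 4 * ∫ x, a.wp i x ^ 4 :=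
    mul_nonneg (by positivity) (integral_nonneg fun x => by positivity)
  linarith

end WaveSum

/-! ### Forests -/

/-- A forest: trees whose scales all have parity `b`, with pairwise disjoint tiles `P_{i+1}` and
with at most `N` tops over every point. -/
structure IsForest (i : Fin 4) (b : ℤ) (N : ℕ) (𝒰 : Finset ToppedTree) : Prop where
  exists_isBelow : ∀ τ ∈ 𝒰, ∃ ξ, ∀ P ∈ τ.quartiles, P.IsBelow ξ τ.top
  k_mod_two : ∀ τ ∈ 𝒰, ∀ P ∈ τ.quartiles, P.I.k % 2 = b
  disjoint_subtileSet : (𝒰.biUnion ToppedTree.quartiles : Set Quartile).PairwiseDisjoint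
    fun P => P.subtileSet i
  disjoint_quartiles : (𝒰 : Set ToppedTree).PairwiseDisjoint ToppedTree.quartiles
  overlapCount_le : ∀ x, overlapCount ToppedTree.top 𝒰 x ≤ N

namespace IsForest

variable {i : Fin 4} {b : ℤ} {N : ℕ} {𝒰 : Finset ToppedTree} {c : Quartile → ℝ}
  {R : Finset Quartile}

theorem sum_inter_quartiles (h : IsForest i b N 𝒰) (hR : R ⊆ 𝒰.biUnion ToppedTree.quartiles)
    (g : Quartile → ℝ) : ∑ τ ∈ 𝒰, ∑ P ∈ R ∩ τ.quartiles, g P = ∑ P ∈ R, g P := by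
  conv_rhs => rw [← Finset.inter_eq_left.2 hR, Finset.inter_biUnion]
  refine (Finset.sum_biUnion fun τ hτ σ hσ hne => ?_).symm
  exact (h.disjoint_quartiles hτ hσ hne).mono Finset.inter_subset_right Finset.inter_subset_right

theorem waveSum_pow_four_le (h : IsForest i b N 𝒰) (hR : R ⊆ 𝒰.biUnion ToppedTree.quartiles)
    (x : ℝ) :
    waveSum i c R x ^ 4 ≤ N ^ 3 * ∑ τ ∈ 𝒰, waveSum i c (R ∩ τ.quartiles) x ^ 4 := by
  classical
  set 𝒱 := 𝒰.filter fun τ => x ∈ τ.top.toSet with h𝒱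
  have hzero : ∀ τ ∈ 𝒰, τ ∉ 𝒱 → waveSum i c (R ∩ τ.quartiles) x = 0 := by
    intro τ hτ hτ𝒱
    obtain ⟨ξ, hbelow⟩ := h.exists_isBelow τ hτ
    refine Finset.sum_eq_zero fun P hP => ?_
    rw [Quartile.wp_of_notMem fun hx => hτ𝒱 (Finset.mem_filter.2
      ⟨hτ, (hbelow P (Finset.mem_inter.1 hP).2).1 hx⟩), mul_zero]
  have hcard : (𝒱.card : ℝ) ≤ N := Nat.cast_le.2 <| by
    have := h.overlapCount_le x
    rwa [overlapCount, Finset.filter_congr_decidable] at this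
  calc waveSum i c R x ^ 4 = (∑ τ ∈ 𝒱, waveSum i c (R ∩ τ.quartiles) x) ^ 4 := by
        rw [Finset.sum_subset (Finset.filter_subset _ _) hzero, waveSum,
          ← h.sum_inter_quartiles hR]
        rfl
    _ ≤ (𝒱.card : ℝ) ^ 3 * ∑ τ ∈ 𝒱, waveSum i c (R ∩ τ.quartiles) x ^ 4 := sum_pow_four_le _ _
    _ ≤ N ^ 3 * ∑ τ ∈ 𝒰, waveSum i c (R ∩ τ.quartiles) x ^ 4 := by
        gcongr
        exact Finset.filter_subset _ _

theorem integral_waveSum_inter_pow_four_le (h : IsForest i b N 𝒰)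
    (hR : R ⊆ 𝒰.biUnion ToppedTree.quartiles) {W : ℝ} (hW : ∀ x, squareSum c R x ≤ W)
    {τ : ToppedTree} (hτ : τ ∈ 𝒰) :
    ∫ x, waveSum i c (R ∩ τ.quartiles) x ^ 4 ≤ 6 * W * ∑ P ∈ R ∩ τ.quartiles, c P ^ 2 := by
  obtain ⟨ξ, hbelow⟩ := h.exists_isBelow τ hτ
  have hmem : ∀ P ∈ R ∩ τ.quartiles, P ∈ τ.quartiles := fun P hP => (Finset.mem_inter.1 hP).2
  have hd : ((R ∩ τ.quartiles : Finset Quartile) : Set Quartile).PairwiseDisjoint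
      fun P => P.subtileSet i :=
    h.disjoint_subtileSet.subset (Finset.coe_subset.2 (Finset.inter_subset_left.trans hR))
  have hF := (isBddIntegrable_waveSum i c (R ∩ τ.quartiles)).pow two_ne_zero
  calc ∫ x, waveSum i c (R ∩ τ.quartiles) x ^ 4
      ≤ 6 * ∫ x, waveSum i c (R ∩ τ.quartiles) x ^ 2 * squareSum c (R ∩ τ.quartiles) x :=
        integral_waveSum_pow_four_le_of_tree (fun P hP => (hbelow P (hmem P hP)).2)
          (fun P hP => h.k_mod_two τ hτ P (hmem P hP)) hd
    _ ≤ 6 * ∫ x, W * waveSum i c (R ∩ τ.quartiles) x ^ 2 := by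
        refine mul_le_mul_of_nonneg_left (integral_mono
          (hF.mul (isBddIntegrable_squareSum c _)).integrable (hF.const_mul W).integrable
          fun x => ?_) (by norm_num)
        dsimp only
        rw [mul_comm W]
        gcongr
        exact (squareSum_mono Finset.inter_subset_left x).trans (hW x)
    _ = 6 * W * ∑ P ∈ R ∩ τ.quartiles, c P ^ 2 := by
        rw [integral_const_mul, integral_waveSum_sq hd, mul_assoc]

theorem integral_waveSum_pow_four_le (h : IsForest i b N 𝒰)
    (hR : R ⊆ 𝒰.biUnion ToppedTree.quartiles) {W : ℝ} (hW : ∀ x, squareSum c R x ≤ W) :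
    ∫ x, waveSum i c R x ^ 4 ≤ N ^ 3 * (6 * W) * ∑ P ∈ R, c P ^ 2 := by
  have hbdd : ∀ S, IsBddIntegrable volume fun x => waveSum i c S x ^ 4 := fun S =>
    (isBddIntegrable_waveSum i c S).pow four_ne_zero
  calc ∫ x, waveSum i c R x ^ 4
      ≤ ∫ x, (N : ℝ) ^ 3 * ∑ τ ∈ 𝒰, waveSum i c (R ∩ τ.quartiles) x ^ 4 :=
        integral_mono (hbdd R).integrable
          ((IsBddIntegrable.sum fun τ _ => hbdd (R ∩ τ.quartiles)).const_mul _).integrable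
          fun x => h.waveSum_pow_four_le hR x
    _ = (N : ℝ) ^ 3 * ∑ τ ∈ 𝒰, ∫ x, waveSum i c (R ∩ τ.quartiles) x ^ 4 := by
        rw [integral_const_mul, integral_finsetSum _ fun τ _ => (hbdd _).integrable]
    _ ≤ (N : ℝ) ^ 3 * ∑ τ ∈ 𝒰, 6 * W * ∑ P ∈ R ∩ τ.quartiles, c P ^ 2 := by
        gcongr with τ hτ
        exact h.integral_waveSum_inter_pow_four_le hR hW hτ
    _ = N ^ 3 * (6 * W) * ∑ P ∈ R, c P ^ 2 := by
        rw [← Finset.mul_sum, h.sum_inter_quartiles hR]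
        ring

end IsForest

/-! ### Chaining along the square function -/

theorem two_zpow_mul_floor_le (s : ℝ) (l : ℤ) : 2 ^ l * (⌊s / 2 ^ l⌋ : ℝ) ≤ s := by
  have h := Int.floor_le (s / 2 ^ l)
  rwa [le_div_iff₀' (by positivity)] at h

theorem lt_two_zpow_mul_floor_add_one (s : ℝ) (l : ℤ) :
    s < 2 ^ l * ((⌊s / 2 ^ l⌋ : ℝ) + 1) := by
  have h := Int.lt_floor_add_one (s / 2 ^ l)
  rwa [div_lt_iff₀' (by positivity)] at h

/-- The part of the squared square function coming from the scales above `K`. As `K` decreases it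
increases, and it serves as the clock along which partial sums of wave packets are chained. -/
noncomputable def clock (c : Quartile → ℝ) (R : Finset Quartile) (x : ℝ) (K : ℤ) : ℝ :=
  squareSum c (R.filter fun P => K < P.I.k) x

/-- The quartiles whose clock interval starts in the left half of `[2^l u, 2^l (u+1))` and ends
inside `[2^l u, 2^l (u+1))`; the clock interval of `P` runs from the clock at scale `|I_P|` to the
clock at the next smaller scale. -/
noncomputable def cell (c : Quartile → ℝ) (R : Finset Quartile) (l u : ℤ) : Finset Quartile :=
  R.filter fun P => 2 ^ l * (u : ℝ) ≤ clock c R P.I.lo P.I.k ∧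
    clock c R P.I.lo P.I.k < 2 ^ l * (u : ℝ) + 2 ^ (l - 1) ∧
    clock c R P.I.lo (P.I.k - 1) < 2 ^ l * ((u : ℝ) + 1)

/-- The increment of the chaining between the multiples of `2^l` and of `2^(l-1)` preceding a clock
time in `[2^(l-1) v, 2^(l-1) (v+1))`. -/
noncomputable def chainIncrement (i : Fin 4) (c : Quartile → ℝ) (R : Finset Quartile) (x : ℝ)
    (l v : ℤ) : ℝ :=
  if v % 2 = 1 then waveSum i c (cell c R l (v / 2)) x else 0

/-- The sum of all wave packets whose clock interval starts before time `s`. -/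
noncomputable def waveSumBefore (i : Fin 4) (c : Quartile → ℝ) (R : Finset Quartile) (x s : ℝ) :
    ℝ :=
  waveSum i c (R.filter fun P => clock c R x P.I.k < s) x

section Clock

variable {i : Fin 4} {c : Quartile → ℝ} {R S : Finset Quartile} {P : Quartile} {x : ℝ}
  {K K' l u : ℤ}

theorem clock_nonneg (c : Quartile → ℝ) (R : Finset Quartile) (x : ℝ) (K : ℤ) : 0 ≤ clock c R x K :=
  squareSum_nonneg _ _ _

theorem clock_le_squareSum (c : Quartile → ℝ) (R : Finset Quartile) (x : ℝ) (K : ℤ) :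
    clock c R x K ≤ squareSum c R x :=
  squareSum_mono (Finset.filter_subset _ _) x

theorem clock_antitone (c : Quartile → ℝ) (R : Finset Quartile) (x : ℝ) :
    Antitone (clock c R x) := fun _ _ h =>
  squareSum_mono (Finset.monotone_filter_right R fun _ _ hP => h.trans_lt hP) x

theorem clock_eq_of_mem (hx : x ∈ P.I.toSet) (hK : P.I.k - 1 ≤ K) :
    clock c R x K = clock c R P.I.lo K :=
  squareSum_eq_of_mem (fun Q hQ => by have := (Finset.mem_filter.1 hQ).2; omega) hx
    P.I.lo_mem_toSet

theorem clock_add_squareSum_le (hS : S ⊆ R) (x : ℝ) (hK : ∀ P ∈ S, K < P.I.k ∧ P.I.k ≤ K')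
    (hKK' : K ≤ K') : clock c R x K' + squareSum c S x ≤ clock c R x K := by
  have hdisj : Disjoint (R.filter fun P => K' < P.I.k) S :=
    Finset.disjoint_left.2 fun P hP hPS => ((Finset.mem_filter.1 hP).2.trans_le (hK P hPS).2).false
  rw [clock, squareSum, squareSum, ← Finset.sum_union hdisj]
  refine squareSum_mono (Finset.union_subset ?_ fun P hP => ?_) x
  · exact Finset.monotone_filter_right R fun _ _ hP => hKK'.trans_lt hP
  · exact Finset.mem_filter.2 ⟨hS hP, (hK P hP).1⟩

theorem clock_add_le_clock (hP : P ∈ R) (hx : x ∈ P.I.toSet) (hK : K < P.I.k) :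
    clock c R x P.I.k + c P ^ 2 / P.I.len ≤ clock c R x K := by
  have h := clock_add_squareSum_le (c := c) (Finset.singleton_subset_iff.2 hP) x (K := K)
    (K' := P.I.k) (by simpa using hK) hK.le
  simpa [squareSum, hx] using h

theorem mem_cell : P ∈ cell c R l u ↔ P ∈ R ∧ 2 ^ l * (u : ℝ) ≤ clock c R P.I.lo P.I.k ∧
    clock c R P.I.lo P.I.k < 2 ^ l * (u : ℝ) + 2 ^ (l - 1) ∧
    clock c R P.I.lo (P.I.k - 1) < 2 ^ l * ((u : ℝ) + 1) :=
  Finset.mem_filter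

theorem cell_subset (c : Quartile → ℝ) (R : Finset Quartile) (l u : ℤ) : cell c R l u ⊆ R :=
  Finset.filter_subset _ _

theorem squareSum_cell_le (c : Quartile → ℝ) (R : Finset Quartile) (l u : ℤ) (x : ℝ) :
    squareSum c (cell c R l u) x ≤ 2 ^ l := by
  classical
  set S := (cell c R l u).filter fun P => x ∈ P.I.toSet
  have hcell : squareSum c (cell c R l u) x = squareSum c S x := by
    refine (Finset.sum_subset (Finset.filter_subset _ _) fun P hP hPS => ?_).symm
    exact indicator_of_notMem (fun hx => hPS (Finset.mem_filter.2 ⟨hP, hx⟩)) _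
  rw [hcell]
  obtain hempty | hne := S.eq_empty_or_nonempty
  · rw [hempty, squareSum, Finset.sum_empty]
    positivity
  obtain ⟨P, hP, hPmin⟩ := Finset.exists_min_image S (fun P => P.I.k) hne
  obtain ⟨Q, hQ, hQmax⟩ := Finset.exists_max_image S (fun P => P.I.k) hne
  obtain ⟨hPcell, hPx⟩ := Finset.mem_filter.1 hP
  obtain ⟨hQcell, hQx⟩ := Finset.mem_filter.1 hQ
  have hclock : clock c R x Q.I.k + squareSum c S x ≤ clock c R x (P.I.k - 1) :=
    clock_add_squareSum_le ((Finset.filter_subset _ _).trans (cell_subset c R l u)) x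
      (fun T hT => ⟨by have := hPmin T hT; omega, hQmax T hT⟩) (by have := hPmin Q hQ; omega)
  rw [clock_eq_of_mem hPx le_rfl, clock_eq_of_mem hQx (by omega)] at hclock
  have hend := (mem_cell.1 hPcell).2.2.2
  have hstart := (mem_cell.1 hQcell).2.1
  linarith

theorem pairwiseDisjoint_cell (c : Quartile → ℝ) (R : Finset Quartile) (l : ℤ) (s : Set ℤ) :
    s.PairwiseDisjoint (cell c R l) := by
  have hlt : ∀ u u' : ℤ, u < u' → Disjoint (cell c R l u) (cell c R l u') := by
    intro u u' huu'
    refine Finset.disjoint_left.2 fun P hP hP' => ?_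
    have hmul : (2 : ℝ) ^ l * (u + 1) ≤ 2 ^ l * u' := by gcongr; exact_mod_cast huu'
    have hpow : (2 : ℝ) ^ (l - 1) ≤ 2 ^ l := zpow_le_zpow_right₀ one_le_two (by omega)
    linarith [(mem_cell.1 hP).2.2.1, (mem_cell.1 hP').2.1]
  intro u _ u' _ h
  exact (lt_or_gt_of_ne h).elim (hlt u u') fun h => (hlt u' u h).symm

theorem waveSum_filter (p : Quartile → Prop) [DecidablePred p] :
    waveSum i c (R.filter p) x = ∑ P ∈ R, if p P then c P * P.wp i x else 0 :=
  Finset.sum_filter _ _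

theorem waveSumBefore_zero (i : Fin 4) (c : Quartile → ℝ) (R : Finset Quartile) (x : ℝ) :
    waveSumBefore i c R x 0 = 0 := by
  rw [waveSumBefore, Finset.filter_false_of_mem fun P _ => not_lt.2 (clock_nonneg c R x P.I.k)]
  exact Finset.sum_empty

theorem waveSumBefore_midpoint (hmid : 2 ^ l * (u : ℝ) + 2 ^ (l - 1) ≤ clock c R x K)
    (hend : clock c R x K < 2 ^ l * ((u : ℝ) + 1)) :
    waveSumBefore i c R x (2 ^ l * (u : ℝ) + 2 ^ (l - 1))
      = waveSumBefore i c R x (2 ^ l * (u : ℝ)) + waveSum i c (cell c R l u) x := by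
  simp only [waveSumBefore, cell, waveSum_filter, ← Finset.sum_add_distrib]
  refine Finset.sum_congr rfl fun P _ => ?_
  by_cases hx : x ∈ P.I.toSet
  swap
  · simp [Quartile.wp_of_notMem hx]
  rw [← clock_eq_of_mem hx (by omega), ← clock_eq_of_mem hx le_rfl]
  have hpos : (0 : ℝ) < 2 ^ (l - 1) := by positivity
  obtain hbefore | hstart := lt_or_ge (clock c R x P.I.k) (2 ^ l * u)
  · rw [if_pos (by linarith), if_pos hbefore, if_neg fun h => hbefore.not_ge h.1, add_zero]
  rw [if_neg hstart.not_gt, zero_add]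
  refine if_congr ⟨fun hlt => ⟨hstart, hlt, ?_⟩, fun h => h.2.1⟩ rfl rfl
  have hK : K < P.I.k := (clock_antitone c R x).reflect_lt (hlt.trans_le hmid)
  exact (clock_antitone c R x (by omega)).trans_lt hend

theorem waveSumBefore_floor_sub_one (i : Fin 4) (c : Quartile → ℝ) (R : Finset Quartile) (x : ℝ)
    (K l : ℤ) :
    waveSumBefore i c R x (2 ^ (l - 1) * (⌊clock c R x K / 2 ^ (l - 1)⌋ : ℝ))
      = waveSumBefore i c R x (2 ^ l * (⌊clock c R x K / 2 ^ l⌋ : ℝ))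
        + chainIncrement i c R x l ⌊clock c R x K / 2 ^ (l - 1)⌋ := by
  set v := ⌊clock c R x K / 2 ^ (l - 1)⌋
  have hu : ⌊clock c R x K / 2 ^ l⌋ = v / 2 := by
    have h := floor_div_two_zpow_add_natCast (clock c R x K) (l - 1) 1
    simpa using h
  have hl : (2 : ℝ) ^ l = 2 * 2 ^ (l - 1) := by
    rw [← zpow_one_add₀ two_ne_zero, add_sub_cancel]
  rw [hu, chainIncrement]
  have hdiv : (2 : ℝ) * (v / 2 : ℤ) + (v % 2 : ℤ) = v := by exact_mod_cast Int.mul_ediv_add_emod v 2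
  obtain heven | hodd := Int.emod_two_eq_zero_or_one v
  · rw [if_neg (by omega), add_zero, ← hdiv, heven, hl]
    congr 1
    push_cast
    ring
  · have hmid : (2 : ℝ) ^ (l - 1) * v = 2 ^ l * (v / 2 : ℤ) + 2 ^ (l - 1) := by
      rw [← hdiv, hodd, hl]; push_cast; ring
    have hend : (2 : ℝ) ^ (l - 1) * (v + 1) = 2 ^ l * ((v / 2 : ℤ) + 1) := by
      rw [← hdiv, hodd, hl]; push_cast; ring
    rw [if_pos hodd, hmid]
    exact waveSumBefore_midpoint (hmid ▸ two_zpow_mul_floor_le _ _)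
      (hend ▸ lt_two_zpow_mul_floor_add_one _ _)

theorem waveSum_filter_eq_waveSumBefore {lb : ℤ}
    (hlb : ∀ P ∈ R, c P ≠ 0 → (2 : ℝ) ^ lb ≤ c P ^ 2 / P.I.len) (x : ℝ) (K : ℤ) :
    waveSum i c (R.filter fun P => K < P.I.k) x
      = waveSumBefore i c R x (2 ^ lb * (⌊clock c R x K / 2 ^ lb⌋ : ℝ)) := by
  rw [waveSumBefore, waveSum_filter, waveSum_filter]
  refine Finset.sum_congr rfl fun P hP => ?_
  by_cases hc : c P = 0
  · simp [hc]
  by_cases hx : x ∈ P.I.toSet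
  swap
  · simp [Quartile.wp_of_notMem hx]
  refine if_congr ⟨fun hK => ?_, fun hlt => ?_⟩ rfl rfl
  · have hstep := clock_add_le_clock (c := c) hP hx hK
    have hfloor := lt_two_zpow_mul_floor_add_one (clock c R x K) lb
    linarith [hlb P hP hc]
  · exact (clock_antitone c R x).reflect_lt (hlt.trans_le (two_zpow_mul_floor_le _ _))

theorem waveSum_filter_eq_sum_chainIncrement {lb : ℤ} {m : ℕ}
    (hlb : ∀ P ∈ R, c P ≠ 0 → (2 : ℝ) ^ lb ≤ c P ^ 2 / P.I.len)
    (htop : squareSum c R x < 2 ^ (lb + m)) (K : ℤ) :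
    waveSum i c (R.filter fun P => K < P.I.k) x = ∑ j ∈ Finset.range m,
      chainIncrement i c R x (lb + 1 + j) ⌊clock c R x K / 2 ^ (lb + j)⌋ := by
  have hchain : ∀ m : ℕ, waveSumBefore i c R x (2 ^ lb * (⌊clock c R x K / 2 ^ lb⌋ : ℝ))
      = waveSumBefore i c R x (2 ^ (lb + m) * (⌊clock c R x K / 2 ^ (lb + m)⌋ : ℝ))
        + ∑ j ∈ Finset.range m,
          chainIncrement i c R x (lb + 1 + j) ⌊clock c R x K / 2 ^ (lb + j)⌋ := by
    intro m
    induction m with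
    | zero => simp
    | succ m ih =>
      have hstep := waveSumBefore_floor_sub_one i c R x K (lb + 1 + m)
      rw [show lb + 1 + (m : ℤ) - 1 = lb + m by ring] at hstep
      rw [ih, hstep, Finset.sum_range_succ,
        show lb + ((m + 1 : ℕ) : ℤ) = lb + 1 + m by push_cast; ring]
      ring
  have hfloor : ⌊clock c R x K / 2 ^ (lb + m)⌋ = 0 := by
    refine Int.floor_eq_zero_iff.2 ⟨div_nonneg (clock_nonneg _ _ _ _) (by positivity), ?_⟩
    rw [div_lt_one (by positivity)]
    exact (clock_le_squareSum c R x K).trans_lt htop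
  rw [waveSum_filter_eq_waveSumBefore hlb, hchain m, hfloor, Int.cast_zero, mul_zero,
    waveSumBefore_zero, zero_add]

end Clock

/-! ### The linearized variation sum -/

theorem eq_of_mem_block {kk : ℤ → ℤ} (hkk : StrictMono kk) {k m m' : ℤ}
    (hm : kk (m - 1) ≤ k ∧ k < kk m) (hm' : kk (m' - 1) ≤ k ∧ k < kk m') : m = m' := by
  have h := hkk.lt_iff_lt.1 (hm.1.trans_lt hm'.2)
  have h' := hkk.lt_iff_lt.1 (hm'.1.trans_lt hm.2)
  omega

theorem linCoeff_of_mem_block {kk : ℤ → ℤ} (hkk : StrictMono kk) (a : ℤ → ℝ) {k m : ℤ}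
    (hm : kk (m - 1) ≤ k ∧ k < kk m) : linCoeff kk a k = a m := by
  have hex : ∃ m : ℤ, kk (m - 1) ≤ k ∧ k < kk m := ⟨m, hm⟩
  rw [linCoeff, dif_pos hex, eq_of_mem_block hkk hex.choose_spec hm]

theorem exists_forall_linCoeff_eq_sum {kk : ℤ → ℤ} (hkk : StrictMono kk) (a : ℤ → ℝ)
    (s : Finset ℤ) : ∃ M : Finset ℤ, ∀ k ∈ s,
      linCoeff kk a k = ∑ m ∈ M, if kk (m - 1) ≤ k ∧ k < kk m then a m else 0 := by
  have hblock : ∀ k : ℤ, ∃ m' : ℤ, ∀ m : ℤ, kk (m - 1) ≤ k ∧ k < kk m → m' = m := fun k => by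
    by_cases h : ∃ m' : ℤ, kk (m' - 1) ≤ k ∧ k < kk m'
    · exact ⟨h.choose, fun m => eq_of_mem_block hkk h.choose_spec⟩
    · exact ⟨0, fun m hm => (h ⟨m, hm⟩).elim⟩
  choose g hg using hblock
  refine ⟨s.image g, fun k hk => ?_⟩
  by_cases h : ∃ m : ℤ, kk (m - 1) ≤ k ∧ k < kk m
  · obtain ⟨m, hm⟩ := h
    rw [linCoeff_of_mem_block hkk a hm, Finset.sum_eq_single_of_mem m
      (Finset.mem_image.2 ⟨k, hk, hg k m hm⟩) fun m' _ hne => if_neg fun hm' =>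
        hne (eq_of_mem_block hkk hm' hm), if_pos hm]
  · rw [linCoeff, dif_neg h, Finset.sum_eq_zero fun m _ => if_neg fun hm => h ⟨m, hm⟩]

theorem exists_sum_linCoeff_mul_wp_eq (i : Fin 4) (c : Quartile → ℝ) (R : Finset Quartile)
    {kk : ℤ → ℤ} (hkk : StrictMono kk) (a : ℤ → ℝ) (x : ℝ) :
    ∃ M : Finset ℤ, ∑ P ∈ R, c P * (linCoeff kk a P.I.k * P.wp i x)
      = ∑ m ∈ M, a m * (waveSum i c (R.filter fun P => kk (m - 1) - 1 < P.I.k) x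
        - waveSum i c (R.filter fun P => kk m - 1 < P.I.k) x) := by
  obtain ⟨M, hM⟩ := exists_forall_linCoeff_eq_sum hkk a (R.image fun P => P.I.k)
  refine ⟨M, ?_⟩
  simp only [waveSum_filter, ← Finset.sum_sub_distrib, Finset.mul_sum]
  rw [Finset.sum_comm]
  refine Finset.sum_congr rfl fun P hP => ?_
  rw [hM P.I.k (Finset.mem_image_of_mem _ hP), Finset.sum_mul, Finset.mul_sum]
  refine Finset.sum_congr rfl fun m _ => ?_
  have hlt : kk (m - 1) < kk m := hkk (sub_one_lt m)
  split_ifs <;> first | omega | ring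

theorem sum_abs_mul_abs_comp_le {M : Finset ℤ} {g : ℤ → ℤ} (hg : InjOn g M) {b : ℤ → ℝ}
    {V : Finset ℤ} (hV : ∀ w, b w ≠ 0 → w ∈ V) {a ρ : ℤ → ℝ} {Φ : ℝ → ℝ} {μ : ℝ} (hμ : 0 ≤ μ)
    (hΦ : ∀ y, 0 ≤ Φ y) (hρ : ∀ m, 0 ≤ ρ m) (hρ1 : ∑ m ∈ M, ρ m ≤ 1)
    (hab : ∀ m y, |a m| * |y| ≤ μ * ρ m + Φ y) :
    ∑ m ∈ M, |a m| * |b (g m)| ≤ μ + ∑ w ∈ V, Φ (b w) := by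
  set M' := M.filter fun m => b (g m) ≠ 0
  have hsub : M' ⊆ M := Finset.filter_subset _ _
  calc ∑ m ∈ M, |a m| * |b (g m)| = ∑ m ∈ M', |a m| * |b (g m)| :=
        (Finset.sum_filter_of_ne fun m _ h => abs_ne_zero.1 (right_ne_zero_of_mul h)).symm
    _ ≤ ∑ m ∈ M', (μ * ρ m + Φ (b (g m))) := Finset.sum_le_sum fun m _ => hab m _
    _ = μ * ∑ m ∈ M', ρ m + ∑ w ∈ M'.image g, Φ (b w) := by
        rw [Finset.sum_add_distrib, Finset.mul_sum,
          Finset.sum_image fun m hm m' hm' h => hg (hsub hm) (hsub hm') h]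
    _ ≤ μ * 1 + ∑ w ∈ V, Φ (b w) := by
        gcongr
        · exact (Finset.sum_le_sum_of_subset_of_nonneg hsub fun m _ _ => hρ m).trans hρ1
        · exact fun w _ _ => hΦ (b w)
        · exact Finset.image_subset_iff.2 fun m hm => hV _ (Finset.mem_filter.1 hm).2
    _ = μ + ∑ w ∈ V, Φ (b w) := by rw [mul_one]

/-- The monotone sequence `v` takes each value at most once after an increment and at most once
before one, so that each of the two sums below meets each value of `b` at most once. -/
theorem sum_abs_mul_abs_sub_le (M : Finset ℤ) {v : ℤ → ℤ} (hv : Antitone v) {b : ℤ → ℝ}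
    {V : Finset ℤ} (hV : ∀ w, b w ≠ 0 → w ∈ V) {a ρ : ℤ → ℝ} {Φ : ℝ → ℝ} {μ : ℝ} (hμ : 0 ≤ μ)
    (hΦ : ∀ y, 0 ≤ Φ y) (hρ : ∀ m, 0 ≤ ρ m) (hρ1 : ∑ m ∈ M, ρ m ≤ 1)
    (hab : ∀ m y, |a m| * |y| ≤ μ * ρ m + Φ y) :
    ∑ m ∈ M, |a m| * |b (v (m - 1)) - b (v m)| ≤ 2 * μ + 2 * ∑ w ∈ V, Φ (b w) := by
  set M' := M.filter fun m => v (m - 1) ≠ v m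
  have hlt : ∀ m ∈ M', v m < v (m - 1) := fun m hm =>
    (hv (sub_one_lt m).le).lt_of_ne (Finset.mem_filter.1 hm).2.symm
  have hleft : StrictAntiOn (fun m => v (m - 1)) M' := fun m hm m' _ h =>
    (hv (Int.le_sub_one_of_lt h)).trans_lt (hlt m hm)
  have hright : StrictAntiOn v M' := fun m _ m' hm' h =>
    (hlt m' hm').trans_le (hv (Int.le_sub_one_of_lt h))
  have hρ1' : ∑ m ∈ M', ρ m ≤ 1 :=
    (Finset.sum_le_sum_of_subset_of_nonneg (Finset.filter_subset _ _) fun m _ _ => hρ m).trans hρ1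
  calc ∑ m ∈ M, |a m| * |b (v (m - 1)) - b (v m)|
      = ∑ m ∈ M', |a m| * |b (v (m - 1)) - b (v m)| :=
        (Finset.sum_filter_of_ne fun m _ h => mt (fun heq => by simp [heq]) h).symm
    _ ≤ ∑ m ∈ M', (|a m| * |b (v (m - 1))| + |a m| * |b (v m)|) :=
        Finset.sum_le_sum fun m _ => by rw [← mul_add]; gcongr; exact abs_sub _ _
    _ ≤ (μ + ∑ w ∈ V, Φ (b w)) + (μ + ∑ w ∈ V, Φ (b w)) := by
        rw [Finset.sum_add_distrib]
        exact add_le_add (sum_abs_mul_abs_comp_le hleft.injOn hV hμ hΦ hρ hρ1' hab)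
          (sum_abs_mul_abs_comp_le hright.injOn hV hμ hΦ hρ hρ1' hab)
    _ = 2 * μ + 2 * ∑ w ∈ V, Φ (b w) := by ring

/-- A finite set of indices containing those of all nonempty cells of generation `l`. -/
noncomputable def cellIndices (c : Quartile → ℝ) (R : Finset Quartile) (l : ℤ) : Finset ℤ :=
  R.image fun P => ⌊clock c R P.I.lo P.I.k / 2 ^ l⌋

/-- The part of the linearized variation sum at `x` over the blocks `m ∈ M` coming from the
generation `l` of the chaining. -/
noncomputable def levelVariation (i : Fin 4) (c : Quartile → ℝ) (R : Finset Quartile) (kk : ℤ → ℤ)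
    (a : ℤ → ℝ) (M : Finset ℤ) (x : ℝ) (l : ℤ) : ℝ :=
  ∑ m ∈ M, |a m| *
    |chainIncrement i c R x l ⌊clock c R x (kk (m - 1) - 1) / 2 ^ (l - 1)⌋
      - chainIncrement i c R x l ⌊clock c R x (kk m - 1) / 2 ^ (l - 1)⌋|

section LevelVariation

variable {i : Fin 4} {c : Quartile → ℝ} {R : Finset Quartile} {kk : ℤ → ℤ} {x : ℝ} {l : ℤ}

theorem mem_cellIndices {u : ℤ} {P : Quartile} (h : P ∈ cell c R l u) : u ∈ cellIndices c R l := by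
  obtain ⟨hP, hle, hlt, _⟩ := mem_cell.1 h
  have hpow : (2 : ℝ) ^ (l - 1) ≤ 2 ^ l := zpow_le_zpow_right₀ one_le_two (by omega)
  refine Finset.mem_image.2 ⟨P, hP, ?_⟩
  rw [Int.floor_eq_iff, le_div_iff₀' (by positivity), div_lt_iff₀' (by positivity)]
  exact ⟨hle, by linarith⟩

theorem exists_eq_of_chainIncrement_ne_zero {w : ℤ} (h : chainIncrement i c R x l w ≠ 0) :
    ∃ u ∈ cellIndices c R l, 2 * u + 1 = w := by
  rw [chainIncrement] at h
  split_ifs at h with hodd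
  · obtain ⟨P, hP, -⟩ := Finset.exists_ne_zero_of_sum_ne_zero h
    exact ⟨w / 2, mem_cellIndices hP, by omega⟩
  · exact (h rfl).elim

theorem chainIncrement_two_mul_add_one (u : ℤ) :
    chainIncrement i c R x l (2 * u + 1) = waveSum i c (cell c R l u) x := by
  rw [chainIncrement, if_pos (by omega), show (2 * u + 1) / 2 = u by omega]

theorem levelVariation_eq_zero (a : ℤ → ℝ) (M : Finset ℤ) (h : squareSum c R x < 2 ^ (l - 1)) :
    levelVariation i c R kk a M x l = 0 := by
  have hfloor : ∀ K, ⌊clock c R x K / 2 ^ (l - 1)⌋ = 0 := fun K => by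
    refine Int.floor_eq_zero_iff.2 ⟨div_nonneg (clock_nonneg _ _ _ _) (by positivity), ?_⟩
    rw [div_lt_one (by positivity)]
    exact (clock_le_squareSum c R x K).trans_lt h
  exact Finset.sum_eq_zero fun m _ => by simp [hfloor]

theorem levelVariation_le (hkk : Monotone kk) {a ρ : ℤ → ℝ} {M : Finset ℤ} {μ : ℝ} {Φ : ℝ → ℝ}
    (hμ : 0 ≤ μ) (hΦ : ∀ y, 0 ≤ Φ y) (hρ : ∀ m, 0 ≤ ρ m) (hρ1 : ∑ m ∈ M, ρ m ≤ 1)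
    (hab : ∀ m y, |a m| * |y| ≤ μ * ρ m + Φ y) :
    levelVariation i c R kk a M x l
      ≤ 2 * μ + 2 * ∑ u ∈ cellIndices c R l, Φ (waveSum i c (cell c R l u) x) := by
  have hv : Antitone fun m => ⌊clock c R x (kk m - 1) / 2 ^ (l - 1)⌋ := fun m m' h =>
    Int.floor_mono <| div_le_div_of_nonneg_right
      (clock_antitone c R x (sub_le_sub_right (hkk h) 1)) (by positivity)
  refine (sum_abs_mul_abs_sub_le M hv (V := (cellIndices c R l).image fun u => 2 * u + 1)
    (fun w hw => Finset.mem_image.2 (exists_eq_of_chainIncrement_ne_zero hw))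
    hμ hΦ hρ hρ1 hab).trans_eq ?_
  rw [Finset.sum_image fun u _ u' _ h => by omega]
  simp only [chainIncrement_two_mul_add_one]

theorem exists_abs_sum_linCoeff_mul_wp_le (hkk : StrictMono kk) (a : ℤ → ℝ) {lb : ℤ} {m : ℕ}
    (hlb : ∀ P ∈ R, c P ≠ 0 → (2 : ℝ) ^ lb ≤ c P ^ 2 / P.I.len)
    (htop : squareSum c R x < 2 ^ (lb + m)) :
    ∃ M : Finset ℤ, |∑ P ∈ R, c P * (linCoeff kk a P.I.k * P.wp i x)|
      ≤ ∑ j ∈ Finset.range m, levelVariation i c R kk a M x (lb + 1 + j) := by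
  obtain ⟨M, hM⟩ := exists_sum_linCoeff_mul_wp_eq i c R hkk a x
  refine ⟨M, ?_⟩
  simp only [levelVariation]
  rw [hM, Finset.sum_comm]
  refine (Finset.abs_sum_le_sum_abs _ _).trans (Finset.sum_le_sum fun n _ => ?_)
  rw [abs_mul, ← Finset.mul_sum, waveSum_filter_eq_sum_chainIncrement hlb htop,
    waveSum_filter_eq_sum_chainIncrement hlb htop, ← Finset.sum_sub_distrib]
  gcongr
  refine (Finset.abs_sum_le_sum_abs _ _).trans_eq (Finset.sum_congr rfl fun j _ => ?_)
  rw [show lb + 1 + (j : ℤ) - 1 = lb + j by ring]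

end LevelVariation

/-! ### Scalar inequalities -/

theorem mul_abs_le_mul_rpow_add_inv_mul_sq {p a μ : ℝ} (hp : p ≤ 2) (ha : 0 ≤ a) (ha1 : a ≤ 1)
    (hμ : 0 < μ) (y : ℝ) : a * |y| ≤ μ * a ^ p + μ⁻¹ * y ^ 2 := by
  have hap : a ^ 2 ≤ a ^ p := by
    rw [← Real.rpow_natCast]
    exact Real.rpow_le_rpow_of_exponent_ge_of_imp ha ha1 (by exact_mod_cast hp)
      fun _ h => absurd h (by norm_num)
  have hsq : 0 ≤ μ⁻¹ * (μ * a - |y|) ^ 2 := by positivity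
  have hexpand : μ⁻¹ * (μ * a - |y|) ^ 2 = μ * a ^ 2 + μ⁻¹ * y ^ 2 - 2 * (a * |y|) := by
    rw [← sq_abs y]
    field_simp
    ring
  have hay : 0 ≤ a * |y| := by positivity
  linarith [mul_le_mul_of_nonneg_left hap hμ.le]

theorem mul_le_mul_rpow_add_mul_rpow {q r a y μ : ℝ} (hq : 1 < q) (hqr : q ≤ r) (ha : 0 ≤ a)
    (ha1 : a ≤ 1) (hy : 0 ≤ y) (hμ : 0 < μ) :
    a * y ≤ μ * a ^ (r / (r - 1)) + μ ^ (1 - q) * y ^ q := by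
  have hconj : (q / (q - 1)).HolderConjugate q := (Real.HolderConjugate.conjExponent hq).symm
  set p := q / (q - 1)
  have hexp : r / (r - 1) ≤ p := by
    rw [div_le_div_iff₀ (by linarith) (by linarith)]
    linarith
  have hyoung := Real.young_inequality_of_nonneg (a := μ ^ p⁻¹ * a) (b := μ ^ (-p⁻¹) * y)
    (by positivity) (by positivity) hconj
  calc a * y = (μ ^ p⁻¹ * a) * (μ ^ (-p⁻¹) * y) := by
        rw [mul_mul_mul_comm, ← Real.rpow_add hμ, add_neg_cancel, Real.rpow_zero, one_mul]
    _ ≤ (μ ^ p⁻¹ * a) ^ p + (μ ^ (-p⁻¹) * y) ^ q := hyoung.trans <|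
        add_le_add (div_le_self (by positivity) hconj.lt.le) (div_le_self (by positivity) hq.le)
    _ = μ * a ^ p + μ ^ (1 - q) * y ^ q := by
        rw [Real.mul_rpow (by positivity) ha, Real.mul_rpow (by positivity) hy,
          ← Real.rpow_mul hμ.le, ← Real.rpow_mul hμ.le, inv_mul_cancel₀ hconj.ne_zero,
          Real.rpow_one, neg_mul, ← div_eq_inv_mul, hconj.symm.div_conj_eq_sub_one, neg_sub]
    _ ≤ μ * a ^ (r / (r - 1)) + μ ^ (1 - q) * y ^ q := by
        gcongr ?_ * ?_ + _
        exact Real.rpow_le_rpow_of_exponent_ge_of_imp ha ha1 hexp fun _ h => absurd h hconj.ne_zero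

theorem rpow_le_rpow_mul_sq_add_pow_four {q y κ : ℝ} (hq : 2 ≤ q) (hq4 : q ≤ 4) (hy : 0 < y)
    (hκ : 0 < κ) : y ^ q ≤ κ ^ (q - 2) * (y ^ 2 + (κ ^ 2)⁻¹ * y ^ 4) := by
  have hratio : (y / κ) ^ (q - 2) ≤ 1 + (y / κ) ^ 2 := by
    rcases le_total (y / κ) 1 with h | h
    · have := Real.rpow_le_one (by positivity) h (sub_nonneg.2 hq)
      linarith [sq_nonneg (y / κ)]
    · have := Real.rpow_le_rpow_of_exponent_le h (show q - 2 ≤ (2 : ℕ) by norm_num; linarith)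
      rw [Real.rpow_natCast] at this
      linarith
  calc y ^ q = y ^ 2 * (κ ^ (q - 2) * (y / κ) ^ (q - 2)) := by
        rw [← Real.mul_rpow hκ.le (by positivity), mul_div_cancel₀ _ hκ.ne', ← Real.rpow_two,
          ← Real.rpow_add hy, add_sub_cancel]
    _ ≤ y ^ 2 * (κ ^ (q - 2) * (1 + (y / κ) ^ 2)) := by gcongr
    _ = κ ^ (q - 2) * (y ^ 2 + (κ ^ 2)⁻¹ * y ^ 4) := by
        field_simp

/-- The exponent `min r 4` in Young's inequality: capped at `4` because its power is controlled
by second and fourth moments. -/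
noncomputable def youngExponent (r : ℝ) : ℝ := min r 4

/-- The geometric rate at which the contributions of the fine generations of the chaining decay. -/
noncomputable def fineRate (r : ℝ) : ℝ := 2 ^ (-((youngExponent r - 2) / 12))

theorem two_lt_youngExponent {r : ℝ} (hr : 2 < r) : 2 < youngExponent r :=
  lt_min hr (by norm_num)

theorem fineRate_pos (r : ℝ) : 0 < fineRate r := Real.rpow_pos_of_pos two_pos _

theorem fineRate_lt_one {r : ℝ} (hr : 2 < r) : fineRate r < 1 :=
  Real.rpow_lt_one_of_one_lt_of_neg one_lt_two (by linarith [two_lt_youngExponent hr])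

/-- The interpolation takes place at height `2^(-e/2)`. -/
theorem rpow_youngExponent_le {r y : ℝ} (hr : 2 < r) (e : ℕ) (hy : 0 < y) :
    y ^ youngExponent r ≤ fineRate r ^ (e * 6 : ℝ) * (y ^ 2 + 2 ^ e * y ^ 4) := by
  set κ : ℝ := 2 ^ (-(e : ℝ) / 2) with hκdef
  have hκ : 0 < κ := Real.rpow_pos_of_pos two_pos _
  have hκsq : (κ ^ 2)⁻¹ = 2 ^ e := by
    rw [hκdef, ← Real.rpow_natCast, ← Real.rpow_mul two_pos.le, ← Real.rpow_neg two_pos.le,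
      ← Real.rpow_natCast]
    congr 1
    push_cast
    ring
  have hκq : κ ^ (youngExponent r - 2) = fineRate r ^ (e * 6 : ℝ) := by
    rw [fineRate, ← Real.rpow_mul two_pos.le, ← Real.rpow_mul two_pos.le]
    congr 1
    ring
  rw [← hκsq, ← hκq]
  exact rpow_le_rpow_mul_sq_add_pow_four (two_lt_youngExponent hr).le (min_le_right r 4) hy hκ

/-- Young's inequality with parameter `A ϱ^e`: the gain `ϱ^(6e)` of the interpolation outweighs
the loss `ϱ^(e (1 - q))`. -/
theorem mul_abs_le_fineRate_pow_mul {r a A : ℝ} (hr : 2 < r) (ha : 0 ≤ a) (ha1 : a ≤ 1)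
    (hA : 1 ≤ A) (e : ℕ) (y : ℝ) :
    a * |y| ≤ A * fineRate r ^ e * a ^ (r / (r - 1))
      + A⁻¹ * fineRate r ^ e * (y ^ 2 + 2 ^ e * y ^ 4) := by
  have hϱ := fineRate_pos r
  have hϱ1 := (fineRate_lt_one hr).le
  have hq := two_lt_youngExponent hr
  have hq4 : youngExponent r ≤ 4 := min_le_right r 4
  have hA0 : 0 < A := one_pos.trans_le hA
  rcases eq_or_ne y 0 with rfl | hy
  · simpa using by positivity
  have hyoung := mul_le_mul_rpow_add_mul_rpow (one_lt_two.trans hq) (min_le_left r 4) ha ha1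
    (abs_nonneg y) (mul_pos hA0 (pow_pos hϱ e))
  have hinterp := rpow_youngExponent_le hr e (abs_pos.2 hy)
  rw [sq_abs, Even.pow_abs (by decide)] at hinterp
  refine hyoung.trans (add_le_add_right ?_ _)
  set q := youngExponent r
  set ϱ := fineRate r
  have hAq : A ^ (1 - q) ≤ A⁻¹ := by
    rw [← Real.rpow_neg_one]
    exact Real.rpow_le_rpow_of_exponent_le hA (by linarith)
  have hϱq : ϱ ^ ((e : ℝ) * (1 - q)) * ϱ ^ (e * 6 : ℝ) ≤ ϱ ^ e := by
    rw [← Real.rpow_add hϱ, ← Real.rpow_natCast ϱ e]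
    exact Real.rpow_le_rpow_of_exponent_ge hϱ hϱ1 (by nlinarith [e.cast_nonneg (α := ℝ)])
  calc (A * ϱ ^ e) ^ (1 - q) * |y| ^ q
      ≤ (A * ϱ ^ e) ^ (1 - q) * (ϱ ^ (e * 6 : ℝ) * (y ^ 2 + 2 ^ e * y ^ 4)) := by gcongr
    _ = A ^ (1 - q) * (ϱ ^ ((e : ℝ) * (1 - q)) * ϱ ^ (e * 6 : ℝ)) * (y ^ 2 + 2 ^ e * y ^ 4) := by
        rw [Real.mul_rpow hA0.le (by positivity), ← Real.rpow_natCast ϱ e, ← Real.rpow_mul hϱ.le]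
        ring
    _ ≤ A⁻¹ * ϱ ^ e * (y ^ 2 + 2 ^ e * y ^ 4) := by gcongr

/-! ### The generations of the chaining -/

/-- The sum over the cells of generation `l` of the `d`-th powers of their sums of wave packets. -/
noncomputable def cellPowSum (i : Fin 4) (c : Quartile → ℝ) (R : Finset Quartile) (d : ℕ) (l : ℤ)
    (x : ℝ) : ℝ :=
  ∑ u ∈ cellIndices c R l, waveSum i c (cell c R l u) x ^ d

section CellPowSum

variable {i : Fin 4} {c : Quartile → ℝ} {R : Finset Quartile}

theorem isBddIntegrable_cellPowSum (i : Fin 4) (c : Quartile → ℝ) (R : Finset Quartile) {d : ℕ}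
    (hd : d ≠ 0) (l : ℤ) : IsBddIntegrable volume (cellPowSum i c R d l) :=
  IsBddIntegrable.sum fun _ _ => (isBddIntegrable_waveSum i c _).pow hd

theorem cellPowSum_nonneg (i : Fin 4) (c : Quartile → ℝ) (R : Finset Quartile) {d : ℕ}
    (hd : Even d) (l : ℤ) (x : ℝ) : 0 ≤ cellPowSum i c R d l x :=
  Finset.sum_nonneg fun _ _ => hd.pow_nonneg _

theorem sum_cell_sq_le (c : Quartile → ℝ) (R : Finset Quartile) (l : ℤ) :
    ∑ u ∈ cellIndices c R l, ∑ P ∈ cell c R l u, c P ^ 2 ≤ ∑ P ∈ R, c P ^ 2 := by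
  classical
  rw [← Finset.sum_biUnion (pairwiseDisjoint_cell c R l _)]
  exact Finset.sum_le_sum_of_subset_of_nonneg
    (Finset.biUnion_subset.2 fun u _ => cell_subset c R l u) fun _ _ _ => sq_nonneg _

theorem integral_cellPowSum_two_le
    (hR : (R : Set Quartile).PairwiseDisjoint fun P => P.subtileSet i) (l : ℤ) :
    ∫ x, cellPowSum i c R 2 l x ≤ ∑ P ∈ R, c P ^ 2 := by
  simp only [cellPowSum]
  rw [integral_finsetSum _ fun u _ => ((isBddIntegrable_waveSum i c _).pow two_ne_zero).integrable,
    Finset.sum_congr rfl fun u _ => integral_waveSum_sq (hR.subset (cell_subset c R l u))]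
  exact sum_cell_sq_le c R l

theorem IsForest.integral_cellPowSum_four_le {b : ℤ} {N : ℕ} {𝒰 : Finset ToppedTree}
    (h : IsForest i b N 𝒰) (hR : R ⊆ 𝒰.biUnion ToppedTree.quartiles) (l : ℤ) :
    ∫ x, cellPowSum i c R 4 l x ≤ N ^ 3 * (6 * 2 ^ l) * ∑ P ∈ R, c P ^ 2 := by
  simp only [cellPowSum]
  rw [integral_finsetSum _ fun u _ => ((isBddIntegrable_waveSum i c _).pow four_ne_zero).integrable]
  refine (Finset.sum_le_sum fun u _ => h.integral_waveSum_pow_four_le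
    ((cell_subset c R l u).trans hR) (squareSum_cell_le c R l u)).trans ?_
  rw [← Finset.mul_sum]
  gcongr
  exact sum_cell_sq_le c R l

theorem exists_forall_two_zpow_sub_le (c : Quartile → ℝ) (R : Finset Quartile) (l : ℤ) :
    ∃ m : ℕ, ∀ P ∈ R, c P ≠ 0 → (2 : ℝ) ^ (l - m) ≤ c P ^ 2 / P.I.len := by
  have hlim : Filter.Tendsto (fun m : ℕ => (2 : ℝ) ^ (l - m)) Filter.atTop (nhds 0) := by
    have := (tendsto_pow_atTop_nhds_zero_of_lt_one (r := (2⁻¹ : ℝ)) (by norm_num)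
      (by norm_num)).const_mul ((2 : ℝ) ^ l)
    rw [mul_zero] at this
    refine this.congr fun m => ?_
    rw [zpow_sub₀ two_ne_zero, zpow_natCast, inv_pow, div_eq_mul_inv]
  suffices h : ∀ P ∈ R, ∀ᶠ m : ℕ in Filter.atTop, c P ≠ 0 → (2 : ℝ) ^ (l - m) ≤ c P ^ 2 / P.I.len
    from ((Filter.eventually_all_finset R).2 h).exists
  intro P _
  by_cases hc : c P = 0
  · exact Filter.Eventually.of_forall fun _ h => absurd hc h
  · exact (hlim.eventually_le_const
      (div_pos (by positivity) P.I.len_pos)).mono fun m hm _ => hm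

theorem exists_forall_squareSum_lt (c : Quartile → ℝ) (R : Finset Quartile) (l : ℤ) :
    ∃ m : ℕ, ∀ x, squareSum c R x < 2 ^ (l + m) := by
  obtain ⟨m, hm⟩ := pow_unbounded_of_one_lt ((∑ P ∈ R, c P ^ 2 / P.I.len) / 2 ^ l) one_lt_two
  refine ⟨m, fun x => ?_⟩
  calc squareSum c R x ≤ ∑ P ∈ R, c P ^ 2 / P.I.len := Finset.sum_le_sum fun P _ =>
        indicator_le_self' (fun _ _ => div_nonneg (sq_nonneg _) P.I.len_pos.le) x
    _ < 2 ^ (l + m) := by rwa [zpow_add₀ two_ne_zero, zpow_natCast, ← div_lt_iff₀' (by positivity)]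

end CellPowSum

theorem geom_sum_le_inv_one_sub {ϱ : ℝ} (h0 : 0 ≤ ϱ) (h1 : ϱ < 1) (m : ℕ) :
    ∑ e ∈ Finset.range m, ϱ ^ e ≤ (1 - ϱ)⁻¹ :=
  ((summable_geometric_of_lt_one h0 h1).sum_le_tsum _ fun e _ => pow_nonneg h0 e).trans_eq
    (tsum_geometric_of_lt_one h0 h1)

theorem sum_range_add_add_eq (g : ℤ → ℝ) (l : ℤ) (m₁ s m₂ : ℕ) :
    ∑ j ∈ Finset.range (m₁ + s + m₂), g (l - m₁ + 1 + j)
      = ∑ e ∈ Finset.range m₁, g (l - e) + ∑ k ∈ Finset.range s, g (l + 1 + k)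
        + ∑ k ∈ Finset.range m₂, g (l + s + 1 + k) := by
  rw [Finset.sum_range_add, Finset.sum_range_add, ← Finset.sum_range_reflect]
  refine congrArg₂ _ (congrArg₂ _ ?_ ?_) ?_
  · refine Finset.sum_congr rfl fun j hj => congrArg g ?_
    have := Finset.mem_range.1 hj
    omega
  all_goals
    refine Finset.sum_congr rfl fun j _ => congrArg g ?_
    push_cast
    ring

/-- The parameter of Young's inequality for the fine generations, large enough to absorb their
contribution to the majorant. -/
noncomputable def fineWeight (r : ℝ) : ℝ := 224 / (1 - fineRate r)

theorem one_le_fineWeight {r : ℝ} (hr : 2 < r) : 1 ≤ fineWeight r := by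
  rw [fineWeight, le_div_iff₀ (sub_pos.2 (fineRate_lt_one hr))]
  linarith [fineRate_pos r]

/-- The majorant of the generations `l - e` with `e < m`. -/
noncomputable def fineMajorant (r : ℝ) (i : Fin 4) (c : Quartile → ℝ) (R : Finset Quartile)
    (l : ℤ) (m : ℕ) (x : ℝ) : ℝ :=
  ∑ e ∈ Finset.range m, 2 * ((fineWeight r)⁻¹ * fineRate r ^ e) *
    (cellPowSum i c R 2 (l - e) x + 2 ^ e * cellPowSum i c R 4 (l - e) x)

/-- The majorant of the `s` generations following `l`. -/
noncomputable def middleMajorant (i : Fin 4) (c : Quartile → ℝ) (R : Finset Quartile) (l : ℤ)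
    (s : ℕ) (x : ℝ) : ℝ :=
  ∑ k ∈ Finset.range s, 2 * (32 * (s : ℝ))⁻¹ * cellPowSum i c R 2 (l + 1 + k) x

/-- The majorant of the generations `22 + k` with `k < m`. -/
noncomputable def coarseMajorant (i : Fin 4) (c : Quartile → ℝ) (R : Finset Quartile) (m : ℕ)
    (x : ℝ) : ℝ :=
  ∑ k ∈ Finset.range m, (4 * (3 / 4) ^ (22 + k) * squareSum c R x
    + 2 * (2 / 3) ^ (22 + k) * cellPowSum i c R 2 (22 + k) x)

section Majorant

variable {r : ℝ} {i : Fin 4} {c : Quartile → ℝ} {R : Finset Quartile}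

theorem isBddIntegrable_fineMajorant (r : ℝ) (i : Fin 4) (c : Quartile → ℝ) (R : Finset Quartile)
    (l : ℤ) (m : ℕ) : IsBddIntegrable volume (fineMajorant r i c R l m) :=
  IsBddIntegrable.sum fun _ _ => ((isBddIntegrable_cellPowSum i c R two_ne_zero _).add
    ((isBddIntegrable_cellPowSum i c R four_ne_zero _).const_mul _)).const_mul _

theorem isBddIntegrable_middleMajorant (i : Fin 4) (c : Quartile → ℝ) (R : Finset Quartile) (l : ℤ)
    (s : ℕ) : IsBddIntegrable volume (middleMajorant i c R l s) :=
  IsBddIntegrable.sum fun _ _ => (isBddIntegrable_cellPowSum i c R two_ne_zero _).const_mul _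

theorem isBddIntegrable_coarseMajorant (i : Fin 4) (c : Quartile → ℝ) (R : Finset Quartile)
    (m : ℕ) : IsBddIntegrable volume (coarseMajorant i c R m) :=
  IsBddIntegrable.sum fun _ _ => ((isBddIntegrable_squareSum c R).const_mul _).add
    ((isBddIntegrable_cellPowSum i c R two_ne_zero _).const_mul _)

theorem fineMajorant_nonneg (hr : 2 < r) (i : Fin 4) (c : Quartile → ℝ) (R : Finset Quartile)
    (l : ℤ) (m : ℕ) (x : ℝ) : 0 ≤ fineMajorant r i c R l m x := by
  have hA := one_le_fineWeight hr
  have hϱ := fineRate_pos r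
  exact Finset.sum_nonneg fun e _ => mul_nonneg (by positivity) <|
    add_nonneg (cellPowSum_nonneg i c R even_two _ x)
      (mul_nonneg (by positivity) (cellPowSum_nonneg i c R (by decide) _ x))

theorem middleMajorant_nonneg (i : Fin 4) (c : Quartile → ℝ) (R : Finset Quartile) (l : ℤ)
    (s : ℕ) (x : ℝ) : 0 ≤ middleMajorant i c R l s x :=
  Finset.sum_nonneg fun _ _ => mul_nonneg (by positivity) (cellPowSum_nonneg i c R even_two _ x)

theorem coarseMajorant_nonneg (i : Fin 4) (c : Quartile → ℝ) (R : Finset Quartile) (m : ℕ)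
    (x : ℝ) : 0 ≤ coarseMajorant i c R m x :=
  Finset.sum_nonneg fun _ _ => add_nonneg
    (mul_nonneg (by positivity) (squareSum_nonneg c R x))
    (mul_nonneg (by positivity) (cellPowSum_nonneg i c R even_two _ x))

theorem integral_fineMajorant (l : ℤ) (m : ℕ) :
    ∫ x, fineMajorant r i c R l m x
      = ∑ e ∈ Finset.range m, 2 * ((fineWeight r)⁻¹ * fineRate r ^ e) *
        ((∫ x, cellPowSum i c R 2 (l - e) x) + 2 ^ e * ∫ x, cellPowSum i c R 4 (l - e) x) := by
  have htwo := isBddIntegrable_cellPowSum i c R two_ne_zero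
  have hfour := isBddIntegrable_cellPowSum i c R four_ne_zero
  simp only [fineMajorant]
  rw [integral_finsetSum _ fun e _ =>
    (((htwo _).add ((hfour _).const_mul _)).const_mul _).integrable]
  refine Finset.sum_congr rfl fun e _ => ?_
  rw [integral_const_mul, integral_add (htwo _).integrable ((hfour _).const_mul _).integrable,
    integral_const_mul]

theorem IsForest.integral_fineMajorant_le {b : ℤ} {N : ℕ} {𝒰 : Finset ToppedTree} {l : ℤ}
    (h : IsForest i b N 𝒰) (hr : 2 < r) (hN : (N : ℝ) ^ 3 * 2 ^ l ≤ 1) (m : ℕ) :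
    ∫ x, fineMajorant r i c (𝒰.biUnion ToppedTree.quartiles) l m x
      ≤ 1 / 16 * ∑ P ∈ 𝒰.biUnion ToppedTree.quartiles, c P ^ 2 := by
  set R := 𝒰.biUnion ToppedTree.quartiles
  set Q := ∑ P ∈ R, c P ^ 2
  have hA := one_le_fineWeight hr
  have hϱ := fineRate_pos r
  have hϱ1 := fineRate_lt_one hr
  have : 0 ≤ Q := Finset.sum_nonneg fun _ _ => sq_nonneg _
  have hgain : ∀ e : ℕ, 2 ^ e * ∫ x, cellPowSum i c R 4 (l - e) x ≤ 6 * Q := fun e =>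
    calc 2 ^ e * ∫ x, cellPowSum i c R 4 (l - e) x
        ≤ 2 ^ e * ((N : ℝ) ^ 3 * (6 * 2 ^ (l - e)) * Q) := by
          gcongr
          exact h.integral_cellPowSum_four_le subset_rfl _
      _ = (N : ℝ) ^ 3 * 2 ^ l * (6 * Q) := by
          rw [zpow_sub₀ two_ne_zero, zpow_natCast]
          field_simp
      _ ≤ 6 * Q := mul_le_of_le_one_left (by positivity) hN
  calc ∫ x, fineMajorant r i c R l m x
      ≤ ∑ e ∈ Finset.range m, 2 * ((fineWeight r)⁻¹ * fineRate r ^ e) * (Q + 6 * Q) := by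
        rw [integral_fineMajorant]
        gcongr ∑ e ∈ _, _ * (?_ + ?_) with e
        · exact integral_cellPowSum_two_le h.disjoint_subtileSet _
        · exact hgain e
    _ = 14 * (fineWeight r)⁻¹ * Q * ∑ e ∈ Finset.range m, fineRate r ^ e := by
        rw [Finset.mul_sum (Finset.range m)]
        exact Finset.sum_congr rfl fun e _ => by ring
    _ ≤ 14 * (fineWeight r)⁻¹ * Q * (1 - fineRate r)⁻¹ := by
        gcongr
        exact geom_sum_le_inv_one_sub hϱ.le hϱ1 m
    _ = 1 / 16 * Q := by
        have : 1 - fineRate r ≠ 0 := (sub_pos.2 hϱ1).ne'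
        rw [fineWeight]
        field_simp
        ring

theorem integral_middleMajorant_le
    (hR : (R : Set Quartile).PairwiseDisjoint fun P => P.subtileSet i) (l : ℤ) (s : ℕ) :
    ∫ x, middleMajorant i c R l s x ≤ 1 / 16 * ∑ P ∈ R, c P ^ 2 := by
  simp only [middleMajorant]
  calc ∫ x, ∑ k ∈ Finset.range s, 2 * (32 * (s : ℝ))⁻¹ * cellPowSum i c R 2 (l + 1 + k) x
      = ∑ k ∈ Finset.range s, 2 * (32 * (s : ℝ))⁻¹ * ∫ x, cellPowSum i c R 2 (l + 1 + k) x := by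
        rw [integral_finsetSum _ fun k _ =>
          ((isBddIntegrable_cellPowSum i c R two_ne_zero _).const_mul _).integrable]
        exact Finset.sum_congr rfl fun k _ => integral_const_mul _ _
    _ ≤ ∑ k ∈ Finset.range s, 2 * (32 * (s : ℝ))⁻¹ * ∑ P ∈ R, c P ^ 2 := by
        gcongr
        exact integral_cellPowSum_two_le hR _
    _ = s / s * (1 / 16 * ∑ P ∈ R, c P ^ 2) := by
        rw [Finset.sum_const, Finset.card_range, nsmul_eq_mul, mul_inv]
        ring
    _ ≤ 1 / 16 * ∑ P ∈ R, c P ^ 2 := mul_le_of_le_one_left (by positivity) (div_self_le_one _)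

theorem integral_coarseMajorant_le
    (hR : (R : Set Quartile).PairwiseDisjoint fun P => P.subtileSet i) (m : ℕ) :
    ∫ x, coarseMajorant i c R m x ≤ 1 / 16 * ∑ P ∈ R, c P ^ 2 := by
  set Q := ∑ P ∈ R, c P ^ 2
  have : 0 ≤ Q := Finset.sum_nonneg fun _ _ => sq_nonneg _
  have hsq := isBddIntegrable_squareSum c R
  have htwo := isBddIntegrable_cellPowSum i c R two_ne_zero
  simp only [coarseMajorant]
  calc ∫ x, ∑ k ∈ Finset.range m, (4 * (3 / 4) ^ (22 + k) * squareSum c R x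
        + 2 * (2 / 3) ^ (22 + k) * cellPowSum i c R 2 (22 + k) x)
      = ∑ k ∈ Finset.range m, (4 * (3 / 4) ^ (22 + k) * Q
        + 2 * (2 / 3) ^ (22 + k) * ∫ x, cellPowSum i c R 2 (22 + k) x) := by
        rw [integral_finsetSum _ fun k _ =>
          ((hsq.const_mul _).add ((htwo _).const_mul _)).integrable]
        refine Finset.sum_congr rfl fun k _ => ?_
        rw [integral_add (hsq.const_mul _).integrable ((htwo _).const_mul _).integrable,
          integral_const_mul, integral_const_mul, integral_squareSum]
    _ ≤ ∑ k ∈ Finset.range m, (4 * (3 / 4) ^ (22 + k) * Q + 2 * (3 / 4) ^ (22 + k) * Q) := by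
        gcongr ∑ k ∈ _, (_ + 2 * ?_ ^ _ * ?_)
        · exact integral_nonneg fun x => cellPowSum_nonneg i c R even_two _ x
        · norm_num
        · exact integral_cellPowSum_two_le hR _
    _ = 6 * (3 / 4) ^ 22 * Q * ∑ k ∈ Finset.range m, (3 / 4 : ℝ) ^ k := by
        rw [Finset.mul_sum (Finset.range m)]
        exact Finset.sum_congr rfl fun k _ => by ring
    _ ≤ 6 * (3 / 4) ^ 22 * Q * (1 - 3 / 4)⁻¹ := by
        gcongr
        exact geom_sum_le_inv_one_sub (by norm_num) (by norm_num) m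
    _ = (24 * (3 / 4) ^ 22) * Q := by ring
    _ ≤ 1 / 16 * Q := by
        gcongr
        norm_num

end Majorant

/-! ### The pointwise majorant -/

theorem abs_le_one_of_sum_rpow_le_one {ι : Type*} {p : ℝ} (hp : 0 < p) {a : ι → ℝ}
    (ha : ∀ s : Finset ι, ∑ j ∈ s, |a j| ^ p ≤ 1) (m : ι) : |a m| ≤ 1 := by
  by_contra! h
  exact (Real.one_lt_rpow h hp).not_ge ((Finset.sum_singleton _ m).symm.trans_le (ha {m}))

section LevelVariation

variable {r : ℝ} {i : Fin 4} {c : Quartile → ℝ} {R : Finset Quartile} {kk : ℤ → ℤ} {a : ℤ → ℝ}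

theorem levelVariation_le_cellPowSum_two (hr : 2 < r) (hkk : Monotone kk)
    (ha : ∀ s : Finset ℤ, ∑ j ∈ s, |a j| ^ (r / (r - 1)) ≤ 1) (M : Finset ℤ) {μ : ℝ} (hμ : 0 < μ)
    (l : ℤ) (x : ℝ) :
    levelVariation i c R kk a M x l ≤ 2 * μ + 2 * μ⁻¹ * cellPowSum i c R 2 l x := by
  have hp : r / (r - 1) ≤ 2 := (div_le_iff₀ (by linarith)).2 (by linarith)
  have ha1 := abs_le_one_of_sum_rpow_le_one (div_pos (by linarith) (by linarith)) ha
  refine (levelVariation_le hkk (Φ := fun y => μ⁻¹ * y ^ 2) hμ.le (fun y => by positivity)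
    (fun m => Real.rpow_nonneg (abs_nonneg _) _) (ha M)
    fun m y => mul_abs_le_mul_rpow_add_inv_mul_sq hp (abs_nonneg _) (ha1 m) hμ y).trans_eq ?_
  rw [cellPowSum, ← Finset.mul_sum, mul_assoc 2 μ⁻¹]

theorem levelVariation_le_cellPowSum_two_add_four (hr : 2 < r) (hkk : Monotone kk)
    (ha : ∀ s : Finset ℤ, ∑ j ∈ s, |a j| ^ (r / (r - 1)) ≤ 1) (M : Finset ℤ) (e : ℕ) (l : ℤ)
    (x : ℝ) :
    levelVariation i c R kk a M x l ≤ 2 * (fineWeight r * fineRate r ^ e)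
      + 2 * ((fineWeight r)⁻¹ * fineRate r ^ e)
        * (cellPowSum i c R 2 l x + 2 ^ e * cellPowSum i c R 4 l x) := by
  have hA := one_le_fineWeight hr
  have hϱ := fineRate_pos r
  have ha1 := abs_le_one_of_sum_rpow_le_one (div_pos (by linarith) (by linarith)) ha
  refine (levelVariation_le hkk
    (Φ := fun y => (fineWeight r)⁻¹ * fineRate r ^ e * (y ^ 2 + 2 ^ e * y ^ 4)) (by positivity)
    (fun y => by positivity) (fun m => Real.rpow_nonneg (abs_nonneg _) _) (ha M)
    fun m y => mul_abs_le_fineRate_pow_mul hr (abs_nonneg _) (ha1 m) hA e y).trans_eq ?_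
  rw [cellPowSum, cellPowSum, ← Finset.mul_sum, Finset.sum_add_distrib, ← Finset.mul_sum,
    mul_assoc 2 (_ * _)]

/-- Where the square function does not reach the level, the clock does not tick; elsewhere the
square function pays for the parameter `μ = (3/2)^k`. -/
theorem levelVariation_le_squareSum (hr : 2 < r) (hkk : Monotone kk)
    (ha : ∀ s : Finset ℤ, ∑ j ∈ s, |a j| ^ (r / (r - 1)) ≤ 1) (M : Finset ℤ) (k : ℕ) (x : ℝ) :
    levelVariation i c R kk a M x k ≤ 4 * (3 / 4) ^ k * squareSum c R x
      + 2 * (2 / 3) ^ k * cellPowSum i c R 2 k x := by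
  have hpow := cellPowSum_nonneg i c R even_two k x
  have hsq := squareSum_nonneg c R x
  rcases lt_or_ge (squareSum c R x) (2 ^ ((k : ℤ) - 1)) with hsmall | hlarge
  · rw [levelVariation_eq_zero a M hsmall]
    positivity
  · have hle := levelVariation_le_cellPowSum_two (i := i) (c := c) (R := R) hr hkk ha M
      (μ := (3 / 2) ^ k) (by positivity) k x
    rw [← inv_pow, inv_div] at hle
    have hμ : 2 * (3 / 2 : ℝ) ^ k = 4 * (3 / 4) ^ k * 2 ^ ((k : ℤ) - 1) := by
      rw [zpow_sub_one₀ two_ne_zero, zpow_natCast, show (3 / 2 : ℝ) = 3 / 4 * 2 by norm_num,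
        mul_pow]
      ring
    calc levelVariation i c R kk a M x k
        ≤ 4 * (3 / 4) ^ k * 2 ^ ((k : ℤ) - 1) + 2 * (2 / 3) ^ k * cellPowSum i c R 2 k x :=
          hle.trans_eq (by rw [hμ])
      _ ≤ _ := by gcongr

/-- The constant term of the pointwise bound when there are `s` middle generations. -/
noncomputable def baseConst (r : ℝ) (s : ℕ) : ℝ :=
  2 * fineWeight r * (1 - fineRate r)⁻¹ + 64 * (s : ℝ) ^ 2

theorem one_le_baseConst (hr : 2 < r) {s : ℕ} (hs : s ≠ 0) : 1 ≤ baseConst r s := by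
  have hA := one_le_fineWeight hr
  have := sub_pos.2 (fineRate_lt_one hr)
  have hs1 : (1 : ℝ) ≤ s := by exact_mod_cast Nat.one_le_iff_ne_zero.2 hs
  calc (1 : ℝ) ≤ 0 + 64 * 1 ^ 2 := by norm_num
    _ ≤ baseConst r s := by
      rw [baseConst]
      gcongr
      positivity

theorem sum_levelVariation_le (hr : 2 < r) (hkk : Monotone kk)
    (ha : ∀ s : Finset ℤ, ∑ j ∈ s, |a j| ^ (r / (r - 1)) ≤ 1) (M : Finset ℤ) {l : ℤ} {s : ℕ}
    (hls : l + s = 21) (m₁ m₂ : ℕ) (x : ℝ) :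
    ∑ j ∈ Finset.range (m₁ + s + m₂), levelVariation i c R kk a M x (l - m₁ + 1 + j)
      ≤ baseConst r s + (fineMajorant r i c R l m₁ x + middleMajorant i c R l s x
        + coarseMajorant i c R m₂ x) := by
  have hA := one_le_fineWeight hr
  have hϱ := fineRate_pos r
  have hfine := Finset.sum_le_sum fun (e : ℕ) (_ : e ∈ Finset.range m₁) =>
    levelVariation_le_cellPowSum_two_add_four (i := i) (c := c) (R := R) hr hkk ha M e (l - e) x
  have hmiddle : ∑ k ∈ Finset.range s, levelVariation i c R kk a M x (l + 1 + k)
      ≤ ∑ k ∈ Finset.range s,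
        (2 * (32 * s : ℝ) + 2 * (32 * s : ℝ)⁻¹ * cellPowSum i c R 2 (l + 1 + k) x) :=
    Finset.sum_le_sum fun k hk => levelVariation_le_cellPowSum_two hr hkk ha M
      (mul_pos (by norm_num) (by exact_mod_cast Nat.zero_lt_of_lt (Finset.mem_range.1 hk))) _ x
  have hcoarse : ∑ k ∈ Finset.range m₂, levelVariation i c R kk a M x (l + s + 1 + k)
      ≤ coarseMajorant i c R m₂ x := Finset.sum_le_sum fun k _ => by
    rw [show l + s + 1 + k = ((22 + k : ℕ) : ℤ) by push_cast; omega]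
    exact_mod_cast levelVariation_le_squareSum hr hkk ha M (22 + k) x
  have hgeom : ∑ e ∈ Finset.range m₁, 2 * (fineWeight r * fineRate r ^ e)
      ≤ 2 * fineWeight r * (1 - fineRate r)⁻¹ := by
    rw [← Finset.mul_sum, ← Finset.mul_sum, ← mul_assoc]
    gcongr
    exact geom_sum_le_inv_one_sub hϱ.le (fineRate_lt_one hr) m₁
  have hconst : ∑ _k ∈ Finset.range s, 2 * (32 * s : ℝ) = 64 * (s : ℝ) ^ 2 := by
    rw [Finset.sum_const, Finset.card_range, nsmul_eq_mul]
    ring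
  rw [Finset.sum_add_distrib] at hfine hmiddle
  rw [sum_range_add_add_eq, baseConst, fineMajorant, middleMajorant]
  linarith

theorem abs_sum_linCoeff_mul_wp_le (hr : 2 < r) (hkk : StrictMono kk)
    (ha : ∀ s : Finset ℤ, ∑ j ∈ s, |a j| ^ (r / (r - 1)) ≤ 1) {l : ℤ} {s : ℕ} (hls : l + s = 21)
    {m₁ m₂ : ℕ} {x : ℝ} (hlow : ∀ P ∈ R, c P ≠ 0 → (2 : ℝ) ^ (l - m₁) ≤ c P ^ 2 / P.I.len)
    (htop : squareSum c R x < 2 ^ ((21 : ℤ) + m₂)) :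
    |∑ P ∈ R, c P * (linCoeff kk a P.I.k * P.wp i x)|
      ≤ baseConst r s + (fineMajorant r i c R l m₁ x + middleMajorant i c R l s x
        + coarseMajorant i c R m₂ x) := by
  rw [show (21 : ℤ) + m₂ = l - m₁ + (m₁ + s + m₂ : ℕ) by push_cast; omega] at htop
  obtain ⟨M, hM⟩ := exists_abs_sum_linCoeff_mul_wp_le hkk a hlow htop
  exact hM.trans (sum_levelVariation_le hr hkk.monotone ha M hls m₁ m₂ x)

end LevelVariation

/-! ### The forest estimate -/

namespace LinData

variable {r : ℝ} (L : LinData r)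

theorem measurable_coeff (P : Quartile) : Measurable (L.coeff P) := by
  set S : ℤ → Set ℝ := fun m => {x | L.kseq x (m - 1) ≤ P.I.k ∧ P.I.k < L.kseq x m}
  have hS : ∀ m, MeasurableSet (S m) := fun m =>
    (measurableSet_le (L.meas_k _) measurable_const).inter
      (measurableSet_lt measurable_const (L.meas_k _))
  have hcoeff : ∀ m, ∀ x ∈ S m, L.coeff P x = L.aseq x m := fun m x hx =>
    linCoeff_of_mem_block (L.mono x) _ hx
  have hzero : ∀ x ∈ (⋃ m, S m)ᶜ, L.coeff P x = 0 := fun x hx =>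
    dif_neg fun ⟨m, hm⟩ => hx (mem_iUnion.2 ⟨m, hm⟩)
  intro t ht
  have hpre : L.coeff P ⁻¹' t
      = (⋃ m, S m ∩ {x | L.aseq x m ∈ t}) ∪ ((⋃ m, S m)ᶜ ∩ {_x | (0 : ℝ) ∈ t}) := by
    ext x
    by_cases hx : x ∈ ⋃ m, S m
    · simp only [mem_union, mem_iUnion, mem_inter_iff, mem_compl_iff, mem_ofPred_eq, mem_preimage,
        hx, not_true_eq_false, false_and, or_false]
      obtain ⟨m, hm⟩ := mem_iUnion.1 hx
      refine ⟨fun h => ⟨m, hm, hcoeff m x hm ▸ h⟩, fun ⟨m', hm', h⟩ => ?_⟩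
      rwa [hcoeff m' x hm']
    · have hx' : ∀ m, x ∉ S m := fun m hm => hx (mem_iUnion.2 ⟨m, hm⟩)
      simp [hx', hzero x hx]
  rw [hpre]
  exact (MeasurableSet.iUnion fun m => (hS m).inter (L.meas_a m ht)).union
    ((MeasurableSet.iUnion hS).compl.inter (MeasurableSet.const _))

theorem abs_coeff_le_one (hr : 1 < r) (P : Quartile) (x : ℝ) : |L.coeff P x| ≤ 1 := by
  by_cases h : ∃ m : ℤ, L.kseq x (m - 1) ≤ P.I.k ∧ P.I.k < L.kseq x m
  · obtain ⟨m, hm⟩ := h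
    rw [coeff, linCoeff_of_mem_block (L.mono x) _ hm]
    exact abs_le_one_of_sum_rpow_le_one (div_pos (by linarith) (by linarith)) (L.abound x) m
  · rw [coeff, linCoeff, dif_neg h, abs_zero]
    exact zero_le_one

theorem wp_two (P : Quartile) : L.wp P 2 = fun x => L.coeff P x * P.wp 2 x :=
  funext fun x => by rw [wp, if_pos rfl]

theorem wp_of_ne_two (P : Quartile) {i : Fin 4} (hi : i ≠ 2) : L.wp P i = P.wp i :=
  funext fun x => by rw [wp, if_neg hi, one_mul]

theorem isBddIntegrable_wp (hr : 1 < r) (P : Quartile) (i : Fin 4) :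
    IsBddIntegrable volume (L.wp P i) := by
  have hP := P.isBddIntegrable_wp i
  rcases eq_or_ne i 2 with rfl | hi
  · rw [L.wp_two]
    refine hP.mono ((L.measurable_coeff P).aestronglyMeasurable.mul
      hP.integrable.aestronglyMeasurable) fun x => ?_
    rw [abs_mul]
    exact mul_le_of_le_one_left (abs_nonneg _) (L.abs_coeff_le_one hr P x)
  · rwa [L.wp_of_ne_two P hi]

end LinData

/-- Dualization: `∑ ⟨f, g j⟩²` is the integral of `f · ∑ ⟨f, g j⟩ g j`. -/
theorem sum_innerF_sq_le {ι : Type*} (s : Finset ι) {f G : ℝ → ℝ} {g : ι → ℝ → ℝ}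
    (hfg : ∀ j ∈ s, Integrable fun x => f x * g j x) (hG : Integrable G) (hG0 : ∀ x, 0 ≤ G x)
    (h : ∀ x, f x * ∑ j ∈ s, innerF f (g j) * g j x ≤ G x) :
    ∑ j ∈ s, innerF f (g j) ^ 2 ≤ ∫ x, G x := by
  have hint : ∀ j ∈ s, IntegrableOn (fun x => innerF f (g j) * (f x * g j x)) (Ici 0) :=
    fun j hj => ((hfg j hj).const_mul _).integrableOn
  calc ∑ j ∈ s, innerF f (g j) ^ 2
      = ∑ j ∈ s, ∫ x in Ici (0 : ℝ), innerF f (g j) * (f x * g j x) :=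
        Finset.sum_congr rfl fun j _ => by rw [integral_const_mul, sq, ← innerF]
    _ = ∫ x in Ici (0 : ℝ), ∑ j ∈ s, innerF f (g j) * (f x * g j x) :=
        (integral_finsetSum _ hint).symm
    _ ≤ ∫ x in Ici (0 : ℝ), G x :=
        integral_mono (integrable_finsetSum _ hint) hG.integrableOn fun x =>
          (h x).trans_eq' <| by
            rw [Finset.mul_sum]
            exact Finset.sum_congr rfl fun j _ => by ring
    _ ≤ ∫ x, G x := setIntegral_le_integral hG (Filter.Eventually.of_forall hG0)

theorem mul_le_indicator_inter_add {E A : Set ℝ} {f : ℝ → ℝ} {x y β γ : ℝ}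
    (hf : |f x| ≤ E.indicator (fun _ => (1 : ℝ)) x) (hβ : 0 ≤ β) (hγ : 0 ≤ γ)
    (hy : |y| ≤ β + γ) (hyA : x ∉ A → y = 0) :
    f x * y ≤ (E ∩ A).indicator (fun _ => β) x + γ := by
  by_cases hxE : x ∈ E
  · by_cases hxA : x ∈ A
    · rw [indicator_of_mem hxE] at hf
      rw [indicator_of_mem (mem_inter hxE hxA)]
      calc f x * y ≤ |f x| * |y| := (le_abs_self _).trans_eq (abs_mul _ _)
        _ ≤ 1 * (β + γ) := by gcongr
        _ = β + γ := one_mul _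
    · rw [hyA hxA, mul_zero]
      exact add_nonneg (indicator_nonneg (fun _ _ => hβ) x) hγ
  · rw [indicator_of_notMem hxE] at hf
    rw [abs_nonpos_iff.1 hf, zero_mul]
    exact add_nonneg (indicator_nonneg (fun _ _ => hβ) x) hγ

namespace IsForest

variable {r : ℝ} {i : Fin 4} {b : ℤ} {N n : ℕ} {𝒰 : Finset ToppedTree}

theorem exists_majorant_two (h : IsForest 2 b N 𝒰) (hr : 2 < r) (L : LinData r) (hN : N ≤ 2 ^ n)
    (c : Quartile → ℝ) :
    ∃ G : ℝ → ℝ, IsBddIntegrable volume G ∧ (∀ x, 0 ≤ G x) ∧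
      ∫ x, G x ≤ 1 / 2 * ∑ P ∈ 𝒰.biUnion ToppedTree.quartiles, c P ^ 2 ∧
      ∀ x, |∑ P ∈ 𝒰.biUnion ToppedTree.quartiles, c P * L.wp P 2 x|
        ≤ baseConst r (3 * n + 21) + G x := by
  set R := 𝒰.biUnion ToppedTree.quartiles
  set l : ℤ := -(3 * n : ℕ) with hl
  set s : ℕ := 3 * n + 21
  have hls : l + s = 21 := by simp only [l, s]; omega
  have hNl : (N : ℝ) ^ 3 * 2 ^ l ≤ 1 := by
    rw [hl, zpow_neg, zpow_natCast, ← div_eq_mul_inv, div_le_one (by positivity), mul_comm, pow_mul]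
    gcongr
    exact_mod_cast hN
  obtain ⟨m₁, hm₁⟩ := exists_forall_two_zpow_sub_le c R l
  obtain ⟨m₂, hm₂⟩ := exists_forall_squareSum_lt c R 21
  have hfine := isBddIntegrable_fineMajorant r 2 c R l m₁
  have hmiddle := isBddIntegrable_middleMajorant 2 c R l s
  have hcoarse := isBddIntegrable_coarseMajorant 2 c R m₂
  refine ⟨fun x => fineMajorant r 2 c R l m₁ x + middleMajorant 2 c R l s x
    + coarseMajorant 2 c R m₂ x, (hfine.add hmiddle).add hcoarse, fun x => ?_, ?_, fun x => ?_⟩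
  · exact add_nonneg (add_nonneg (fineMajorant_nonneg hr 2 c R l m₁ x)
      (middleMajorant_nonneg 2 c R l s x)) (coarseMajorant_nonneg 2 c R m₂ x)
  · rw [integral_add (hfine.add hmiddle).integrable hcoarse.integrable,
      integral_add hfine.integrable hmiddle.integrable]
    have hQ : 0 ≤ ∑ P ∈ R, c P ^ 2 := Finset.sum_nonneg fun _ _ => sq_nonneg _
    linarith [h.integral_fineMajorant_le (c := c) hr hNl m₁,
      integral_middleMajorant_le (c := c) h.disjoint_subtileSet l s,
      integral_coarseMajorant_le (c := c) h.disjoint_subtileSet m₂]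
  · simp only [L.wp_two]
    exact abs_sum_linCoeff_mul_wp_le hr (L.mono x) (L.abound x) hls hm₁ (hm₂ x)

theorem exists_majorant (h : IsForest i b N 𝒰) (hr : 2 < r) (L : LinData r) (hN : N ≤ 2 ^ n)
    (c : Quartile → ℝ) :
    ∃ G : ℝ → ℝ, IsBddIntegrable volume G ∧ (∀ x, 0 ≤ G x) ∧
      ∫ x, G x ≤ 1 / 2 * ∑ P ∈ 𝒰.biUnion ToppedTree.quartiles, c P ^ 2 ∧
      ∀ x, |∑ P ∈ 𝒰.biUnion ToppedTree.quartiles, c P * L.wp P i x|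
        ≤ baseConst r (3 * n + 21) + G x := by
  rcases eq_or_ne i 2 with rfl | hi
  · exact h.exists_majorant_two hr L hN c
  set R := 𝒰.biUnion ToppedTree.quartiles
  refine ⟨fun x => 1 / 2 * waveSum i c R x ^ 2,
    ((isBddIntegrable_waveSum i c R).pow two_ne_zero).const_mul _, fun x => by positivity, ?_,
    fun x => ?_⟩
  · rw [integral_const_mul, integral_waveSum_sq h.disjoint_subtileSet]
  · have hbase := one_le_baseConst hr (s := 3 * n + 21) (by omega)
    simp only [L.wp_of_ne_two _ hi]
    change |waveSum i c R x| ≤ _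
    nlinarith [sq_abs (waveSum i c R x), sq_nonneg (|waveSum i c R x| - 1)]

theorem sum_innerF_wp_sq_le (h : IsForest i b N 𝒰) (hr : 2 < r) (L : LinData r) (hN : N ≤ 2 ^ n)
    {E A : Set ℝ} {f : ℝ → ℝ} (hE : MeasurableSet E) (hEfin : volume E ≠ ∞) (hfm : Measurable f)
    (hf : ∀ x, |f x| ≤ E.indicator (fun _ => (1 : ℝ)) x) (hA : MeasurableSet A)
    (hTA : ∀ τ ∈ 𝒰, τ.top.toSet ⊆ A) :
    ∑ P ∈ 𝒰.biUnion ToppedTree.quartiles, innerF f (L.wp P i) ^ 2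
      ≤ 2 * baseConst r (3 * n + 21) * volume.real (E ∩ A) := by
  set R := 𝒰.biUnion ToppedTree.quartiles
  obtain ⟨G, hG, hG0, hGint, hGle⟩ := h.exists_majorant hr L hN fun P => innerF f (L.wp P i)
  have hEA := hE.inter hA
  have hind : Integrable ((E ∩ A).indicator fun _ => baseConst r (3 * n + 21)) :=
    (integrable_indicator_iff hEA).2
      (integrableOn_const (measure_ne_top_of_subset inter_subset_left hEfin))
  have hbase : 0 ≤ baseConst r (3 * n + 21) := by
    linarith [one_le_baseConst hr (s := 3 * n + 21) (by omega)]
  have hdual : ∑ P ∈ R, innerF f (L.wp P i) ^ 2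
      ≤ ∫ x, ((E ∩ A).indicator (fun _ => baseConst r (3 * n + 21)) x + G x) := by
    refine sum_innerF_sq_le R (fun P _ => ?_) (hind.add hG.integrable)
      (fun x => add_nonneg (indicator_nonneg (fun _ _ => hbase) x) (hG0 x)) fun x =>
      mul_le_indicator_inter_add (hf x) hbase (hG0 x) (hGle x) fun hxA => ?_
    · have hwp := (L.isBddIntegrable_wp (by linarith) P i).integrable
      refine hwp.mono (hfm.aestronglyMeasurable.mul hwp.aestronglyMeasurable)
        (Filter.Eventually.of_forall fun x => ?_)
      rw [norm_mul]
      exact mul_le_of_le_one_left (norm_nonneg _) ((hf x).trans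
        (indicator_le_self' (fun _ _ => zero_le_one) x))
    · refine Finset.sum_eq_zero fun P hP => ?_
      obtain ⟨τ, hτ, hPτ⟩ := Finset.mem_biUnion.1 hP
      obtain ⟨ξ, hξ⟩ := h.exists_isBelow τ hτ
      rw [LinData.wp, Quartile.wp_of_notMem fun hx => hxA (hTA τ hτ ((hξ P hPτ).1 hx)), mul_zero,
        mul_zero]
  rw [integral_add hind hG.integrable, integral_indicator_const _ hEA, smul_eq_mul] at hdual
  linarith

end IsForest

/-! ### Total length of the tops -/

theorem natLog_add_one_sq_le {η : ℝ} (hη : 0 < η) {N : ℕ} (hN : 1 ≤ N) :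
    (Nat.log 2 N + 1 : ℝ) ^ 2 ≤ (2 / (η * Real.log 2) + 1) ^ 2 * (N : ℝ) ^ η := by
  have := Real.log_pos one_lt_two
  have hNη : (1 : ℝ) ≤ (N : ℝ) ^ (η / 2) :=
    Real.one_le_rpow (Nat.one_le_cast.2 hN) (half_pos hη).le
  have hle : (Nat.log 2 N + 1 : ℝ) ≤ (2 / (η * Real.log 2) + 1) * (N : ℝ) ^ (η / 2) := calc
    (Nat.log 2 N + 1 : ℝ) ≤ Real.log N / Real.log 2 + 1 := by
      gcongr
      exact Real.natLog_le_logb N 2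
    _ ≤ (N : ℝ) ^ (η / 2) / (η / 2) / Real.log 2 + (N : ℝ) ^ (η / 2) := by
      gcongr
      exact Real.log_le_rpow_div N.cast_nonneg (half_pos hη)
    _ = (2 / (η * Real.log 2) + 1) * (N : ℝ) ^ (η / 2) := by field_simp
  calc (Nat.log 2 N + 1 : ℝ) ^ 2
      ≤ ((2 / (η * Real.log 2) + 1) * (N : ℝ) ^ (η / 2)) ^ 2 := by gcongr
    _ = (2 / (η * Real.log 2) + 1) ^ 2 * (N : ℝ) ^ η := by
      rw [mul_pow, ← Real.rpow_mul_natCast N.cast_nonneg, Nat.cast_two,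
        div_mul_cancel₀ η two_ne_zero]

theorem baseConst_le_mul_sq {r : ℝ} (hr : 2 < r) {s : ℕ} (hs : s ≠ 0) :
    baseConst r s ≤ baseConst r 1 * (s : ℝ) ^ 2 := by
  have hs1 : (1 : ℝ) ≤ (s : ℝ) ^ 2 :=
    one_le_pow₀ (Nat.one_le_cast.2 (Nat.one_le_iff_ne_zero.2 hs))
  have hfine : 0 ≤ 2 * fineWeight r * (1 - fineRate r)⁻¹ := by
    have := one_le_fineWeight hr
    have := inv_nonneg.2 (sub_nonneg.2 (fineRate_lt_one hr).le)
    positivity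
  simp only [baseConst]
  push_cast
  nlinarith

theorem exists_two_mul_baseConst_le {r η : ℝ} (hr : 2 < r) (hη : 0 < η) :
    ∃ C : ℝ, 0 < C ∧ ∀ N : ℕ, 1 ≤ N → ∃ n : ℕ, N ≤ 2 ^ n ∧
      2 * baseConst r (3 * n + 21) ≤ C * (N : ℝ) ^ η := by
  have hbase : 0 < baseConst r 1 := by linarith [one_le_baseConst hr one_ne_zero]
  have := Real.log_pos one_lt_two
  refine ⟨2 * baseConst r 1 * 24 ^ 2 * (2 / (η * Real.log 2) + 1) ^ 2, by positivity,
    fun N hN => ⟨Nat.log 2 N + 1, (Nat.lt_pow_succ_log_self one_lt_two N).le, ?_⟩⟩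
  calc 2 * baseConst r (3 * (Nat.log 2 N + 1) + 21)
      ≤ 2 * (baseConst r 1 * ((3 * (Nat.log 2 N + 1) + 21 : ℕ) : ℝ) ^ 2) := by
        gcongr
        exact baseConst_le_mul_sq hr (by omega)
    _ ≤ 2 * (baseConst r 1 * (24 * (Nat.log 2 N + 1)) ^ 2) := by
        gcongr
        exact_mod_cast (by omega : 3 * (Nat.log 2 N + 1) + 21 ≤ 24 * (Nat.log 2 N + 1))
    _ = 2 * baseConst r 1 * 24 ^ 2 * (Nat.log 2 N + 1 : ℝ) ^ 2 := by ring
    _ ≤ 2 * baseConst r 1 * 24 ^ 2 * ((2 / (η * Real.log 2) + 1) ^ 2 * (N : ℝ) ^ η) := by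
        gcongr
        exact natLog_add_one_sq_le hη hN
    _ = _ := by ring

theorem exists_nat_two_mul_mul_rpow_le {ε B : ℝ} (hε : 0 < ε) (hB : 1 ≤ B) :
    ∃ n : ℕ, 0 < n ∧ 2 * (B * (n : ℝ) ^ (ε / (1 + ε))) ≤ n ∧
      (n : ℝ) ≤ 2 * (2 * B) ^ (1 + ε) := by
  set X : ℝ := (2 * B) ^ (1 + ε) with hX
  have hX1 : 1 ≤ X := Real.one_le_rpow (by linarith) (by linarith)
  have hXn : X ≤ ⌈X⌉₊ := Nat.le_ceil X
  have hn : (0 : ℝ) < ⌈X⌉₊ := by linarith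
  refine ⟨⌈X⌉₊, Nat.cast_pos.1 hn, ?_, by linarith [Nat.ceil_lt_add_one (zero_le_one.trans hX1)]⟩
  calc 2 * (B * (⌈X⌉₊ : ℝ) ^ (ε / (1 + ε)))
      = X ^ (1 + ε)⁻¹ * (⌈X⌉₊ : ℝ) ^ (ε / (1 + ε)) := by
        rw [hX, Real.rpow_rpow_inv (by linarith) (by linarith), mul_assoc]
    _ ≤ (⌈X⌉₊ : ℝ) ^ (1 + ε)⁻¹ * (⌈X⌉₊ : ℝ) ^ (ε / (1 + ε)) := by gcongr
    _ = ⌈X⌉₊ := by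
        have hexp : (1 + ε)⁻¹ + ε / (1 + ε) = 1 := by field_simp
        rw [← Real.rpow_add hn, hexp, Real.rpow_one]

namespace DyadicInterval

variable {ι : Type*} (I : ι → DyadicInterval) {ε B : ℝ} {E : Set ℝ} {s : Finset ι}

theorem eq_empty_of_forall_len_le_mul (hB : B < 1)
    (h : ∀ τ ∈ s, (I τ).len ≤ B * volume.real (E ∩ (I τ).toSet)) : s = ∅ := by
  refine Finset.eq_empty_of_forall_notMem fun τ hτ => ?_
  have hle : volume.real (E ∩ (I τ).toSet) ≤ (I τ).len := by
    rw [← volume_real_toSet]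
    exact measureReal_mono inter_subset_right (by rw [volume_toSet]; exact ENNReal.ofReal_ne_top)
  have hpos : 0 < volume.real (E ∩ (I τ).toSet) :=
    (I τ).len_pos.trans_le ((h τ hτ).trans (mul_le_of_le_one_left measureReal_nonneg hB.le))
  exact ((h τ hτ).trans_lt (mul_lt_of_lt_one_left hpos hB)).not_ge hle

/-- A loss `N ^ η` for subfamilies of overlap `N`, with `η = ε / (1 + ε) < 1`, turns the constant
`B` into `B ^ (1 + ε)`, since one can afford `N` of size `B ^ (1 + ε)`. -/
theorem sum_len_le_of_forall_rpow (hε : 0 < ε) (hB : 0 < B)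
    (h : ∀ N : ℕ, 1 ≤ N → ∀ t ⊆ s, (∀ x, overlapCount I t x ≤ N) → ∀ A : Set ℝ, MeasurableSet A →
      (∀ τ ∈ t, (I τ).toSet ⊆ A) →
        ∑ τ ∈ t, (I τ).len ≤ B * (N : ℝ) ^ (ε / (1 + ε)) * volume.real (E ∩ A)) :
    ∑ τ ∈ s, (I τ).len ≤ 2 * (2 * B) ^ (1 + ε) * volume.real E := by
  obtain hB1 | hB1 := lt_or_ge B 1
  · have hempty : s = ∅ := eq_empty_of_forall_len_le_mul I (E := E) hB1 fun τ hτ => by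
      have hsingle : ∀ x, overlapCount I {τ} x ≤ 1 := fun x => by
        classical exact Finset.card_filter_le _ _
      simpa using h 1 le_rfl {τ} (Finset.singleton_subset_iff.2 hτ) hsingle _
        (I τ).measurableSet_toSet fun σ hσ => by rw [Finset.mem_singleton.1 hσ]
    rw [hempty, Finset.sum_empty]
    positivity
  · obtain ⟨n, hn, hMn, hnB⟩ := exists_nat_two_mul_mul_rpow_le hε hB1
    calc ∑ τ ∈ s, (I τ).len ≤ 2 * (B * (n : ℝ) ^ (ε / (1 + ε))) * volume.real (E ∩ univ) :=
          sum_len_le_of_forall_overlapCount_le I hn (by positivity) hMn E (h n hn)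
            MeasurableSet.univ fun _ _ => subset_univ _
      _ ≤ 2 * (2 * B) ^ (1 + ε) * volume.real E := by
          rw [inter_univ]
          exact mul_le_mul_of_nonneg_right (hMn.trans hnB) measureReal_nonneg

end DyadicInterval

namespace IsGreedySelection

variable {i j : Fin 4} {c : Quartile → ℝ} {δ : ℝ} {R : Finset Quartile} {b : ℤ}
  {𝒯 𝒰 : Finset ToppedTree} {N : ℕ}

theorem isForest (h : IsGreedySelection i j c δ R 𝒯) (hR : ∀ P ∈ R, P.I.k % 2 = b) (h𝒰 : 𝒰 ⊆ 𝒯)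
    (hN : ∀ x, overlapCount ToppedTree.top 𝒰 x ≤ N) : IsForest i b N 𝒰 where
  exists_isBelow τ hτ := ⟨lowestFreq j τ.quartiles, (h.heavy τ (h𝒰 hτ)).overlapping.1.2⟩
  k_mod_two τ hτ P hP := hR P (h.subset τ (h𝒰 hτ) hP)
  disjoint_subtileSet := h.disjoint_subtileSet.subset
    (Finset.coe_subset.2 (Finset.biUnion_subset_biUnion_of_subset_left _ h𝒰))
  disjoint_quartiles := h.disjoint_quartiles.subset (Finset.coe_subset.2 h𝒰)
  overlapCount_le := hN

theorem mul_sum_len_le (h : IsGreedySelection i j c δ R 𝒯) (h𝒰 : 𝒰 ⊆ 𝒯) :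
    δ * ∑ τ ∈ 𝒰, τ.top.len ≤ ∑ P ∈ 𝒰.biUnion ToppedTree.quartiles, c P ^ 2 := by
  rw [Finset.mul_sum, Finset.sum_biUnion (h.disjoint_quartiles.subset (Finset.coe_subset.2 h𝒰))]
  exact Finset.sum_le_sum fun τ hτ => (h.heavy τ (h𝒰 hτ)).lt_sum.le

end IsGreedySelection

theorem exists_sum_len_le_of_isGreedySelection {ε r : ℝ} (hε : 0 < ε) (hr : 2 < r) :
    ∃ C : ℝ, 0 < C ∧ ∀ (L : LinData r) (i j : Fin 4) (b : ℤ) (δ : ℝ) (R : Finset Quartile)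
      (E : Set ℝ) (f : ℝ → ℝ) (𝒯 : Finset ToppedTree), 0 < δ → (∀ P ∈ R, P.I.k % 2 = b) →
      MeasurableSet E → volume E ≠ ∞ → Measurable f →
      (∀ x, |f x| ≤ E.indicator (fun _ => (1 : ℝ)) x) →
      IsGreedySelection i j (fun P => innerF f (L.wp P i)) δ R 𝒯 →
      ∑ τ ∈ 𝒯, τ.top.len ≤ C * δ ^ (-(1 + ε)) * volume.real E := by
  obtain ⟨C₀, hC₀, hbase⟩ := exists_two_mul_baseConst_le hr (show 0 < ε / (1 + ε) by positivity)
  refine ⟨2 * (2 * C₀) ^ (1 + ε), by positivity,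
    fun L i j b δ R E f 𝒯 hδ hR hE hEfin hfm hf h => ?_⟩
  calc ∑ τ ∈ 𝒯, τ.top.len ≤ 2 * (2 * (C₀ / δ)) ^ (1 + ε) * volume.real E := by
        refine sum_len_le_of_forall_rpow ToppedTree.top hε (by positivity)
          fun N hN 𝒰 h𝒰 hcount A hA hTA => ?_
        obtain ⟨n, hNn, hn⟩ := hbase N hN
        rw [div_mul_eq_mul_div, div_mul_eq_mul_div, le_div_iff₀' hδ]
        calc δ * ∑ τ ∈ 𝒰, τ.top.len
            ≤ ∑ P ∈ 𝒰.biUnion ToppedTree.quartiles, innerF f (L.wp P i) ^ 2 := h.mul_sum_len_le h𝒰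
          _ ≤ 2 * baseConst r (3 * n + 21) * volume.real (E ∩ A) :=
            (h.isForest hR h𝒰 hcount).sum_innerF_wp_sq_le hr L hNn hE hEfin hfm hf hA hTA
          _ ≤ C₀ * (N : ℝ) ^ (ε / (1 + ε)) * volume.real (E ∩ A) := by gcongr
    _ = 2 * (2 * C₀) ^ (1 + ε) * δ ^ (-(1 + ε)) * volume.real E := by
        rw [← mul_div_assoc, Real.div_rpow (by positivity) hδ.le, Real.rpow_neg hδ.le]
        ring

/-! ### Exhaustion by maximal trees -/

open Classical in
/-- The maximal tree in `R` with the top interval of `τ` and its canonical `j`-overlapping top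
frequency. -/
noncomputable def ToppedTree.maximalTree (τ : ToppedTree) (j : Fin 4) (R : Finset Quartile) :
    Finset Quartile × ℝ × DyadicInterval :=
  (R.filter fun P => P.IsBelow (lowestFreq j τ.quartiles) τ.top, lowestFreq j τ.quartiles, τ.top)

/-- A family of trees in `R` after whose removal no `j`-overlapping tree has coefficients with
square sum above `δ |I_T|`. -/
structure IsExhaustion (j : Fin 4) (c : Quartile → ℝ) (δ : ℝ) (R : Finset Quartile)
    (Ts : Finset (Finset Quartile × ℝ × DyadicInterval)) : Prop where
  isTree : ∀ τ ∈ Ts, IsTree τ.1 τ.2.1 τ.2.2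
  subset : ∀ τ ∈ Ts, τ.1 ⊆ R
  sum_le : ∀ T ⊆ R, ∀ ξ J, IsOverlapping j T ξ J → (∀ P ∈ T, ∀ τ ∈ Ts, P ∉ τ.1) →
    ∑ P ∈ T, c P ^ 2 ≤ δ * J.len

open Classical in
theorem IsGreedySelection.isExhaustion {i j : Fin 4} {c : Quartile → ℝ} {δ : ℝ}
    {R : Finset Quartile} {𝒯 : Finset ToppedTree} (h : IsGreedySelection i j c δ R 𝒯) :
    IsExhaustion j c δ R (𝒯.image fun τ => τ.maximalTree j R) where
  isTree := Finset.forall_mem_image.2 fun τ hτ =>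
    ⟨(h.heavy τ hτ).overlapping.1.1, fun _ hP => (Finset.mem_filter.1 hP).2⟩
  subset := Finset.forall_mem_image.2 fun _ _ => Finset.filter_subset _ _
  sum_le T hT ξ J hov hav := h.sum_le T hT ξ J hov fun P hP _ hτ hbelow =>
    hav P hP _ (Finset.mem_image_of_mem _ hτ) (Finset.mem_filter.2 ⟨hT hP, hbelow⟩)

theorem exists_isExhaustion_sum_len_le {ε r : ℝ} (hε : 0 < ε) (hr : 2 < r) :
    ∃ C : ℝ, 0 < C ∧ ∀ (L : LinData r) (i j : Fin 4) (b : ℤ) (δ : ℝ) (R : Finset Quartile)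
      (E : Set ℝ) (f : ℝ → ℝ), j ≠ i → 0 < δ → (∀ P ∈ R, P.I.k % 2 = b) →
      MeasurableSet E → volume E ≠ ∞ → Measurable f →
      (∀ x, |f x| ≤ E.indicator (fun _ => (1 : ℝ)) x) →
      ∃ Ts, IsExhaustion j (fun P => innerF f (L.wp P i)) δ R Ts ∧
        ∑ τ ∈ Ts, τ.2.2.len ≤ C * δ ^ (-(1 + ε)) * volume.real E := by
  classical
  obtain ⟨C, hC, hsum⟩ := exists_sum_len_le_of_isGreedySelection hε hr
  refine ⟨C, hC, fun L i j b δ R E f hij hδ hR hE hEfin hfm hf => ?_⟩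
  obtain ⟨𝒯, h𝒯⟩ := exists_isGreedySelection hij hδ (fun P => innerF f (L.wp P i)) hR
  exact ⟨_, h𝒯.isExhaustion, (Finset.sum_image_le_of_nonneg fun _ _ => (len_pos _).le).trans
    (hsum L i j b δ R E f 𝒯 hδ hR hE hEfin hfm hf h𝒯)⟩

/-! ### The size lemma -/

theorem treeSize_sq_le {r β : ℝ} (L : LinData r) (i : Fin 4) (S : Set Quartile) (f : ℝ → ℝ)
    (h : ∀ T ξ J, IsLacunary i T ξ J → (T : Set Quartile) ⊆ S →
      ∑ P ∈ T, innerF f (L.wp P i) ^ 2 ≤ β * J.len) :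
    treeSize L i S f ^ (2 : ℕ) ≤ ENNReal.ofReal β := by
  have hle : treeSize L i S f ≤ ENNReal.ofReal β ^ ((1 : ℝ) / 2) := by
    refine iSup_le fun T => iSup_le fun ξ => iSup_le fun J => iSup_le fun hl => iSup_le fun hs => ?_
    gcongr
    rw [inv_mul_le_iff₀ J.len_pos, mul_comm]
    exact h T ξ J hl hs
  calc treeSize L i S f ^ (2 : ℕ) ≤ (ENNReal.ofReal β ^ ((1 : ℝ) / 2)) ^ (2 : ℕ) := by gcongr
    _ = ENNReal.ofReal β := by rw [← ENNReal.rpow_mul_natCast]; norm_num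

theorem IsOverlapping.subset {j : Fin 4} {T S : Finset Quartile} {ξ : ℝ} {J : DyadicInterval}
    (h : IsOverlapping j T ξ J) (hS : S ⊆ T) : IsOverlapping j S ξ J :=
  ⟨⟨h.1.1, fun P hP => h.1.2 P (hS hP)⟩, fun P hP => h.2 P (hS hP)⟩

theorem treeSize_sq_le_of_isExhaustion {r δ : ℝ} (L : LinData r) (i : Fin 4) (Ps : Finset Quartile)
    (f : ℝ → ℝ) (Ts : Finset (Finset Quartile × ℝ × DyadicInterval))
    (h : ∀ j ≠ i, ∀ b ∈ ({0, 1} : Finset ℤ), ∃ Us ⊆ Ts,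
      IsExhaustion j (fun P => innerF f (L.wp P i)) δ (Ps.filter fun P => P.I.k % 2 = b) Us) :
    treeSize L i ((Ps : Set Quartile) \ ⋃ τ ∈ Ts, (τ.1 : Set Quartile)) f ^ (2 : ℕ)
      ≤ ENNReal.ofReal (2 * δ) := by
  refine treeSize_sq_le L i _ f fun T ξ J hT hTs => ?_
  obtain ⟨j, hj, hov⟩ := hT
  have hparity : ∀ b ∈ ({0, 1} : Finset ℤ),
      ∑ P ∈ T.filter (fun P => P.I.k % 2 = b), innerF f (L.wp P i) ^ 2 ≤ δ * J.len := by
    intro b hb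
    obtain ⟨Us, hUs, hex⟩ := h j hj b hb
    refine hex.sum_le _ (Finset.filter_subset_filter _ fun P hP => (hTs hP).1) ξ J
      (hov.subset (Finset.filter_subset _ _)) fun P hP τ hτ hPτ => ?_
    exact (hTs (Finset.mem_filter.1 hP).1).2 (mem_biUnion (hUs hτ) hPτ)
  calc ∑ P ∈ T, innerF f (L.wp P i) ^ 2
      = ∑ b ∈ ({0, 1} : Finset ℤ), ∑ P ∈ T.filter (fun P => P.I.k % 2 = b),
          innerF f (L.wp P i) ^ 2 :=
        (Finset.sum_fiberwise_of_maps_to (fun P _ => by simpa using Int.emod_two_eq P.I.k) _).symm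
    _ ≤ ∑ _b ∈ ({0, 1} : Finset ℤ), δ * J.len := Finset.sum_le_sum hparity
    _ = 2 * δ * J.len := by simp [mul_assoc]

theorem sum_biUnion_le_card_mul {ι κ : Type*} [DecidableEq κ] (s : Finset ι) (t : ι → Finset κ)
    {g : κ → ℝ} (hg : ∀ k, 0 ≤ g k) {M : ℝ} (hM : ∀ q ∈ s, ∑ k ∈ t q, g k ≤ M) :
    ∑ k ∈ s.biUnion t, g k ≤ s.card * M := by
  have himage : s.biUnion t = (s.sigma t).image Sigma.snd := by ext k; simp
  calc ∑ k ∈ s.biUnion t, g k ≤ ∑ p ∈ s.sigma t, g p.2 := by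
        rw [himage]
        exact Finset.sum_image_le_of_nonneg fun k _ => hg k
    _ = ∑ q ∈ s, ∑ k ∈ t q, g k := Finset.sum_sigma _ _ _
    _ ≤ s.card * M := by
        rw [← nsmul_eq_mul]
        exact Finset.sum_le_card_nsmul _ _ _ hM

/-- Every lacunary tree is `j`-overlapping for one of three values of `j` and splits into two trees
by the parity of the scales, which makes six exhaustions. -/
theorem exists_isExhaustion_of_ne {ε r : ℝ} (hε : 0 < ε) (hr : 2 < r) :
    ∃ C : ℝ, 0 < C ∧ ∀ (L : LinData r) (i : Fin 4) (δ : ℝ) (Ps : Finset Quartile)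
      (E : Set ℝ) (f : ℝ → ℝ), 0 < δ → MeasurableSet E → volume E ≠ ∞ → Measurable f →
      (∀ x, |f x| ≤ E.indicator (fun _ => (1 : ℝ)) x) →
      ∃ Ts : Finset (Finset Quartile × ℝ × DyadicInterval),
        (∀ τ ∈ Ts, IsTree τ.1 τ.2.1 τ.2.2 ∧ τ.1 ⊆ Ps) ∧
        (∀ j ≠ i, ∀ b ∈ ({0, 1} : Finset ℤ), ∃ Us ⊆ Ts, IsExhaustion j
          (fun P => innerF f (L.wp P i)) δ (Ps.filter fun P => P.I.k % 2 = b) Us) ∧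
        ∑ τ ∈ Ts, τ.2.2.len ≤ C * δ ^ (-(1 + ε)) * volume.real E := by
  classical
  obtain ⟨C, hC, hex⟩ := exists_isExhaustion_sum_len_le hε hr
  refine ⟨6 * C, by positivity, fun L i δ Ps E f hδ hE hEfin hfm hf => ?_⟩
  have hrun := fun (j : Fin 4) (hj : j ≠ i) (b : ℤ) => hex L i j b δ
    (Ps.filter fun P => P.I.k % 2 = b) E f hj hδ (fun P hP => (Finset.mem_filter.1 hP).2)
    hE hEfin hfm hf
  choose! Us hUs hlen using hrun
  set pairs := (Finset.univ.erase i) ×ˢ ({0, 1} : Finset ℤ) with hpairs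
  have hne : ∀ q ∈ pairs, q.1 ≠ i := fun q hq => Finset.ne_of_mem_erase (Finset.mem_product.1 hq).1
  refine ⟨pairs.biUnion fun q => Us q.1 q.2, fun τ hτ => ?_, fun j hj b hb => ?_, ?_⟩
  · obtain ⟨q, hq, hτq⟩ := Finset.mem_biUnion.1 hτ
    have hexh := hUs q.1 (hne q hq) q.2
    exact ⟨hexh.isTree τ hτq, (hexh.subset τ hτq).trans (Finset.filter_subset _ _)⟩
  · exact ⟨Us j b, Finset.subset_biUnion_of_mem (fun q => Us q.1 q.2)
      (Finset.mk_mem_product (Finset.mem_erase.2 ⟨hj, Finset.mem_univ j⟩) hb), hUs j hj b⟩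
  · have hcard : pairs.card = 6 := by simp [hpairs, Finset.card_product]
    refine (sum_biUnion_le_card_mul pairs (fun q => Us q.1 q.2) (fun τ => τ.2.2.len_pos.le)
      fun q hq => hlen q.1 (hne q hq) q.2).trans_eq ?_
    rw [hcard]
    push_cast
    ring

theorem variation_norm_size_lemma_general (ε r : ℝ) (hε : 0 < ε) (hr : 2 < r) :
    ∃ C : ℝ, 0 < C ∧ ∀ (L : LinData r) (i : Fin 4) (Ps : Finset Quartile)
      (E : Set ℝ) (f : ℝ → ℝ), MeasurableSet E → volume E ≠ ⊤ → Measurable f →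
      (∀ x, |f x| ≤ E.indicator (fun _ => (1 : ℝ)) x) → ∀ α : ℝ, 0 < α →
      ∃ Ts : Finset (Finset Quartile × ℝ × DyadicInterval),
        (∀ τ ∈ Ts, IsTree τ.1 τ.2.1 τ.2.2 ∧ (τ.1 : Set Quartile) ⊆ (Ps : Set Quartile)) ∧
        treeSize L i ((Ps : Set Quartile) \ ⋃ τ ∈ Ts, (τ.1 : Set Quartile)) f ^ (2 : ℕ)
          ≤ ENNReal.ofReal (α / 4) ∧
        ∑ τ ∈ Ts, τ.2.2.len ≤ C * α ^ (-(1 + ε)) * (volume E).toReal := by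
  obtain ⟨C, hC, hex⟩ := exists_isExhaustion_of_ne hε hr
  refine ⟨C * (1 / 8) ^ (-(1 + ε)), by positivity, fun L i Ps E f hE hEfin hfm hf α hα => ?_⟩
  obtain ⟨Ts, htree, hexh, hlen⟩ := hex L i (1 / 8 * α) Ps E f (by positivity) hE hEfin hfm hf
  have hsize := treeSize_sq_le_of_isExhaustion L i Ps f Ts hexh
  rw [show 2 * (1 / 8 * α) = α / 4 by ring] at hsize
  rw [Real.mul_rpow (by norm_num) hα.le, ← mul_assoc] at hlen
  exact ⟨Ts, fun τ hτ => ⟨(htree τ hτ).1, Finset.coe_subset.2 (htree τ hτ).2⟩, hsize, hlen⟩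

/-- **Proposition 5.1 (variation-norm size lemma).** For `ε > 0`, `r > 2` there is `C` such
that for any linearization data, any `i`, any finite collection of quartiles `Ps`, any set `E`
of finite measure, any `f` with `|f| ≤ 1_E`, and any `α > 0` with `size_i(Ps, f)² ≤ α`,
there is a collection `Ts` of trees in `Ps` with `size_i(Ps \ ⋃_{T ∈ Ts} T, f)² ≤ α/4` and
`∑_{T ∈ Ts} |I_T| ≤ C α^{-(1+ε)} |E|`. -/
theorem variation_norm_size_lemma (ε r : ℝ) (hε : 0 < ε) (hr : 2 < r) :
    ∃ C : ℝ, 0 < C ∧ ∀ (L : LinData r) (i : Fin 4) (Ps : Finset Quartile)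
      (E : Set ℝ) (f : ℝ → ℝ), MeasurableSet E → volume E ≠ ⊤ → Measurable f →
      (∀ x, |f x| ≤ E.indicator (fun _ => (1 : ℝ)) x) →
      ∀ α : ℝ, 0 < α → treeSize L i ↑Ps f ^ (2 : ℕ) ≤ ENNReal.ofReal α →
      ∃ Ts : Finset (Finset Quartile × ℝ × DyadicInterval),
        (∀ τ ∈ Ts, IsTree τ.1 τ.2.1 τ.2.2 ∧ (τ.1 : Set Quartile) ⊆ (Ps : Set Quartile)) ∧
        treeSize L i ((Ps : Set Quartile) \ ⋃ τ ∈ Ts, (τ.1 : Set Quartile)) f ^ (2 : ℕ)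
          ≤ ENNReal.ofReal (α / 4) ∧
        ∑ τ ∈ Ts, τ.2.2.len ≤ C * α ^ (-(1 + ε)) * (volume E).toReal := by
  obtain ⟨C, hC, h⟩ := variation_norm_size_lemma_general ε r hε hr
  exact ⟨C, hC, fun L i Ps E f hE hEfin hfm hf α hα _ => h L i Ps E f hE hEfin hfm hf α hα⟩
end

section
/- (Long-jump/short-jump decomposition.) There is an absolute constant C such that for every r ≥ 2, every function g : ℤ → ℝ, and every strictly increasing sequence of integers (k_j)_{j∈ℤ}: ‖g(k)‖_{V^r_k} ≤ C ( ‖g(k_j)‖_{V^r_j} + (∑_{j∈ℤ} ‖g‖²_{V^r_{k_j ≤ k < k_{j+1}}})^{1/2} ), where ‖g(k_j)‖_{V^r_j} is the variation seminorm of the sequence j ↦ g(k_j), and ‖g‖_{V^r_{a ≤ k < b}} denotes the variation seminorm of g restricted to the integers {a, a+1, …, b−1} (interpreted as 0 when b = a+1). -/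
open MeasureTheory Set
open scoped ENNReal

/-!
Let `J n` be the index of the block `[k_j, k_{j+1})` containing `n`, and split `g = g ∘ k ∘ J + h`.
The first summand is a monotone reparametrization of `g ∘ k`, so its variation is at most that of
`g ∘ k`. The remainder `h` has the variation of `g` on each block and vanishes at every `k_j`. Cut
each jump of `h` from `t_i` to `t_{i+1}` at the point `max (k_{J(t_{i+1})}) t_i` where it enters its
final block. The second pieces falling into one block are jumps of the sequence clamped to that
block, and the first pieces are nonzero only for the last `t_i` in a block, where they run from
`h(t_i)` to `0 = h(k_{J(t_i)})`. Minkowski's inequality therefore gives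
`‖h‖_{V^r} ≤ 2 (∑_j ‖g‖_{V^r_{k_j ≤ k < k_{j+1}}}^r)^{1/r}`, and `ℓ² ⊆ ℓ^r`.
-/

section Order

variable {α β : Type*}

lemma exists_galoisConnection_of_not_bdd [LinearOrder α] [SuccOrder α] [IsSuccArchimedean α]
    [LinearOrder β] {k : α → β} (hk : Monotone k) (habove : ¬ BddAbove (Set.range k))
    (hbelow : ¬ BddBelow (Set.range k)) : ∃ J : β → α, GaloisConnection k J := by
  have hgreatest : ∀ n, ∃ j, IsGreatest {j | k j ≤ n} j := fun n => by
    obtain ⟨_, ⟨a, rfl⟩, ha⟩ := not_bddBelow_iff.1 hbelow n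
    obtain ⟨_, ⟨b, rfl⟩, hb⟩ := not_bddAbove_iff.1 habove n
    exact BddAbove.exists_isGreatest_of_nonempty
      ⟨b, fun j hj => (hk.reflect_lt (hj.trans_lt hb)).le⟩ ⟨a, ha.le⟩
  choose J hJ using hgreatest
  exact ⟨J, fun j n => ⟨fun hj => (hJ n).2 hj, fun hj => (hk hj).trans (hJ n).1⟩⟩

lemma mem_Ico_iff_of_galoisConnection [LinearOrder α] {k : ℤ → α} {J : α → ℤ}
    (hkJ : GaloisConnection k J) {n : α} {j : ℤ} : n ∈ Ico (k j) (k (j + 1)) ↔ J n = j := by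
  rw [mem_Ico, hkJ.le_iff_le, hkJ.lt_iff_lt]
  lia

lemma exists_monotone_mem_Ico_eq_max {a b : ℤ} (hab : a < b) :
    ∃ φ : ℤ → ℤ, Monotone φ ∧ (∀ n, φ n ∈ Ico a b) ∧ ∀ n < b, φ n = max a n :=
  ⟨fun n => max a (min n (b - 1)), fun _ _ hmn => max_le_max_left a (min_le_min_right _ hmn),
    fun n => mem_Ico.2 (by lia), fun n hn => by lia⟩

lemma injOn_setOf_lt_succ_of_monotone [Preorder α] {q : ℕ → α} (hq : Monotone q) :
    InjOn q {i | q i < q (i + 1)} :=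
  StrictMonoOn.injOn fun _ hi _ _ hij => hi.trans_le (hq (Nat.succ_le_of_lt hij))

lemma exists_strictMono_sum_range_eq {M : Type*} [PartialOrder α] [NoMaxOrder α]
    [AddCommMonoid M] {d : α → α → M} (hd : ∀ a, d a a = 0) {u : ℕ → α} (hu : Monotone u) (N : ℕ) :
    ∃ (w : ℕ → α) (n : ℕ), StrictMono w ∧ w 0 = u 0 ∧ MapsTo w (Iic n) (u '' Iic N) ∧
      ∑ i ∈ Finset.range n, d (w i) (w (i + 1)) = ∑ i ∈ Finset.range N, d (u i) (u (i + 1)) := by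
  induction N generalizing u with
  | zero =>
    obtain ⟨w, hw, hw0⟩ := Nat.exists_strictMono' (u 0)
    exact ⟨w, 0, hw, hw0, by simp [MapsTo, hw0], rfl⟩
  | succ N ih =>
    obtain ⟨w, n, hw, hw0, hmem, hsum⟩ := ih (hu.comp (monotone_id.add_const 1))
    replace hmem : MapsTo w (Iic n) (u '' Iic (N + 1)) := fun i hi => by
      obtain ⟨j, hj, hji⟩ := hmem hi
      exact ⟨j + 1, Nat.succ_le_succ hj, hji⟩
    simp only [Function.comp_apply, id_eq, zero_add] at hw0 hsum
    rw [Finset.sum_range_succ', ← hsum, zero_add]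
    rcases (hu zero_le_one).eq_or_lt with h01 | h01
    · exact ⟨w, n, hw, hw0.trans h01.symm, hmem, by rw [← h01, hd, add_zero]⟩
    · let w' : ℕ → α := fun | 0 => u 0 | i + 1 => w i
      refine ⟨w', n + 1, strictMono_nat_of_lt_succ ?_, rfl, ?_, ?_⟩
      · rintro (_ | i)
        exacts [h01.trans_eq hw0.symm, hw (Nat.lt_succ_self i)]
      · rintro (_ | i) hi
        exacts [⟨0, Nat.zero_le _, rfl⟩, hmem (Nat.le_of_succ_le_succ hi)]
      · rw [Finset.sum_range_succ', ← hw0]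

end Order

lemma tsum_rpow_rpow_one_div_anti {ι : Type*} {p r : ℝ} (hp : 0 < p) (hpr : p ≤ r)
    (v : ι → ℝ≥0∞) : (∑' i, v i ^ r) ^ (1 / r) ≤ (∑' i, v i ^ p) ^ (1 / p) := by
  set B := (∑' i, v i ^ p) ^ (1 / p) with hB
  have hBp : B ^ p = ∑' i, v i ^ p := by
    rw [hB, one_div, ENNReal.rpow_inv_rpow hp.ne']
  have hv : ∀ i, v i ≤ B := fun i => by
    rw [← ENNReal.rpow_le_rpow_iff hp, hBp]
    exact ENNReal.le_tsum i
  have hsplit : ∀ x : ℝ≥0∞, x ^ r = x ^ p * x ^ (r - p) := fun x => by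
    rw [← ENNReal.rpow_add_of_nonneg _ _ hp.le (sub_nonneg.2 hpr), add_sub_cancel]
  rw [one_div, ENNReal.rpow_inv_le_iff (hp.trans_le hpr)]
  calc ∑' i, v i ^ r
      ≤ ∑' i, v i ^ p * B ^ (r - p) := ENNReal.tsum_le_tsum fun i => by
        rw [hsplit]
        gcongr
        exact hv i
    _ = B ^ r := by rw [ENNReal.tsum_mul_right, ← hBp, ← hsplit]

section JumpNorm

variable {E : Type*} [SeminormedAddCommGroup E] {r : ℝ}

/-- The `ℓ^r` norm of the first `N` jumps of the sequence `x`; the `r`-variation of `g` is the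
supremum of `jumpNorm r (g ∘ t) N` over increasing `t`. -/
noncomputable def jumpNorm (r : ℝ) (x : ℕ → E) (N : ℕ) : ℝ≥0∞ :=
  (∑ i ∈ Finset.range N, ‖x (i + 1) - x i‖ₑ ^ r) ^ (1 / r)

lemma jumpNorm_rpow (hr : r ≠ 0) (x : ℕ → E) (N : ℕ) :
    jumpNorm r x N ^ r = ∑ i ∈ Finset.range N, ‖x (i + 1) - x i‖ₑ ^ r := by
  rw [jumpNorm, one_div, ENNReal.rpow_inv_rpow hr]

lemma jumpNorm_le_of_enorm_sub_le_add (hr : 1 ≤ r) {x : ℕ → E} {a b : ℕ → ℝ≥0∞}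
    (h : ∀ i, ‖x (i + 1) - x i‖ₑ ≤ a i + b i) (N : ℕ) :
    jumpNorm r x N ≤ (∑ i ∈ Finset.range N, a i ^ r) ^ (1 / r) +
      (∑ i ∈ Finset.range N, b i ^ r) ^ (1 / r) := by
  refine le_trans ?_ (ENNReal.Lp_add_le _ a b hr)
  unfold jumpNorm
  gcongr with i
  exact h i

end JumpNorm

section VarNorm

variable {r : ℝ} {S T : Set ℤ} {g h : ℤ → ℝ}

lemma varNorm_eq_iSup_jumpNorm (hr : 0 ≤ r) (S : Set ℤ) (g : ℤ → ℝ) :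
    varNorm r S g = ⨆ (N : ℕ) (t : ℕ → ℤ) (_ : StrictMono t) (_ : ∀ i ≤ N, t i ∈ S),
      jumpNorm r (g ∘ t) N := by
  simp only [varNorm, jumpNorm, Function.comp_apply, Real.enorm_eq_ofReal_abs,
    ENNReal.ofReal_rpow_of_nonneg (abs_nonneg _) hr]

lemma varNorm_le_iff (hr : 0 ≤ r) {C : ℝ≥0∞} :
    varNorm r S g ≤ C ↔
      ∀ N t, StrictMono t → (∀ i ≤ N, t i ∈ S) → jumpNorm r (g ∘ t) N ≤ C := by
  simp only [varNorm_eq_iSup_jumpNorm hr, iSup_le_iff]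

lemma jumpNorm_comp_le_varNorm (hr : 0 < r) {t : ℕ → ℤ} (ht : Monotone t) {N : ℕ}
    (hS : ∀ i ≤ N, t i ∈ S) : jumpNorm r (g ∘ t) N ≤ varNorm r S g := by
  obtain ⟨w, n, hw, -, hmem, hsum⟩ := exists_strictMono_sum_range_eq
    (d := fun a b => ‖g b - g a‖ₑ ^ r) (fun a => by simp [hr]) ht N
  have hwS : ∀ i ≤ n, w i ∈ S := fun i hi => by
    obtain ⟨j, hj, hji⟩ := hmem hi
    exact hji ▸ hS j hj
  calc jumpNorm r (g ∘ t) N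
      = jumpNorm r (g ∘ w) n := congrArg (· ^ (1 / r)) hsum.symm
    _ ≤ varNorm r S g := (varNorm_le_iff hr.le).1 le_rfl n w hw hwS

lemma enorm_sub_le_varNorm (hr : 0 < r) {a b : ℤ} (ha : a ∈ S) (hb : b ∈ S) (hab : a ≤ b) :
    ‖g b - g a‖ₑ ≤ varNorm r S g := by
  have ht : Monotone fun i : ℕ => if i = 0 then a else b :=
    monotone_nat_of_le_succ fun i => by cases i <;> simp [hab]
  have hjump := jumpNorm_comp_le_varNorm (g := g) hr ht (N := 1) (S := S)
    fun i _ => by cases i <;> simp [ha, hb]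
  rwa [← ENNReal.rpow_le_rpow_iff hr, jumpNorm_rpow hr.ne', Finset.sum_range_one,
    ENNReal.rpow_le_rpow_iff hr] at hjump

lemma varNorm_comp_le_of_monotone (hr : 0 < r) {φ : ℤ → ℤ} (hφ : Monotone φ)
    (hST : MapsTo φ S T) : varNorm r S (g ∘ φ) ≤ varNorm r T g :=
  (varNorm_le_iff hr.le).2 fun _ _ ht htS =>
    jumpNorm_comp_le_varNorm hr (hφ.comp ht.monotone) fun i hi => hST (htS i hi)

lemma varNorm_mono_of_enorm_sub_le (hr : 0 ≤ r)
    (hgh : ∀ a ∈ S, ∀ b ∈ S, ‖g b - g a‖ₑ ≤ ‖h b - h a‖ₑ) : varNorm r S g ≤ varNorm r S h := by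
  refine (varNorm_le_iff hr).2 fun N t ht htS =>
    le_trans ?_ ((varNorm_le_iff hr).1 le_rfl N t ht htS)
  unfold jumpNorm
  gcongr with i hi
  have := Finset.mem_range.1 hi
  exact hgh _ (htS i (by lia)) _ (htS (i + 1) (by lia))

lemma varNorm_add_le (hr : 1 ≤ r) (S : Set ℤ) (g h : ℤ → ℝ) :
    varNorm r S (g + h) ≤ varNorm r S g + varNorm r S h := by
  have hr0 : 0 ≤ r := zero_le_one.trans hr
  refine (varNorm_le_iff hr0).2 fun N t ht htS => ?_
  calc jumpNorm r ((g + h) ∘ t) N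
      ≤ jumpNorm r (g ∘ t) N + jumpNorm r (h ∘ t) N :=
        jumpNorm_le_of_enorm_sub_le_add hr (fun i => by
          simpa only [Function.comp_apply, Pi.add_apply, add_sub_add_comm] using
            enorm_add_le (g (t (i + 1)) - g (t i)) (h (t (i + 1)) - h (t i))) N
    _ ≤ varNorm r S g + varNorm r S h :=
        add_le_add ((varNorm_le_iff hr0).1 le_rfl N t ht htS)
          ((varNorm_le_iff hr0).1 le_rfl N t ht htS)

end VarNorm

section Blocks

variable {p r : ℝ} {g h : ℤ → ℝ} {k J : ℤ → ℤ} {t : ℕ → ℤ}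

/-- The short variation of `g` along `k`: the `ℓ^p` norm of the `r`-variations of `g` on the blocks
`[k_j, k_{j+1})`. -/
noncomputable def shortVariation (p r : ℝ) (k : ℤ → ℤ) (g : ℤ → ℝ) : ℝ≥0∞ :=
  (∑' j, varNorm r (Ico (k j) (k (j + 1))) g ^ p) ^ (1 / p)

lemma sum_entering_jumps_Ico_le (hr : 0 < r) (g : ℤ → ℝ) (ht : Monotone t) (N : ℕ) (a b : ℤ) :
    ∑ i ∈ Finset.range N with t (i + 1) ∈ Ico a b, ‖g (t (i + 1)) - g (max a (t i))‖ₑ ^ r ≤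
      varNorm r (Ico a b) g ^ r := by
  rcases le_or_gt b a with hba | hab
  · simp [Ico_eq_empty_of_le hba]
  obtain ⟨φ, hφ, hmem, hmax⟩ := exists_monotone_mem_Ico_eq_max hab
  calc ∑ i ∈ Finset.range N with t (i + 1) ∈ Ico a b, ‖g (t (i + 1)) - g (max a (t i))‖ₑ ^ r
      = ∑ i ∈ Finset.range N with t (i + 1) ∈ Ico a b, ‖g (φ (t (i + 1))) - g (φ (t i))‖ₑ ^ r :=
        Finset.sum_congr rfl fun i hi => by
          obtain ⟨hai, hib⟩ := (Finset.mem_filter.1 hi).2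
          rw [hmax _ hib, max_eq_right hai, hmax _ ((ht (Nat.le_succ i)).trans_lt hib)]
    _ ≤ ∑ i ∈ Finset.range N, ‖g (φ (t (i + 1))) - g (φ (t i))‖ₑ ^ r :=
        Finset.sum_le_sum_of_subset (Finset.filter_subset _ _)
    _ = jumpNorm r (g ∘ φ ∘ t) N ^ r := (jumpNorm_rpow hr.ne' (g ∘ φ ∘ t) N).symm
    _ ≤ varNorm r (Ico a b) g ^ r := by
        gcongr
        exact jumpNorm_comp_le_varNorm hr (hφ.comp ht) fun i _ => hmem (t i)

lemma sum_entering_jumps_le (hr : 0 < r) (hkJ : GaloisConnection k J) (g : ℤ → ℝ)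
    (ht : Monotone t) (N : ℕ) :
    ∑ i ∈ Finset.range N, ‖g (t (i + 1)) - g (max (k (J (t (i + 1)))) (t i))‖ₑ ^ r ≤
      ∑' j, varNorm r (Ico (k j) (k (j + 1))) g ^ r := by
  rw [← Finset.sum_fiberwise_of_maps_to (g := fun i => J (t (i + 1)))
    fun _ => Finset.mem_image_of_mem fun i => J (t (i + 1))]
  refine (Finset.sum_le_sum fun j _ => ?_).trans (ENNReal.sum_le_tsum _)
  refine le_trans (le_of_eq ?_) (sum_entering_jumps_Ico_le hr g ht N (k j) (k (j + 1)))
  simp only [mem_Ico_iff_of_galoisConnection hkJ]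
  exact Finset.sum_congr rfl fun i hi => by rw [(Finset.mem_filter.1 hi).2]

lemma sum_exiting_jumps_le (hr : 0 < r) (hkJ : GaloisConnection k J) (hh : ∀ j, h (k j) = 0)
    (ht : Monotone t) (N : ℕ) :
    ∑ i ∈ Finset.range N, ‖h (max (k (J (t (i + 1)))) (t i)) - h (t i)‖ₑ ^ r ≤
      ∑' j, varNorm r (Ico (k j) (k (j + 1))) h ^ r := by
  have hq : Monotone fun i => J (t i) := hkJ.monotone_u.comp ht
  let F := {i ∈ Finset.range N | J (t i) < J (t (i + 1))}
  have hstay : ∀ i ∈ Finset.range N, i ∉ F →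
      ‖h (max (k (J (t (i + 1)))) (t i)) - h (t i)‖ₑ ^ r = 0 := fun i hi hiF => by
    have hle : k (J (t (i + 1))) ≤ t i :=
      (hkJ _ _).2 (not_lt.1 fun hlt => hiF (Finset.mem_filter.2 ⟨hi, hlt⟩))
    simp [max_eq_right hle, hr]
  have hexit : ∀ i ∈ F, ‖h (max (k (J (t (i + 1)))) (t i)) - h (t i)‖ₑ ≤
      varNorm r (Ico (k (J (t i))) (k (J (t i) + 1))) h := fun i hi => by
    have hlt : t i < k (J (t (i + 1))) := hkJ.lt_iff_lt.2 (Finset.mem_filter.1 hi).2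
    have hmem : t i ∈ Ico (k (J (t i))) (k (J (t i) + 1)) :=
      (mem_Ico_iff_of_galoisConnection hkJ).2 rfl
    rw [max_eq_left hlt.le, hh, ← hh (J (t i)), enorm_sub_rev]
    exact enorm_sub_le_varNorm hr ⟨le_rfl, hmem.1.trans_lt hmem.2⟩ hmem hmem.1
  have hinj : InjOn (fun i => J (t i)) F :=
    (injOn_setOf_lt_succ_of_monotone hq).mono fun i hi => (Finset.mem_filter.1 hi).2
  rw [← Finset.sum_subset (Finset.filter_subset _ _) hstay]
  calc ∑ i ∈ F, ‖h (max (k (J (t (i + 1)))) (t i)) - h (t i)‖ₑ ^ r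
      ≤ ∑ i ∈ F, varNorm r (Ico (k (J (t i))) (k (J (t i) + 1))) h ^ r :=
        Finset.sum_le_sum fun i hi => ENNReal.rpow_le_rpow (hexit i hi) hr.le
    _ = ∑ j ∈ F.image fun i => J (t i), varNorm r (Ico (k j) (k (j + 1))) h ^ r :=
        (Finset.sum_image (f := fun j => varNorm r (Ico (k j) (k (j + 1))) h ^ r) hinj).symm
    _ ≤ _ := ENNReal.sum_le_tsum _

lemma varNorm_le_two_mul_shortVariation (hr : 1 ≤ r) (hkJ : GaloisConnection k J)
    (hh : ∀ j, h (k j) = 0) : varNorm r univ h ≤ 2 * shortVariation r r k h := by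
  have hr0 : 0 < r := zero_lt_one.trans_le hr
  refine (varNorm_le_iff hr0.le).2 fun N t ht _ => ?_
  rw [two_mul]
  refine (jumpNorm_le_of_enorm_sub_le_add hr (fun i => ?_) N).trans (add_le_add
    (ENNReal.rpow_le_rpow (sum_entering_jumps_le hr0 hkJ h ht.monotone N) (by positivity))
    (ENNReal.rpow_le_rpow (sum_exiting_jumps_le hr0 hkJ hh ht.monotone N) (by positivity)))
  rw [Function.comp_apply, Function.comp_apply, ← sub_add_sub_cancel]
  exact enorm_add_le _ _

lemma shortVariation_sub_comp_le (hp : 0 ≤ p) (hr : 0 ≤ r) (hkJ : GaloisConnection k J)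
    (g f : ℤ → ℝ) : shortVariation p r k (g - f ∘ J) ≤ shortVariation p r k g := by
  unfold shortVariation
  gcongr with j
  refine varNorm_mono_of_enorm_sub_le hr fun a ha b hb => le_of_eq ?_
  rw [mem_Ico_iff_of_galoisConnection hkJ] at ha hb
  simp [ha, hb]

lemma shortVariation_anti_exponent {q : ℝ} (hp : 0 < p) (hpq : p ≤ q) (r : ℝ) (k : ℤ → ℤ)
    (g : ℤ → ℝ) : shortVariation q r k g ≤ shortVariation p r k g :=
  tsum_rpow_rpow_one_div_anti hp hpq _

theorem long_short_jump_decomposition_general (hp : 0 < p) (hpr : p ≤ r) (hr : 1 ≤ r) (g : ℤ → ℝ)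
    (hk : Monotone k) (habove : ¬ BddAbove (Set.range k)) (hbelow : ¬ BddBelow (Set.range k)) :
    varNorm r univ g ≤ varNorm r univ (g ∘ k) + 2 * shortVariation p r k g := by
  have hr0 : 0 < r := hp.trans_le hpr
  obtain ⟨J, hkJ⟩ := exists_galoisConnection_of_not_bdd hk habove hbelow
  let h : ℤ → ℝ := g - (g ∘ k) ∘ J
  have hh : ∀ j, h (k j) = 0 := fun j => by simp [h, hkJ.l_u_l_eq_l j]
  have hlong : varNorm r univ ((g ∘ k) ∘ J) ≤ varNorm r univ (g ∘ k) :=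
    varNorm_comp_le_of_monotone hr0 hkJ.monotone_u (mapsTo_univ _ _)
  have hshort : shortVariation r r k h ≤ shortVariation p r k g :=
    (shortVariation_anti_exponent hp hpr r k h).trans
      (shortVariation_sub_comp_le hp.le hr0.le hkJ g (g ∘ k))
  calc varNorm r univ g
      = varNorm r univ ((g ∘ k) ∘ J + h) := by rw [add_sub_cancel]
    _ ≤ varNorm r univ ((g ∘ k) ∘ J) + varNorm r univ h := varNorm_add_le hr _ _ _
    _ ≤ varNorm r univ ((g ∘ k) ∘ J) + 2 * shortVariation r r k h := by
        gcongr
        exact varNorm_le_two_mul_shortVariation hr hkJ hh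
    _ ≤ varNorm r univ (g ∘ k) + 2 * shortVariation p r k g := by gcongr

end Blocks

/-- **Equation (5.8) (long-jump/short-jump decomposition).** There is an absolute constant `C`
such that for every `r ≥ 2`, every `g : ℤ → ℝ`, and every strictly increasing sequence
`(k_j)_{j∈ℤ}`:
`‖g(k)‖_{V^r_k} ≤ C (‖g(k_j)‖_{V^r_j} + (∑_j ‖g‖²_{V^r_{k_j ≤ k < k_{j+1}}})^{1/2})`. -/
theorem long_short_jump_decomposition :
    ∃ C : ℝ≥0∞, C ≠ ⊤ ∧ ∀ (r : ℝ), 2 ≤ r → ∀ (g : ℤ → ℝ) (k : ℤ → ℤ), StrictMono k →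
      varNorm r Set.univ g ≤
        C * (varNorm r Set.univ (fun j => g (k j)) +
          (∑' j : ℤ, varNorm r (Set.Ico (k j) (k (j + 1))) g ^ (2 : ℝ)) ^ ((1 : ℝ) / 2)) := by
  refine ⟨2, by norm_num, fun r hr g k hk => (long_short_jump_decomposition_general two_pos hr
    (one_le_two.trans hr) g hk.monotone hk.not_bddAbove_range_of_isSuccArchimedean
    hk.not_bddBelow_range_of_isPredArchimedean).trans ?_⟩
  rw [mul_add]
  exact add_le_add_left (le_mul_of_one_le_left zero_le one_le_two) _
end
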